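/- arXiv:2006.08930 — 6 statements merged into one kernel-verified Lean document; each statement's English description precedes it below -/
import Mathlib

section
/- For every z ∈ 𝔻 with |z| = r ≤ 2/(3 + |a_0| + √5·(1 + |a_0|)), the following inequality holds: |f(z)| + ∑_{n=1}^∞ |a_n| r^n + (1/(1+|a_0|) + r/(1-r)) · ∑_{n=1}^∞ |a_n|² r^{2n} ≤ 1. -/
open Complex in
lemma aux_coef_bound (c : ℕ → ℂ) (hc : Summable fun n => ‖c n‖) (g : ℝ → ℝ)
    (hg : IntervalIntegrable g MeasureTheory.volume 0 (2 * Real.pi)) (h : ℝ → ℂ)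
    (hs : ∀ θ : ℝ, HasSum (fun n => c n * circleMap 0 1 θ ^ n) (h θ))
    (hh : ∀ θ, ‖h θ‖ ≤ g θ) (N : ℕ) :
    ‖c N‖ ≤ (2 * Real.pi)⁻¹ * ∫ θ in (0 : ℝ)..(2 * Real.pi), g θ := by
  have hpi := Real.two_pi_pos
  have key : HasSum (fun n => ∫ θ in (0 : ℝ)..(2 * Real.pi),
      c n * circleMap 0 1 θ ^ n * exp (-(N * θ * I)))
      (∫ θ in (0 : ℝ)..(2 * Real.pi), h θ * exp (-(N * θ * I))) := by
    apply intervalIntegral.hasSum_integral_of_dominated_convergence (fun n _ => ‖c n‖)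
    · intro n
      apply Continuous.aestronglyMeasurable
      fun_prop
    · intro n
      refine Filter.Eventually.of_forall fun t _ => ?_
      have : ‖exp (-(N * t * I))‖ = 1 := by
        rw [Complex.norm_exp]; simp
      simp [this, norm_pow]
    · exact Filter.Eventually.of_forall fun t _ => hc
    · simp
    · exact Filter.Eventually.of_forall fun t _ => (hs t).mul_right _
  have hval : ∀ n, (∫ θ in (0 : ℝ)..(2 * Real.pi),
      c n * circleMap 0 1 θ ^ n * exp (-(N * θ * I))) = if n = N then 2 * Real.pi * c N else 0 := by
    intro n
    have e : ∀ θ : ℝ, c n * circleMap 0 1 θ ^ n * exp (-(N * θ * I))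
        = c n * exp ((((n : ℂ) - N) * I) * θ) := by
      intro θ
      rw [mul_assoc]
      congr 1
      simp only [circleMap, ofReal_one, one_mul, zero_add]
      rw [← Complex.exp_nat_mul, ← Complex.exp_add]
      congr 1
      ring
    simp_rw [e]
    rw [intervalIntegral.integral_const_mul]
    split_ifs with hn
    · subst hn; simp; ring
    · have h0 : ((n : ℂ) - N) * I ≠ 0 :=
        mul_ne_zero (sub_ne_zero.mpr (by exact_mod_cast hn)) I_ne_zero
      rw [integral_exp_mul_complex h0]
      have : exp (((n : ℂ) - N) * I * ((2 * Real.pi : ℝ) : ℂ)) = 1 := by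
        rw [Complex.exp_eq_one_iff]
        exact ⟨(n : ℤ) - N, by push_cast; ring⟩
      rw [this]; simp
  simp_rw [hval] at key
  have e2 := key.unique (hasSum_ite_eq N (2 * Real.pi * c N))
  have b : ‖∫ θ in (0 : ℝ)..(2 * Real.pi), h θ * exp (-(N * θ * I))‖
      ≤ ∫ θ in (0 : ℝ)..(2 * Real.pi), g θ := by
    apply intervalIntegral.norm_integral_le_of_norm_le hpi.le _ hg
    refine Filter.Eventually.of_forall fun t _ => ?_
    have : ‖exp (-(N * t * I))‖ = 1 := by
      rw [Complex.norm_exp]; simp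
    simpa [this, norm_mul] using hh t
  rw [e2] at b
  simp only [norm_mul, Complex.norm_ofNat, norm_real, Real.norm_eq_abs, abs_of_pos Real.pi_pos] at b
  rw [inv_mul_eq_div, le_div_iff₀ hpi]
  linarith

/-- The key coefficient inequality `|[z^N] (f p²)| ≤ ‖p‖₂²`. -/
lemma aux_key (f : ℂ → ℂ) (a : ℕ → ℂ)
    (hb : ∀ z ∈ Metric.ball (0 : ℂ) 1, ‖f z‖ ≤ 1)
    (hs : ∀ z ∈ Metric.ball (0 : ℂ) 1, HasSum (fun n => a n * z ^ n) (f z))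
    (p : Polynomial ℂ) (N : ℕ) :
    ‖∑ k ∈ Finset.range (N + 1), a k * (p ^ 2).coeff (N - k)‖
      ≤ ∑ i ∈ p.support, ‖p.coeff i‖ ^ 2 := by
  have main : ∀ ρ ∈ Set.Ioo (0 : ℝ) 1,
      ‖∑ k ∈ Finset.range (N + 1), a k * (ρ : ℂ) ^ k * (p ^ 2).coeff (N - k)‖
        ≤ ∑ i ∈ p.support, ‖p.coeff i‖ ^ 2 := by
    rintro ρ ⟨h0, h1⟩
    have hA : ∀ θ : ℝ, HasSum (fun n => a n * (ρ : ℂ) ^ n * circleMap 0 1 θ ^ n)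
        (f (ρ * circleMap 0 1 θ)) := by
      intro θ
      have := hs (ρ * circleMap 0 1 θ) (by simp [abs_of_pos h0, h1])
      simpa [mul_pow, mul_assoc] using this
    have hAn : Summable fun n => ‖a n * (ρ : ℂ) ^ n‖ := by
      simpa using (hA 0).summable.norm
    have hq : Summable fun n => ‖(p ^ 2).coeff n‖ := by
      apply summable_of_hasFiniteSupport
      refine (Finset.finite_toSet (p ^ 2).support).subset ?_
      intro n hn
      simpa using hn
    have hqs : ∀ z : ℂ, HasSum (fun n => (p ^ 2).coeff n * z ^ n) ((p.eval z) ^ 2) := by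
      intro z
      have := hasSum_sum_of_ne_finset_zero (f := fun n => (p ^ 2).coeff n * z ^ n)
        (s := (p ^ 2).support) (L := SummationFilter.unconditional ℕ) (by intro b hb; simp [Polynomial.notMem_support_iff.mp hb])
      rw [← Polynomial.eval_pow, Polynomial.eval_eq_sum, Polynomial.sum]
      exact this
    rw [Polynomial.sum_sq_norm_coeff_eq_circleAverage, Real.circleAverage, smul_eq_mul]
    apply aux_coef_bound
      (fun N => ∑ k ∈ Finset.range (N + 1), a k * (ρ : ℂ) ^ k * (p ^ 2).coeff (N - k))
      (summable_norm_sum_mul_range_of_summable_norm hAn hq)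
      (fun θ => ‖p.eval (circleMap 0 1 θ)‖ ^ 2) _
      (fun θ => f (ρ * circleMap 0 1 θ) * p.eval (circleMap 0 1 θ) ^ 2)
    · intro θ
      have h1 := hasSum_sum_range_mul_of_summable_norm (hA θ).summable.norm
        (hqs (circleMap 0 1 θ)).summable.norm
      rw [(hA θ).tsum_eq, (hqs _).tsum_eq] at h1
      suffices hfun : (fun n => (∑ k ∈ Finset.range (n + 1),
          a k * (ρ : ℂ) ^ k * (p ^ 2).coeff (n - k)) * circleMap 0 1 θ ^ n) = _ by
        rw [hfun]; exact h1
      funext n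
      rw [Finset.sum_mul]
      refine Finset.sum_congr rfl fun k hk => ?_
      have : n = k + (n - k) := by have := Finset.mem_range.mp hk; omega
      conv_lhs => rw [this, pow_add]
      simp only [Nat.add_sub_cancel_left]
      ring
    · intro θ
      rw [norm_mul, norm_pow]
      have := hb (ρ * circleMap 0 1 θ) (by simp [abs_of_pos h0, h1])
      exact mul_le_of_le_one_left (by positivity) this
    · apply Continuous.intervalIntegrable
      fun_prop
  have hcont : Continuous fun ρ : ℝ =>
      ‖∑ k ∈ Finset.range (N + 1), a k * (ρ : ℂ) ^ k * (p ^ 2).coeff (N - k)‖ := by fun_prop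
  have ht : Filter.Tendsto (fun ρ : ℝ =>
      ‖∑ k ∈ Finset.range (N + 1), a k * (ρ : ℂ) ^ k * (p ^ 2).coeff (N - k)‖)
      (nhdsWithin 1 (Set.Iio 1)) (nhds _) := (hcont.tendsto 1).mono_left nhdsWithin_le_nhds
  have := le_of_tendsto ht (Filter.mem_of_superset (Ioo_mem_nhdsLT (zero_lt_one)) main)
  simpa using this

open Polynomial in
/-- The key inequality for `p = 1 + X^m t`. -/
lemma aux_form (f : ℂ → ℂ) (a : ℕ → ℂ)
    (hb : ∀ z ∈ Metric.ball (0 : ℂ) 1, ‖f z‖ ≤ 1)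
    (hs : ∀ z ∈ Metric.ball (0 : ℂ) 1, HasSum (fun n => a n * z ^ n) (f z))
    (m n : ℕ) (hm : 1 ≤ m) (hmn : n ≤ m) (τ : ℕ → ℂ) :
    ‖a (m + n) + 2 * ∑ k ∈ Finset.range (n + 1), a k * τ (n - k)
      + (if m = n then a 0 * τ 0 ^ 2 else 0)‖
      ≤ 1 + ∑ k ∈ Finset.range (n + 1), ‖τ k‖ ^ 2 := by
  set t : ℂ[X] := ∑ k ∈ Finset.range (n + 1), monomial k (τ k) with ht
  have htc : ∀ j, t.coeff j = if j < n + 1 then τ j else 0 := by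
    intro j
    simp [ht, Polynomial.coeff_monomial]
  have hp := aux_key f a hb hs (1 + X ^ m * t) (m + n)
  have hsq : ((1 : ℂ[X]) + X ^ m * t) ^ 2 = 1 + C 2 * (X ^ m * t) + X ^ (2 * m) * t ^ 2 := by
    have : (C 2 : ℂ[X]) = 2 := rfl
    rw [this]; ring
  have hc : ∀ j, (((1 : ℂ[X]) + X ^ m * t) ^ 2).coeff j = (if j = 0 then 1 else 0)
      + 2 * (if m ≤ j then t.coeff (j - m) else 0)
      + (if 2 * m ≤ j then (t ^ 2).coeff (j - 2 * m) else 0) := by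
    intro j
    rw [hsq, coeff_add, coeff_add, coeff_C_mul, coeff_X_pow_mul', coeff_X_pow_mul', coeff_one]
  have hL : ∑ k ∈ Finset.range (m + n + 1), a k * (((1 : ℂ[X]) + X ^ m * t) ^ 2).coeff (m + n - k)
      = a (m + n) + 2 * ∑ k ∈ Finset.range (n + 1), a k * τ (n - k)
      + (if m = n then a 0 * τ 0 ^ 2 else 0) := by
    simp_rw [hc, mul_add, Finset.sum_add_distrib]
    congr 1
    · congr 1
      · rw [Finset.sum_eq_single (m + n)]
        · simp
        · intro k hk hk'
          have := Finset.mem_range.mp hk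
          rw [if_neg (by omega), mul_zero]
        · simp
      · rw [Finset.mul_sum]
        symm
        apply Finset.sum_subset_zero_on_sdiff
        · intro k; simp only [Finset.mem_range]; omega
        · intro k hk
          simp only [Finset.mem_sdiff, Finset.mem_range] at hk
          rw [if_neg (by omega)]; simp
        · intro k hk
          simp only [Finset.mem_range] at hk
          rw [if_pos (by omega), htc, if_pos (by omega)]
          have : m + n - k - m = n - k := by omega
          rw [this]; ring
    · rw [Finset.sum_eq_single 0]
      · by_cases h : m = n
        · rw [if_pos h, if_pos (by omega)]
          have : m + n - 0 - 2 * m = 0 := by omega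
          rw [this, sq t, mul_coeff_zero, htc]
          simp [sq]
        · rw [if_neg h, if_neg (by omega), mul_zero]
      · intro k hk hk'
        rw [if_neg (by omega), mul_zero]
      · simp
  rw [hL] at hp
  refine hp.trans ?_
  have hpc : ∀ j, ((1 : ℂ[X]) + X ^ m * t).coeff j = (if j = 0 then 1 else 0)
      + (if m ≤ j then t.coeff (j - m) else 0) := by
    intro j
    rw [coeff_add, coeff_X_pow_mul', coeff_one]
  have hsub : ((1 : ℂ[X]) + X ^ m * t).support ⊆ Finset.range (m + (n + 1)) := by
    intro j hj
    rw [mem_support_iff, hpc] at hj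
    by_contra hcon
    rw [Finset.mem_range] at hcon
    apply hj
    rw [if_neg (by omega), htc, if_neg (show ¬ (j - m < n + 1) by omega)]
    simp
  refine (Finset.sum_le_sum_of_subset_of_nonneg hsub (fun _ _ _ => by positivity)).trans ?_
  rw [Finset.sum_range_add]
  apply le_of_eq
  congr 1
  · rw [Finset.sum_eq_single 0]
    · rw [hpc, if_pos rfl, if_neg (by omega)]; simp
    · intro k hk hk'
      have := Finset.mem_range.mp hk
      rw [hpc, if_neg hk', if_neg (by omega)]; simp
    · intro h; exact absurd (Finset.mem_range.mpr hm) h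
  · refine Finset.sum_congr rfl fun k hk => ?_
    have := Finset.mem_range.mp hk
    rw [hpc, if_neg (by omega), if_pos (by omega), htc, if_pos (by omega)]
    simp

lemma aux_rot (w : ℂ) : ∃ c : ℂ, ‖c‖ = 1 ∧ c * w = ‖w‖ := by
  by_cases h : w = 0
  · exact ⟨1, by simp, by simp [h]⟩
  · have h' : (‖w‖ : ℂ) ≠ 0 := by simpa using h
    refine ⟨‖w‖ / w, by simp [h], by field_simp⟩

/-- Carlson's inequality, odd case. -/
lemma aux_odd (f : ℂ → ℂ) (a : ℕ → ℂ)
    (hb : ∀ z ∈ Metric.ball (0 : ℂ) 1, ‖f z‖ ≤ 1)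
    (hs : ∀ z ∈ Metric.ball (0 : ℂ) 1, HasSum (fun n => a n * z ^ n) (f z)) (n : ℕ) :
    ‖a (2 * n + 1)‖ ≤ 1 - ∑ k ∈ Finset.range (n + 1), ‖a k‖ ^ 2 := by
  obtain ⟨c, hc, hca⟩ := aux_rot (a (2 * n + 1))
  have h := aux_form (fun z => c * f z) (fun k => c * a k)
    (fun z hz => by simpa [hc] using hb z hz)
    (fun z hz => by simpa [mul_assoc] using (hs z hz).mul_left c)
    (n + 1) n (by omega) (by omega) (fun k => (starRingEnd ℂ) (c * a (n - k)))
  have e : n + 1 + n = 2 * n + 1 := by ring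
  rw [if_neg (by omega), e, hca, add_zero] at h
  have e1 : ∑ k ∈ Finset.range (n + 1), c * a k * (starRingEnd ℂ) (c * a (n - (n - k)))
      = ((∑ k ∈ Finset.range (n + 1), ‖a k‖ ^ 2 : ℝ) : ℂ) := by
    push_cast
    refine Finset.sum_congr rfl fun k hk => ?_
    have := Finset.mem_range.mp hk
    rw [Nat.sub_sub_self (by omega), Complex.mul_conj']
    simp [hc]
  have e2 : ∑ k ∈ Finset.range (n + 1), ‖(starRingEnd ℂ) (c * a (n - k))‖ ^ 2
      = ∑ k ∈ Finset.range (n + 1), ‖a k‖ ^ 2 := by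
    rw [← Finset.sum_range_reflect]
    refine Finset.sum_congr rfl fun k hk => ?_
    have := Finset.mem_range.mp hk
    have e3 : n - (n + 1 - 1 - k) = k := by omega
    rw [e3]; simp [hc]
  rw [e1, e2] at h
  have h2 := (Complex.re_le_norm _).trans h
  simp only [Complex.add_re, Complex.ofReal_re, Complex.mul_re, Complex.re_ofNat, Complex.im_ofNat,
    Complex.ofReal_im] at h2
  linarith

/-- Carlson's inequality, even case. -/
lemma aux_even (f : ℂ → ℂ) (a : ℕ → ℂ)
    (hb : ∀ z ∈ Metric.ball (0 : ℂ) 1, ‖f z‖ ≤ 1)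
    (hs : ∀ z ∈ Metric.ball (0 : ℂ) 1, HasSum (fun n => a n * z ^ n) (f z)) (n : ℕ) :
    ‖a (2 * n + 2)‖ ≤ 1 - ∑ k ∈ Finset.range (n + 1), ‖a k‖ ^ 2
      - ‖a (n + 1)‖ ^ 2 / (1 + ‖a 0‖) := by
  obtain ⟨c, hc, hca⟩ := aux_rot (a (2 * n + 2))
  set s : ℝ := 1 / (1 + ‖a 0‖) with hs'
  have h := aux_form (fun z => c * f z) (fun k => c * a k)
    (fun z hz => by simpa [hc] using hb z hz)
    (fun z hz => by simpa [mul_assoc] using (hs z hz).mul_left c)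
    (n + 1) (n + 1) (by omega) (by omega)
    (fun k => (if k = 0 then (s : ℂ) else 1) * (starRingEnd ℂ) (c * a (n + 1 - k)))
  have e : n + 1 + (n + 1) = 2 * n + 2 := by ring
  rw [if_pos rfl, e, hca] at h
  have e1 : ∑ k ∈ Finset.range (n + 1 + 1), c * a k *
      ((if n + 1 - k = 0 then (s : ℂ) else 1) * (starRingEnd ℂ) (c * a (n + 1 - (n + 1 - k))))
      = ((∑ k ∈ Finset.range (n + 1), ‖a k‖ ^ 2 + s * ‖a (n + 1)‖ ^ 2 : ℝ) : ℂ) := by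
    rw [Finset.sum_range_succ, Complex.ofReal_add, Complex.ofReal_sum, Complex.ofReal_mul,
      Complex.ofReal_pow]
    simp only [Complex.ofReal_pow]
    congr 1
    · refine Finset.sum_congr rfl fun k hk => ?_
      have := Finset.mem_range.mp hk
      rw [Nat.sub_sub_self (by omega), if_neg (by omega), one_mul, Complex.mul_conj']
      simp [hc]
    · rw [Nat.sub_self, if_pos rfl, Nat.sub_zero, mul_left_comm, Complex.mul_conj']
      simp [hc]
  have e2 : ∑ k ∈ Finset.range (n + 1 + 1),
      ‖(if k = 0 then (s : ℂ) else 1) * (starRingEnd ℂ) (c * a (n + 1 - k))‖ ^ 2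
      = ∑ k ∈ Finset.range (n + 1), ‖a k‖ ^ 2 + s ^ 2 * ‖a (n + 1)‖ ^ 2 := by
    rw [← Finset.sum_range_reflect, Finset.sum_range_succ]
    congr 1
    · refine Finset.sum_congr rfl fun k hk => ?_
      have := Finset.mem_range.mp hk
      have e3 : n + 1 - (n + 1 + 1 - 1 - k) = k := by omega
      rw [e3, if_neg (by omega)]; simp [hc]
    · simp [hc, mul_pow]
  rw [e1, e2] at h
  have h2 := (Complex.re_le_norm _).trans h
  rw [Complex.add_re, Complex.add_re, Complex.mul_re, Complex.ofReal_re, Complex.ofReal_re,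
    Complex.ofReal_im, Complex.re_ofNat, mul_zero, sub_zero] at h2
  have h3 := (abs_le.mp (Complex.abs_re_le_norm (c * a 0 * ((if 0 = 0 then (s : ℂ) else 1) *
    (starRingEnd ℂ) (c * a (n + 1 - 0))) ^ 2))).1
  have h4 : ‖c * a 0 * ((if 0 = 0 then (s : ℂ) else 1) *
    (starRingEnd ℂ) (c * a (n + 1 - 0))) ^ 2‖ = ‖a 0‖ * (s ^ 2 * ‖a (n + 1)‖ ^ 2) := by
    simp [hc, mul_pow]
  rw [h4] at h3
  have h5 : s * (1 + ‖a 0‖) = 1 := by rw [hs']; field_simp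
  have h6 : ‖a (n + 1)‖ ^ 2 / (1 + ‖a 0‖) = s * ‖a (n + 1)‖ ^ 2 := by rw [hs']; ring
  have h7 : s ^ 2 * ‖a (n + 1)‖ ^ 2 + ‖a 0‖ * (s ^ 2 * ‖a (n + 1)‖ ^ 2)
      = s * ‖a (n + 1)‖ ^ 2 := by
    linear_combination (s * ‖a (n + 1)‖ ^ 2) * h5
  rw [h6]
  linarith

/-- Refined Bohr inequality. -/
lemma aux_bohr (b : ℕ → ℝ) (r : ℝ) (hr0 : 0 ≤ r) (hr1 : r < 1) (hb : ∀ n, 0 ≤ b n)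
    (hsum : Summable fun n => b n * r ^ n)
    (hodd : ∀ n, b (2 * n + 1) ≤ 1 - ∑ k ∈ Finset.range (n + 1), b k ^ 2)
    (heven : ∀ n, b (2 * n + 2) ≤ 1 - ∑ k ∈ Finset.range (n + 1), b k ^ 2
      - b (n + 1) ^ 2 / (1 + b 0)) :
    (∑' n : ℕ, b (n + 1) * r ^ (n + 1))
      + (1 / (1 + b 0) + r / (1 - r)) * ∑' n : ℕ, b (n + 1) ^ 2 * r ^ (2 * (n + 1))
      ≤ (1 - b 0 ^ 2) * (r / (1 - r)) := by
  have h1r : 0 < 1 - r := by linarith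
  have hle1 : ∀ n, b n ≤ 1 := by
    intro n
    have h := hodd n
    have h' := Finset.single_le_sum (f := fun k => b k ^ 2) (s := Finset.range (n + 1))
      (fun _ _ => by positivity) (Finset.self_mem_range_succ n)
    have h'' := hb (2 * n + 1)
    nlinarith [hb n]
  have hS1 : Summable fun n => b (n + 1) * r ^ (n + 1) := (summable_nat_add_iff 1).2 hsum
  have hS2 : Summable fun n => b (n + 1) ^ 2 * r ^ (2 * (n + 1)) := by
    refine Summable.of_nonneg_of_le (fun n => by positivity) (fun n => ?_) hS1
    have h1 : b (n + 1) ^ 2 ≤ b (n + 1) := by nlinarith [hb (n + 1), hle1 (n + 1)]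
    have h2 : r ^ (2 * (n + 1)) ≤ r ^ (n + 1) :=
      pow_le_pow_of_le_one hr0 hr1.le (by omega)
    exact mul_le_mul h1 h2 (by positivity) (hb _)
  have ind : ∀ K : ℕ, ∑ n ∈ Finset.range (2 * K), b (n + 1) * r ^ (n + 1)
      + (1 / (1 + b 0) + r / (1 - r)) * ∑ n ∈ Finset.range K, b (n + 1) ^ 2 * r ^ (2 * (n + 1))
      ≤ (1 - b 0 ^ 2) * (r / (1 - r))
        - r ^ (2 * K) * (r / (1 - r)) * (1 - ∑ k ∈ Finset.range (K + 1), b k ^ 2) := by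
    intro K
    induction K with
    | zero => simp [mul_comm]
    | succ K ih =>
      have e : 2 * (K + 1) = 2 * K + 1 + 1 := by ring
      have ho := mul_le_mul_of_nonneg_right (hodd K) (pow_nonneg hr0 (2 * K + 1))
      have he := mul_le_mul_of_nonneg_right (heven K) (pow_nonneg hr0 (2 * K + 2))
      rw [Finset.sum_range_succ _ (K + 1), Finset.sum_range_succ _ K, e,
        Finset.sum_range_succ _ (2 * K + 1), Finset.sum_range_succ _ (2 * K)]
      generalize ∑ k ∈ Finset.range (K + 1), b k ^ 2 = E at *
      have hq : r / (1 - r) = r + r * (r / (1 - r)) := by field_simp; ring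
      generalize r / (1 - r) = q at *
      generalize ∑ n ∈ Finset.range (2 * K), b (n + 1) * r ^ (n + 1) = S at *
      generalize ∑ n ∈ Finset.range K, b (n + 1) ^ 2 * r ^ (2 * (n + 1)) = S' at *
      have hinv : b (K + 1) ^ 2 / (1 + b 0) = b (K + 1) ^ 2 * (1 / (1 + b 0)) := by ring
      rw [hinv] at he
      generalize 1 / (1 + b 0) = u at *
      have e3 : r ^ (2 * K) * q * (1 - E)
        = r ^ (2 * K) * (r + r ^ 2 + r ^ 2 * q) * (1 - E) := by
        linear_combination (r ^ (2 * K) * (1 - E)) * (1 + r) * hq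
      rw [e3] at ih
      ring_nf at ih ho he ⊢
      linarith
  have t1 := hS1.hasSum.tendsto_sum_nat.comp
    (Filter.tendsto_id.const_mul_atTop' (show 0 < 2 by norm_num))
  have t2 := (hS2.hasSum.tendsto_sum_nat).const_mul (1 / (1 + b 0) + r / (1 - r))
  refine le_of_tendsto' (t1.add t2) fun K => ?_
  refine (ind K).trans ?_
  have h1 : 0 ≤ 1 - ∑ k ∈ Finset.range (K + 1), b k ^ 2 := (hb _).trans (hodd K)
  have h2 : 0 ≤ r / (1 - r) := by positivity
  have : 0 ≤ r ^ (2 * K) * (r / (1 - r)) * (1 - ∑ k ∈ Finset.range (K + 1), b k ^ 2) := by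
    positivity
  linarith

/-- Schwarz–Pick at the origin. -/
lemma aux_pick (f : ℂ → ℂ) (hf : DifferentiableOn ℂ f (Metric.ball 0 1))
    (hb : ∀ z ∈ Metric.ball (0 : ℂ) 1, ‖f z‖ ≤ 1) (h0 : ‖f 0‖ < 1)
    (z : ℂ) (hz : z ∈ Metric.ball (0 : ℂ) 1) :
    ‖f z‖ - ‖f 0‖ ≤ ‖z‖ * (1 - ‖f 0‖ * ‖f z‖) := by
  set w := f 0
  have hz1 : ‖z‖ < 1 := by simpa using hz
  have hident : ∀ u : ℂ, ‖1 - (starRingEnd ℂ) w * u‖ ^ 2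
      = ‖u - w‖ ^ 2 + (1 - ‖w‖ ^ 2) * (1 - ‖u‖ ^ 2) := by
    intro u
    simp only [← Complex.normSq_eq_norm_sq, Complex.normSq_apply, Complex.sub_re, Complex.sub_im,
      Complex.mul_re, Complex.mul_im, Complex.conj_re, Complex.conj_im, Complex.one_re,
      Complex.one_im]
    ring
  have hne : ∀ y ∈ Metric.ball (0 : ℂ) 1, 1 - (starRingEnd ℂ) w * f y ≠ 0 := by
    intro y hy h
    have h1 : (starRingEnd ℂ) w * f y = 1 := (sub_eq_zero.mp h).symm
    have h2 : ‖w‖ * ‖f y‖ = 1 := by simpa using congrArg norm h1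
    nlinarith [hb y hy, norm_nonneg w, norm_nonneg (f y)]
  have hle : ∀ y ∈ Metric.ball (0 : ℂ) 1, ‖f y - w‖ ≤ ‖1 - (starRingEnd ℂ) w * f y‖ := by
    intro y hy
    apply le_of_sq_le_sq _ (norm_nonneg _)
    rw [hident]
    have h1 : 0 ≤ 1 - ‖w‖ ^ 2 := by nlinarith [norm_nonneg w]
    have h2 : 0 ≤ 1 - ‖f y‖ ^ 2 := by nlinarith [norm_nonneg (f y), hb y hy]
    nlinarith [mul_nonneg h1 h2]
  have hS := Complex.norm_le_norm_of_mapsTo_ball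
    (f := fun y => (f y - w) / (1 - (starRingEnd ℂ) w * f y)) (R := 1) (z := z)
    ((hf.sub_const w).div ((hf.const_mul _).const_sub 1) hne)
    (by
      intro y hy
      rw [mem_closedBall_zero_iff, norm_div]
      exact div_le_one_of_le₀ (hle y hy) (norm_nonneg _))
    (by simp [w]) hz1
  rw [norm_div, div_le_iff₀ (norm_pos_iff.mpr (hne z hz))] at hS
  have hS2 : ‖f z - w‖ ^ 2 ≤ ‖z‖ ^ 2 * ‖1 - (starRingEnd ℂ) w * f z‖ ^ 2 := by
    rw [← mul_pow]
    exact pow_le_pow_left₀ (norm_nonneg _) hS 2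
  rw [hident] at hS2
  have hxw : ‖w‖ * ‖f z‖ ≤ 1 := by nlinarith [hb z hz, norm_nonneg w, norm_nonneg (f z)]
  rcases le_total ‖f z‖ ‖w‖ with h | h
  · have : 0 ≤ ‖z‖ * (1 - ‖w‖ * ‖f z‖) := mul_nonneg (norm_nonneg _) (by linarith)
    linarith
  · have h1 : ‖f z‖ - ‖w‖ ≤ ‖f z - w‖ := norm_sub_norm_le _ _
    have h2 : (‖f z‖ - ‖w‖) ^ 2 ≤ ‖f z - w‖ ^ 2 := pow_le_pow_left₀ (by linarith) h1 2
    apply le_of_sq_le_sq _ (mul_nonneg (norm_nonneg _) (by linarith))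
    have h3 : 0 ≤ 1 - ‖z‖ ^ 2 := by nlinarith [norm_nonneg z]
    nlinarith [mul_le_mul_of_nonneg_right h2 h3]


/-- Theorem 2, first part: for a bounded analytic self-map `f` of the unit
disk and `|z| = r ≤ 2/(3 + |a₀| + √5(1 + |a₀|))`:
`|f(z)| + ∑_{n=1}^∞ |aₙ| rⁿ + (1/(1+|a₀|) + r/(1-r)) ∑_{n=1}^∞ |aₙ|² r^{2n} ≤ 1`. -/
theorem stmt3 (f : ℂ → ℂ) (a : ℕ → ℂ)
    (hf : DifferentiableOn ℂ f (Metric.ball 0 1))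
    (hb : ∀ z ∈ Metric.ball (0 : ℂ) 1, ‖f z‖ ≤ 1)
    (hs : ∀ z ∈ Metric.ball (0 : ℂ) 1, HasSum (fun n => a n * z ^ n) (f z))
    (z : ℂ) (hz : z ∈ Metric.ball (0 : ℂ) 1) (r : ℝ) (hzr : ‖z‖ = r)
    (hr : r ≤ 2 / (3 + ‖a 0‖ + Real.sqrt 5 * (1 + ‖a 0‖))) :
    ‖f z‖ + (∑' n : ℕ, ‖a (n + 1)‖ * r ^ (n + 1))
      + (1 / (1 + ‖a 0‖) + r / (1 - r))
        * ∑' n : ℕ, ‖a (n + 1)‖ ^ 2 * r ^ (2 * (n + 1))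
      ≤ 1 := by
  have hz1 : ‖z‖ < 1 := by simpa using hz
  have hr0 : 0 ≤ r := hzr ▸ norm_nonneg z
  have hr1 : r < 1 := hzr ▸ hz1
  have h1r : 0 < 1 - r := by linarith
  have hf0 : f 0 = a 0 := by
    have h := hs 0 (by simp)
    have h' := hasSum_single (f := fun n => a n * (0 : ℂ) ^ n) 0 (by
      intro n hn; simp [hn])
    simpa using h.unique h'
  have hsum : Summable fun n => ‖a n‖ * r ^ n := by
    have := (hs z hz).summable.norm
    simpa [hzr] using this
  have hodd := aux_odd f a hb hs
  have hB := aux_bohr (fun n => ‖a n‖) r hr0 hr1 (fun n => norm_nonneg _) hsum hodd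
    (aux_even f a hb hs)
  have ha1 : ‖a 0‖ ≤ 1 := by
    rw [← hf0]; exact hb 0 (by simp)
  rcases ha1.lt_or_eq with hlt | heq
  · have hP := aux_pick f hf hb (by rw [hf0]; exact hlt) z hz
    rw [hf0, hzr] at hP
    set x := ‖a 0‖ with hx
    have hx0 : 0 ≤ x := norm_nonneg _
    have hP' : ‖f z‖ ≤ 1 - (1 - x) * (1 - r) / (1 + x * r) := by
      have hd : 0 < 1 + x * r := by positivity
      rw [le_sub_iff_add_le, ← le_sub_iff_add_le', div_le_iff₀ hd]
      nlinarith
    have h5 : Real.sqrt 5 ^ 2 = 5 := Real.sq_sqrt (by norm_num)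
    have h50 : 0 ≤ Real.sqrt 5 := Real.sqrt_nonneg 5
    have hr' : r * (3 + x + Real.sqrt 5 * (1 + x)) ≤ 2 := by
      rwa [le_div_iff₀ (by positivity)] at hr
    have hpoly : (1 + x) * r * (1 + x * r) ≤ (1 - r) ^ 2 := by
      have h52 : 2 ≤ Real.sqrt 5 := Real.le_sqrt_of_sq_le (by norm_num)
      have hA : 0 ≤ 2 - r * (3 + x + Real.sqrt 5 * (1 + x)) := by linarith
      have hA' : 0 ≤ 2 - r * (3 + x - Real.sqrt 5 * (1 + x)) := by
        have : 0 ≤ r * (Real.sqrt 5 * (1 + x)) := by positivity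
        nlinarith
      have := mul_nonneg hA hA'
      have e : (2 - r * (3 + x + Real.sqrt 5 * (1 + x))) * (2 - r * (3 + x - Real.sqrt 5 * (1 + x)))
          = 4 * ((1 - r) ^ 2 - (1 + x) * r * (1 + x * r)) := by
        linear_combination (-(r ^ 2) * (1 + x) ^ 2) * h5
      linarith
    have hfin : (1 - x ^ 2) * (r / (1 - r)) ≤ (1 - x) * (1 - r) / (1 + x * r) := by
      have hd : 0 < 1 + x * r := by positivity
      rw [← mul_div_assoc, div_le_div_iff₀ h1r hd]
      have := mul_le_mul_of_nonneg_left hpoly (show 0 ≤ 1 - x by linarith)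
      nlinarith
    linarith
  · rw [heq] at hB ⊢
    have := hb z hz
    simp only [one_pow, sub_self, zero_mul] at hB
    linarith
end

section
/- Let p be a positive integer, 0 ≤ m ≤ p an integer, and suppose f(z) = ∑_{n=0}^∞ a_{pn+m} z^{pn+m} on 𝔻. Suppose r ∈ [0,1) satisfies (1 - |a_m| - |a_m|²)·r^{p+m} + r^p + |a_m|·r^m - 1 ≤ 0. Then ∑_{n=0}^∞ |a_{pn+m}| r^{pn+m} + (1/(1+|a_m|) + r^p/(1-r^p)) · ∑_{n=1}^∞ |a_{pn+m}|² r^{2pn+m} ≤ 1. -/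
open Filter Topology
lemma exists_lp (c : ℕ → ℂ) (hc : Summable fun n => ‖c n‖) :
    ∃ v : MeasureTheory.Lp ℂ 2 (AddCircle.haarAddCircle (T := (1:ℝ))),
      (∀ᵐ x ∂(AddCircle.haarAddCircle (T := (1:ℝ))), v x = ∑' n, c n * (fourier 1 x) ^ n) ∧
      HasSum (fun n => ‖c n‖ ^ 2) (‖v‖ ^ 2) := by
  have hs : Summable (fun n : ℕ => c n • (fourier (n:ℤ) : C(AddCircle (1:ℝ), ℂ))) := by
    apply Summable.of_norm
    simpa [norm_smul, fourier_norm] using hc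
  obtain ⟨F, hF⟩ := hs
  have hpow : ∀ (n : ℕ) (x : AddCircle (1:ℝ)), fourier (n:ℤ) x = (fourier 1 x) ^ n := by
    intro n x
    induction n with
    | zero => simp
    | succ n ih => push_cast; rw [fourier_add, ih, pow_succ]
  refine ⟨ContinuousMap.toLp 2 AddCircle.haarAddCircle ℂ F, ?_, ?_⟩
  · filter_upwards [ContinuousMap.coeFn_toLp (p := 2) (𝕜 := ℂ) AddCircle.haarAddCircle F] with x hx
    rw [hx, ← (ContinuousMap.hasSum_apply hF x).tsum_eq]
    simp [hpow]
  · have h2 := hF.mapL (ContinuousMap.toLp 2 (AddCircle.haarAddCircle (T := (1:ℝ))) ℂ)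
    have h3 : Tendsto (fun s : Finset ℕ => ‖∑ n ∈ s, c n • fourierLp (T := (1:ℝ)) 2 (n:ℤ)‖ ^ 2) atTop
        (𝓝 (‖ContinuousMap.toLp 2 (AddCircle.haarAddCircle (T := (1:ℝ))) ℂ F‖ ^ 2)) := by
      have := (h2.norm).pow 2
      simpa [map_smul, fourierLp] using this
    have ho : Orthonormal ℂ (fun n : ℕ => fourierLp (T := (1:ℝ)) 2 (n:ℤ)) :=
      orthonormal_fourier.comp _ Nat.cast_injective
    refine h3.congr fun s => ?_
    have := ho.inner_sum c c s
    rw [inner_self_eq_norm_sq_to_K] at this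
    have h4 : ((‖∑ n ∈ s, c n • fourierLp (T := (1:ℝ)) 2 (n:ℤ)‖ ^ 2 : ℝ) : ℂ)
      = ((∑ n ∈ s, ‖c n‖ ^ 2 : ℝ) : ℂ) := by
      push_cast
      refine Eq.trans this ?_
      refine Finset.sum_congr rfl fun i _ => ?_
      rw [Complex.conj_mul']
    exact_mod_cast h4

lemma l2_compare (c h : ℕ → ℂ) (hc : Summable fun n => ‖c n‖) (hh : Summable fun n => ‖h n‖)
    (K : ℝ) (hK0 : 0 ≤ K)
    (hK : ∀ z : ℂ, ‖z‖ = 1 → K * ‖∑' n, c n * z ^ n‖ ≤ ‖∑' n, h n * z ^ n‖) (s : Finset ℕ) :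
    K ^ 2 * ∑ n ∈ s, ‖c n‖ ^ 2 ≤ ∑' n, ‖h n‖ ^ 2 := by
  obtain ⟨v, hv, hv2⟩ := exists_lp c hc
  obtain ⟨w, hw, hw2⟩ := exists_lp h hh
  have h1 : ‖(K : ℂ) • v‖ ≤ ‖w‖ := by
    apply MeasureTheory.Lp.norm_le_norm_of_ae_le
    filter_upwards [hv, hw, MeasureTheory.Lp.coeFn_smul (K:ℂ) v] with x h1 h2 h3
    rw [h3, h2, Pi.smul_apply, h1, norm_smul, Complex.norm_real, Real.norm_of_nonneg hK0]
    apply hK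
    rw [fourier_apply]; exact Circle.norm_coe _
  rw [norm_smul, Complex.norm_real, Real.norm_of_nonneg hK0] at h1
  rw [hw2.tsum_eq]
  calc _ ≤ K ^ 2 * ‖v‖ ^ 2 := by
        gcongr
        exact sum_le_hasSum s (fun _ _ => by positivity) hv2
    _ = (K * ‖v‖) ^ 2 := by ring
    _ ≤ _ := by gcongr

lemma toeplitz (p m : ℕ) (hp : 0 < p) (f : ℂ → ℂ) (a : ℕ → ℂ)
    (hb : ∀ z ∈ Metric.ball (0 : ℂ) 1, ‖f z‖ ≤ 1)
    (hs : ∀ z ∈ Metric.ball (0 : ℂ) 1, HasSum (fun n => a n * z ^ (p * n + m)) (f z))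
    (h : ℕ → ℂ) (N : ℕ) (hN : ∀ j, N ≤ j → h j = 0) (s : Finset ℕ) :
    ∑ n ∈ s, ‖∑ kl ∈ Finset.HasAntidiagonal.antidiagonal n, a kl.1 * h kl.2‖ ^ 2
      ≤ ∑ j ∈ Finset.range N, ‖h j‖ ^ 2 := by
  have main : ∀ t : ℝ, 0 < t → t < 1 → (t ^ m) ^ 2 * ∑ n ∈ s,
      (‖∑ kl ∈ Finset.HasAntidiagonal.antidiagonal n, a kl.1 * h kl.2‖ * (t ^ p) ^ n) ^ 2
      ≤ ∑ j ∈ Finset.range N, ‖h j‖ ^ 2 := by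
    intro t ht0 ht1
    have hsum : ∀ z : ℂ, ‖z‖ = t → Summable fun n => ‖a n * (z ^ p) ^ n‖ := by
      intro z hz
      have hz0 : z ≠ 0 := by rintro rfl; simp at hz; linarith
      have h1 := (hs z (by simp [hz, ht1])).summable.mul_right ((z ^ m)⁻¹)
      refine (h1.congr fun n => ?_).norm
      rw [pow_add, ← pow_mul]; field_simp
    set R : ℂ := ((t ^ p : ℝ) : ℂ) with hR
    have hRn : ‖R‖ = t ^ p := by rw [hR, Complex.norm_real, Real.norm_of_nonneg (by positivity)]
    have hA : Summable fun n => ‖a n * R ^ n‖ := by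
      have := hsum (t : ℂ) (by simp [abs_of_pos ht0])
      simpa [hR] using this
    have hhf : ∀ g : ℕ → ℂ, Summable fun n => ‖h n * g n‖ := fun g =>
      summable_of_ne_finset_zero (s := Finset.range N) (fun j hj => by
        rw [hN j (by simpa using hj)]; simp)
    have hC := summable_norm_sum_mul_antidiagonal_of_summable_norm hA (hhf (fun n => R ^ n))
    have hcmp := l2_compare _ _ hC (hhf (fun n => R ^ n)) (t ^ m) (by positivity) (by
      intro u hu
      obtain ⟨z, hz⟩ := IsAlgClosed.exists_pow_nat_eq (R * u) hp
      have hzt : ‖z‖ = t := by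
        have : ‖z‖ ^ p = t ^ p := by rw [← norm_pow, hz, norm_mul, hRn, hu, mul_one]
        exact (pow_left_inj₀ (norm_nonneg _) ht0.le hp.ne').1 this
      have hA' := hsum z hzt
      have hprod := tsum_mul_tsum_eq_tsum_sum_antidiagonal_of_summable_norm hA'
        (hhf (fun n => (z ^ p) ^ n))
      have e1 : ∑' n, (∑ kl ∈ Finset.HasAntidiagonal.antidiagonal n, a kl.1 * R ^ kl.1 * (h kl.2 * R ^ kl.2)) * u ^ n
          = (∑' n, a n * (z ^ p) ^ n) * ∑' n, h n * R ^ n * u ^ n := by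
        have e2 : (fun n => h n * R ^ n * u ^ n) = fun n => h n * (z ^ p) ^ n := by
          funext n; rw [hz, mul_pow]; ring
        rw [e2, hprod]
        congr 1; funext n
        rw [Finset.sum_mul]
        refine Finset.sum_congr rfl fun kl hkl => ?_
        rw [← Finset.HasAntidiagonal.mem_antidiagonal.1 hkl, hz, pow_add]; ring
      rw [e1, norm_mul, ← mul_assoc]
      refine mul_le_of_le_one_left (norm_nonneg _) ?_
      have hzb : z ∈ Metric.ball (0:ℂ) 1 := by simp [hzt, ht1]
      have e3 : f z = z ^ m * ∑' n, a n * (z ^ p) ^ n := by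
        rw [← (hs z hzb).tsum_eq, ← tsum_mul_left]
        congr 1; funext n; rw [pow_add, pow_mul]; ring
      have := hb z hzb
      rw [e3, norm_mul, norm_pow, hzt] at this
      exact this) s
    refine le_trans (le_of_eq ?_) (hcmp.trans ?_)
    · congr 1
      refine Finset.sum_congr rfl fun n _ => ?_
      congr 1
      have : ∑ kl ∈ Finset.HasAntidiagonal.antidiagonal n, a kl.1 * R ^ kl.1 * (h kl.2 * R ^ kl.2)
        = (∑ kl ∈ Finset.HasAntidiagonal.antidiagonal n, a kl.1 * h kl.2) * R ^ n := by
        rw [Finset.sum_mul]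
        refine Finset.sum_congr rfl fun kl hkl => ?_
        rw [← Finset.HasAntidiagonal.mem_antidiagonal.1 hkl, pow_add]; ring
      rw [this, norm_mul, norm_pow, hRn]
    · rw [tsum_eq_sum (s := Finset.range N) (fun j hj => by
        rw [hN j (by simpa using hj)]; simp)]
      refine Finset.sum_le_sum fun j _ => ?_
      rw [norm_mul, norm_pow, hRn]
      have : (t ^ p) ^ j ≤ 1 := pow_le_one₀ (by positivity) (pow_le_one₀ ht0.le ht1.le)
      have : ‖h j‖ * (t ^ p) ^ j ≤ ‖h j‖ := mul_le_of_le_one_right (norm_nonneg _) this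
      gcongr
  have hcont : Continuous fun t : ℝ => (t ^ m) ^ 2 * ∑ n ∈ s,
      (‖∑ kl ∈ Finset.HasAntidiagonal.antidiagonal n, a kl.1 * h kl.2‖ * (t ^ p) ^ n) ^ 2 := by fun_prop
  have hlim := (hcont.tendsto 1).mono_left (nhdsWithin_le_nhds (s := Set.Iio 1))
  simp only [one_pow, one_mul, mul_one] at hlim
  refine le_of_tendsto hlim ?_
  filter_upwards [Ioo_mem_nhdsLT (show (0:ℝ) < 1 by norm_num)] with t ht
  exact main t ht.1 ht.2

lemma bohr_sum (x : ℕ → ℝ) (A ρ : ℝ) (hA : x 0 = A) (hx : ∀ n, 0 ≤ x n) (h0 : 0 ≤ ρ) (h1 : ρ < 1)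
    (hodd : ∀ n, x (2*n+1) ≤ 1 - ∑ k ∈ Finset.range (n+1), x k ^ 2)
    (heven : ∀ n, x (2*(n+1)) ≤ 1 - ∑ k ∈ Finset.range (n+1), x k ^ 2 - x (n+1) ^ 2 / (1 + A))
    (hS1 : Summable fun n => x (n+1) * ρ ^ (n+1))
    (hS2 : Summable fun n => x (n+1) ^ 2 * ρ ^ (2 * (n+1))) :
    ∑' n, x (n+1) * ρ ^ (n+1) + (1 / (1 + A) + ρ / (1 - ρ)) * ∑' n, x (n+1) ^ 2 * ρ ^ (2 * (n+1))
      ≤ (1 - A ^ 2) * (ρ / (1 - ρ)) := by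
  have hρ : (1 - ρ) ≠ 0 := by linarith
  have key : ∀ N : ℕ, ∑ n ∈ Finset.range (2 * N), x (n+1) * ρ ^ (n+1)
      + (1 / (1 + A) + ρ / (1 - ρ)) * ∑ n ∈ Finset.range N, x (n+1) ^ 2 * ρ ^ (2 * (n+1))
      ≤ (1 - A ^ 2) * (ρ / (1 - ρ))
        - (1 - ∑ k ∈ Finset.range (N+1), x k ^ 2) * (ρ ^ (2*N+1) / (1 - ρ)) := by
    intro N
    induction N with
    | zero => simp [hA]
    | succ N ih =>
      rw [show 2 * (N+1) = 2 * N + 1 + 1 by ring, Finset.sum_range_succ, Finset.sum_range_succ,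
        Finset.sum_range_succ _ N, Finset.sum_range_succ _ (N+1)]
      have e1 := mul_le_mul_of_nonneg_right (hodd N) (pow_nonneg h0 (2*N+1))
      have e2 := mul_le_mul_of_nonneg_right (heven N) (pow_nonneg h0 (2*N+1+1))
      rw [show 2 * (N+1) = 2 * N + 1 + 1 by ring] at e2 ⊢
      set Q := ∑ k ∈ Finset.range (N+1), x k ^ 2
      have e3 : (1 - (Q + x (N+1)^2)) * (ρ ^ (2*N+1+1+1) / (1 - ρ)) =
        (1 - Q) * (ρ ^ (2*N+1) / (1 - ρ)) - (1 - Q) * (ρ ^ (2*N+1) + ρ ^ (2*N+1+1))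
          - (ρ / (1 - ρ)) * (x (N+1)^2 * ρ ^ (2*N+1+1)) := by
        field_simp
        ring
      rw [e3]
      have e4 : x (N+1)^2 / (1 + A) = 1 / (1 + A) * x (N+1)^2 := by ring
      rw [e4] at e2
      linarith
  have t1 := (hS1.hasSum.tendsto_sum_nat).comp
    (tendsto_id.const_mul_atTop' (show 0 < 2 by norm_num) : Tendsto (fun N : ℕ => 2 * N) atTop atTop)
  have t2 := (hS2.hasSum.tendsto_sum_nat).const_mul (1 / (1 + A) + ρ / (1 - ρ))
  refine le_of_tendsto (t1.add t2) (Eventually.of_forall fun N => (key N).trans ?_)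
  have : 0 ≤ (1 - ∑ k ∈ Finset.range (N+1), x k ^ 2) * (ρ ^ (2*N+1) / (1 - ρ)) :=
    mul_nonneg ((hx _).trans (hodd N)) (div_nonneg (pow_nonneg h0 _) (by linarith))
  linarith

lemma real_opt (α b c d : ℝ) (hα : 0 ≤ α) (hb : 0 ≤ b) (hd : 0 < d) (hdα : d ≤ 1 - α ^ 2)
    (H1 : c ^ 2 ≤ d * (1 - α ^ 2))
    (H2 : ∀ ν : ℝ, 0 ≤ ν → b ≠ 0 → (c - α * ν * c) ^ 2 + (b + ν * c ^ 2) ^ 2 / d ≤ d + ν ^ 2 * c ^ 2) :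
    b ≤ d - c ^ 2 / (1 + α) := by
  have hα1 : α < 1 := by nlinarith
  have h1α : 0 < 1 + α := by linarith
  by_contra hcon
  have hP : 0 < (1 + α) * b - (1 + α) * d + c ^ 2 := by
    have : d - c ^ 2 / (1 + α) < b := not_le.1 hcon
    have h2 : (d - c ^ 2 / (1 + α)) * (1 + α) < b * (1 + α) := mul_lt_mul_of_pos_right this h1α
    rw [sub_mul, div_mul_cancel₀ _ h1α.ne'] at h2
    linarith
  have hbα : α * d < b := by nlinarith
  have hb0 : b ≠ 0 := by
    have : 0 ≤ α * d := by positivity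
    intro h; linarith
  have hQ : 0 < (1 - α) * (b + d) - c ^ 2 := by nlinarith
  have H3 : ∀ ν : ℝ, 0 ≤ ν → d * c ^ 2 + b ^ 2 - d ^ 2 + 2 * ν * c ^ 2 * (b - α * d)
      - ν ^ 2 * c ^ 2 * (d * (1 - α ^ 2) - c ^ 2) ≤ 0 := by
    intro ν hν
    have h := mul_le_mul_of_nonneg_right (H2 ν hν hb0) hd.le
    rw [add_mul, div_mul_cancel₀ _ hd.ne'] at h
    nlinarith
  rcases (sub_nonneg.2 H1).eq_or_lt with he | he
  · have hc2 : c ^ 2 = d * (1 - α ^ 2) := by linarith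
    have hcpos : 0 < c ^ 2 := by rw [hc2]; apply mul_pos hd; nlinarith
    rw [← he] at H3
    have hk : 0 < 2 * c ^ 2 * (b - α * d) := by apply mul_pos; linarith; linarith
    have := H3 ((|d * c ^ 2 + b ^ 2 - d ^ 2| + 1) / (2 * c ^ 2 * (b - α * d))) (by positivity)
    have e : 2 * ((|d * c ^ 2 + b ^ 2 - d ^ 2| + 1) / (2 * c ^ 2 * (b - α * d))) * c ^ 2 * (b - α * d)
      = |d * c ^ 2 + b ^ 2 - d ^ 2| + 1 := by
      have h7 : ∀ y : ℝ, 2 * (y / (2 * c ^ 2 * (b - α * d))) * c ^ 2 * (b - α * d)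
          = y / (2 * c ^ 2 * (b - α * d)) * (2 * c ^ 2 * (b - α * d)) := fun y => by ring
      rw [h7, div_mul_cancel₀ _ hk.ne']
    rw [e] at this
    have := neg_abs_le (d * c ^ 2 + b ^ 2 - d ^ 2)
    linarith
  · set e := d * (1 - α ^ 2) - c ^ 2 with hedef
    have h := mul_le_mul_of_nonneg_right (H3 ((b - α * d) / e) (div_nonneg (by linarith) he.le)) he.le
    have h4 : (d * c ^ 2 + b ^ 2 - d ^ 2 + 2 * ((b - α * d) / e) * c ^ 2 * (b - α * d)
      - ((b - α * d) / e) ^ 2 * c ^ 2 * e) * e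
      = (d * c ^ 2 + b ^ 2 - d ^ 2) * e + c ^ 2 * (b - α * d) ^ 2 := by
      field_simp; ring
    rw [h4] at h
    have h5 : (d * c ^ 2 + b ^ 2 - d ^ 2) * e + c ^ 2 * (b - α * d) ^ 2 =
      d * (((1 + α) * b - (1 + α) * d + c ^ 2) * ((1 - α) * (b + d) - c ^ 2)) := by
      rw [hedef]; ring
    have := mul_pos hd (mul_pos hP hQ)
    linarith

lemma elim_t (q d : ℝ) (hd : 0 < d) (hq : q = 1 - d) (X : ℂ) (Y : ℝ)
    (H : ∀ t : ℂ, ‖X + t * q‖ ^ 2 ≤ Y + ‖t‖ ^ 2 * q) : ‖X‖ ^ 2 / d ≤ Y := by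
  have h := H (X / d)
  have hd' : (d : ℂ) ≠ 0 := by exact_mod_cast hd.ne'
  have e : X + X / d * q = X / d := by
    rw [hq]; push_cast; field_simp; ring
  rw [e, norm_div, Complex.norm_real, Real.norm_of_nonneg hd.le, hq] at h
  have : (‖X‖ / d) ^ 2 - (‖X‖ / d) ^ 2 * (1 - d) = ‖X‖ ^ 2 / d := by field_simp; ring
  linarith

/-- Contractivity of the lower triangular Toeplitz operator with symbol `a`. -/
def TCond (a : ℕ → ℂ) : Prop :=
  ∀ (h : ℕ → ℂ) (N : ℕ), (∀ j, N ≤ j → h j = 0) → ∀ s : Finset ℕ,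
    ∑ n ∈ s, ‖∑ kl ∈ Finset.HasAntidiagonal.antidiagonal n, a kl.1 * h kl.2‖ ^ 2
      ≤ ∑ j ∈ Finset.range N, ‖h j‖ ^ 2

lemma conj_part (a : ℕ → ℂ) (t : ℂ) (L : ℕ) : ∑ k ∈ Finset.range L, a k * (t * (starRingEnd ℂ) (a k))
    = t * ((∑ k ∈ Finset.range L, ‖a k‖ ^ 2 : ℝ) : ℂ) := by
  push_cast
  rw [Finset.mul_sum]
  refine Finset.sum_congr rfl fun k _ => ?_
  rw [← Complex.mul_conj']; ring

lemma odd_form (a : ℕ → ℂ) (T : TCond a) (n : ℕ) (t : ℂ) :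
    ∑ k ∈ Finset.range (n+1), ‖a k‖ ^ 2
      + ‖a (2*n+1) + t * ((∑ k ∈ Finset.range (n+1), ‖a k‖ ^ 2 : ℝ) : ℂ)‖ ^ 2
      ≤ 1 + ‖t‖ ^ 2 * ∑ k ∈ Finset.range (n+1), ‖a k‖ ^ 2 := by
  let h : ℕ → ℂ := fun j => if j = 0 then 1 else if j < n + 1 then 0 else
    if j ≤ 2*n+1 then t * (starRingEnd ℂ) (a (2*n+1-j)) else 0
  have h0 : h 0 = 1 := by simp [h]
  have hmid : ∀ j, j ≠ 0 → j < n+1 → h j = 0 := by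
    intro j h1 h2; simp only [h]; rw [if_neg h1, if_pos h2]
  have htop : ∀ k, k < n + 1 → h (2*n+1-k) = t * (starRingEnd ℂ) (a k) := by
    intro k hk; simp only [h]
    rw [if_neg (by omega), if_neg (by omega), if_pos (by omega)]
    congr 3; omega
  have := T h (n+1+(n+1)) (by
    intro j hj; simp only [h]; rw [if_neg (by omega), if_neg (by omega), if_neg (by omega)])
    (insert (2*n+1) (Finset.range (n+1)))
  rw [Finset.sum_insert (by simp; omega)] at this
  simp only [Finset.Nat.sum_antidiagonal_eq_sum_range_succ_mk] at this
  have e1 : ∀ k ∈ Finset.range (n+1), ‖∑ i ∈ Finset.range (k+1), a i * h (k - i)‖ ^ 2 = ‖a k‖ ^ 2 := by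
    intro k hk
    have hk' := Finset.mem_range.1 hk
    rw [Finset.sum_range_succ, Finset.sum_eq_zero, Nat.sub_self, h0, zero_add, mul_one]
    intro i hi
    have := Finset.mem_range.1 hi
    rw [hmid _ (by omega) (by omega), mul_zero]
  have e2 : ∑ i ∈ Finset.range (2*n+1+1), a i * h (2*n+1 - i)
      = a (2*n+1) + t * ((∑ k ∈ Finset.range (n+1), ‖a k‖ ^ 2 : ℝ) : ℂ) := by
    rw [Finset.sum_range_succ, Nat.sub_self, h0, show 2*n+1 = n+1+n by ring, Finset.sum_range_add,
      ← conj_part a]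
    rw [Finset.sum_eq_zero (s := Finset.range n)]
    · rw [Finset.sum_congr rfl (g := fun k => a k * (t * (starRingEnd ℂ) (a k)))]
      · ring
      · intro k hk
        rw [show n+1+n = 2*n+1 by ring, htop k (Finset.mem_range.1 hk)]
    · intro i hi
      have := Finset.mem_range.1 hi
      rw [hmid _ (by omega) (by omega), mul_zero]
  have e3 : ∑ j ∈ Finset.range (n+1+(n+1)), ‖h j‖ ^ 2
      = 1 + ‖t‖ ^ 2 * ∑ k ∈ Finset.range (n+1), ‖a k‖ ^ 2 := by
    rw [Finset.sum_range_add, Finset.sum_range_succ' _ n, h0, Finset.sum_eq_zero]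
    · rw [← Finset.sum_range_reflect (fun k => ‖a k‖ ^ 2), Finset.mul_sum]
      simp only [zero_add, norm_one, one_pow]
      congr 1
      refine Finset.sum_congr rfl fun k hk => ?_
      have := Finset.mem_range.1 hk
      rw [show n+1+k = 2*n+1-(n+1-1-k) by omega, htop _ (by omega), norm_mul, RCLike.norm_conj, mul_pow]
    · intro i hi
      have := Finset.mem_range.1 hi
      rw [hmid _ (by omega) (by omega)]; simp
  rw [Finset.sum_congr rfl e1, e2, e3] at this
  linarith

lemma even_form (a : ℕ → ℂ) (T : TCond a) (n : ℕ) (η w t : ℂ) :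
    ‖η‖ ^ 2 * ∑ k ∈ Finset.range (n+1), ‖a k‖ ^ 2 + ‖η * a (n+1) + a 0 * w‖ ^ 2
      + ‖η * a (2*(n+1)) + a (n+1) * w
          + t * ((∑ k ∈ Finset.range (n+1), ‖a k‖ ^ 2 : ℝ) : ℂ)‖ ^ 2
      ≤ ‖η‖ ^ 2 + ‖w‖ ^ 2 + ‖t‖ ^ 2 * ∑ k ∈ Finset.range (n+1), ‖a k‖ ^ 2 := by
  let h : ℕ → ℂ := fun j => if j = 0 then η else if j < n + 1 then 0 else if j = n + 1 then w else
    if j ≤ 2*(n+1) then t * (starRingEnd ℂ) (a (2*(n+1)-j)) else 0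
  have h0 : h 0 = η := by simp [h]
  have hL : h (n+1) = w := by simp [h]
  have hmid : ∀ j, j ≠ 0 → j < n+1 → h j = 0 := by
    intro j h1 h2; simp only [h]; rw [if_neg h1, if_pos h2]
  have htop : ∀ k, k < n + 1 → h (2*(n+1)-k) = t * (starRingEnd ℂ) (a k) := by
    intro k hk; simp only [h]
    rw [if_neg (by omega), if_neg (by omega), if_neg (by omega), if_pos (by omega)]
    congr 3
    omega
  have := T h (n+1+1+(n+1)) (by
    intro j hj; simp only [h]
    rw [if_neg (by omega), if_neg (by omega), if_neg (by omega), if_neg (by omega)])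
    (insert (2*(n+1)) (Finset.range (n+1+1)))
  rw [Finset.sum_insert (by rw [Finset.mem_range]; omega)] at this
  simp only [Finset.Nat.sum_antidiagonal_eq_sum_range_succ_mk] at this
  rw [Finset.sum_range_succ _ (n+1)] at this
  have e1 : ∀ k ∈ Finset.range (n+1), ‖∑ i ∈ Finset.range (k+1), a i * h (k - i)‖ ^ 2
      = ‖η‖ ^ 2 * ‖a k‖ ^ 2 := by
    intro k hk
    have hk' := Finset.mem_range.1 hk
    rw [Finset.sum_range_succ, Finset.sum_eq_zero, Nat.sub_self, h0, zero_add, norm_mul]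
    · ring
    intro i hi
    have := Finset.mem_range.1 hi
    rw [hmid _ (by omega) (by omega), mul_zero]
  have e1' : ∑ i ∈ Finset.range (n+1+1), a i * h (n+1 - i) = η * a (n+1) + a 0 * w := by
    rw [Finset.sum_range_succ, Finset.sum_range_succ', Finset.sum_eq_zero, Nat.sub_self, h0,
      Nat.sub_zero, hL]
    · ring
    intro i hi
    have := Finset.mem_range.1 hi
    rw [hmid _ (by omega) (by omega), mul_zero]
  have e2 : ∑ i ∈ Finset.range (2*(n+1)+1), a i * h (2*(n+1) - i)
      = η * a (2*(n+1)) + a (n+1) * w + t * ((∑ k ∈ Finset.range (n+1), ‖a k‖ ^ 2 : ℝ) : ℂ) := by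
    rw [Finset.sum_range_succ, Nat.sub_self, h0, show Finset.range (2*(n+1)) = Finset.range (n+1+(n+1)) by
      congr 1; ring, Finset.sum_range_add, ← conj_part a]
    rw [Finset.sum_range_succ' (fun x => a (n+1+x) * h (2*(n+1) - (n+1+x))) n, Finset.sum_eq_zero (s := Finset.range n)]
    · rw [Finset.sum_congr rfl (g := fun k => a k * (t * (starRingEnd ℂ) (a k)))]
      · rw [show 2*(n+1) - (n+1+0) = n+1 by omega, hL]
        simp only [add_zero]; ring
      · intro k hk
        rw [htop k (Finset.mem_range.1 hk)]
    · intro i hi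
      have := Finset.mem_range.1 hi
      rw [hmid _ (by omega) (by omega), mul_zero]
  have e3 : ∑ j ∈ Finset.range (n+1+1+(n+1)), ‖h j‖ ^ 2
      = ‖η‖ ^ 2 + ‖w‖ ^ 2 + ‖t‖ ^ 2 * ∑ k ∈ Finset.range (n+1), ‖a k‖ ^ 2 := by
    rw [Finset.sum_range_add, Finset.sum_range_succ _ (n+1), Finset.sum_range_succ' _ n, h0, hL,
      Finset.sum_eq_zero (s := Finset.range n)]
    · rw [← Finset.sum_range_reflect (fun k => ‖a k‖ ^ 2), Finset.mul_sum]
      simp only [zero_add]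
      congr 1
      refine Finset.sum_congr rfl fun k hk => ?_
      have := Finset.mem_range.1 hk
      rw [show n+1+1+k = 2*(n+1)-(n+1-1-k) by omega, htop _ (by omega), norm_mul, RCLike.norm_conj, mul_pow]
    · intro i hi
      have := Finset.mem_range.1 hi
      rw [hmid _ (by omega) (by omega)]; simp
  rw [Finset.sum_congr rfl e1, e1', e2, e3, ← Finset.mul_sum] at this
  linarith

lemma carlson_odd (a : ℕ → ℂ) (T : TCond a) (n : ℕ) : ‖a (2*n+1)‖ ≤ 1 - ∑ k ∈ Finset.range (n+1), ‖a k‖ ^ 2 := by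
  have F := odd_form a T n
  set q := ∑ k ∈ Finset.range (n+1), ‖a k‖ ^ 2
  have F0 := F 0
  simp only [zero_mul, add_zero, norm_zero, ne_eq, OfNat.ofNat_ne_zero, not_false_eq_true, zero_pow] at F0
  have hd0 : 0 ≤ 1 - q := by nlinarith [sq_nonneg ‖a (2*n+1)‖]
  rcases hd0.eq_or_lt with hd | hd
  · have : ‖a (2*n+1)‖ ^ 2 ≤ 0 := by linarith
    nlinarith
  · have := elim_t q (1 - q) hd (by ring) (a (2*n+1)) (1 - q) (fun t => by linarith [F t])
    rw [div_le_iff₀ hd, ← sq] at this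
    exact (sq_le_sq₀ (norm_nonneg _) hd.le).1 this

lemma carlson_even (a : ℕ → ℂ) (T : TCond a) (n : ℕ) : ‖a (2*(n+1))‖ ≤ 1 - ∑ k ∈ Finset.range (n+1), ‖a k‖ ^ 2
    - ‖a (n+1)‖ ^ 2 / (1 + ‖a 0‖) := by
  have F := even_form a T n
  have hq0 : ‖a 0‖ ^ 2 ≤ ∑ k ∈ Finset.range (n+1), ‖a k‖ ^ 2 :=
    Finset.single_le_sum (f := fun k => ‖a k‖ ^ 2) (fun _ _ => by positivity) (by simp)
  set q := ∑ k ∈ Finset.range (n+1), ‖a k‖ ^ 2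
  have F0 := F 1 0 0
  simp only [zero_mul, mul_zero, one_mul, norm_one, one_pow, add_zero, norm_zero, ne_eq, OfNat.ofNat_ne_zero,
    not_false_eq_true, zero_pow] at F0
  have hd0 : 0 ≤ 1 - q := by nlinarith [sq_nonneg ‖a (2*(n+1))‖, sq_nonneg ‖a (n+1)‖]
  rcases hd0.eq_or_lt with hd | hd
  · have h1 : ‖a (2*(n+1))‖ ^ 2 ≤ 0 := by nlinarith [sq_nonneg ‖a (n+1)‖]
    have h2 : ‖a (n+1)‖ ^ 2 = 0 := by nlinarith [sq_nonneg ‖a (n+1)‖, sq_nonneg ‖a (2*(n+1))‖]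
    rw [h2, ← hd]
    simp only [zero_div, sub_zero]
    nlinarith
  · have G : ∀ η w : ℂ, ‖η * a (2*(n+1)) + a (n+1) * w‖ ^ 2 / (1 - q)
        ≤ ‖η‖ ^ 2 + ‖w‖ ^ 2 - ‖η‖ ^ 2 * q - ‖η * a (n+1) + a 0 * w‖ ^ 2 := fun η w =>
      elim_t q (1 - q) hd (by ring) _ _ (fun t => by linarith [F η w t])
    apply real_opt _ _ _ _ (norm_nonneg _) (norm_nonneg _) hd (by linarith)
    · have := G 0 1
      simp only [zero_mul, mul_one, norm_one, one_pow, zero_add, norm_zero, ne_eq, OfNat.ofNat_ne_zero,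
        not_false_eq_true, zero_pow, sub_zero] at this
      rw [div_le_iff₀ hd] at this
      linarith
    · intro ν hν hb0
      set b := a (2*(n+1))
      set c := a (n+1)
      have hbb : (‖b‖ : ℂ) ≠ 0 := by exact_mod_cast hb0
      have := G 1 (((ν / ‖b‖ : ℝ) : ℂ) * b * (starRingEnd ℂ) c)
      have hw : ‖((ν / ‖b‖ : ℝ) : ℂ) * b * (starRingEnd ℂ) c‖ = ν * ‖c‖ := by
        rw [norm_mul, norm_mul, Complex.norm_real, Real.norm_of_nonneg (by positivity), RCLike.norm_conj]
        field_simp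
      have hx : ‖1 * b + c * (((ν / ‖b‖ : ℝ) : ℂ) * b * (starRingEnd ℂ) c)‖ = ‖b‖ + ν * ‖c‖ ^ 2 := by
        have e : 1 * b + c * (((ν / ‖b‖ : ℝ) : ℂ) * b * (starRingEnd ℂ) c)
          = b * ((1 + ν / ‖b‖ * ‖c‖ ^ 2 : ℝ) : ℂ) := by
          push_cast
          rw [← Complex.mul_conj']; ring
        rw [e, norm_mul, Complex.norm_real, Real.norm_of_nonneg (by positivity)]
        field_simp
      rw [hx, hw] at this
      have hy : (‖c‖ - ‖a 0‖ * ν * ‖c‖) ^ 2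
          ≤ ‖1 * c + a 0 * (((ν / ‖b‖ : ℝ) : ℂ) * b * (starRingEnd ℂ) c)‖ ^ 2 := by
        have h3 := abs_norm_sub_norm_le (1 * c) (-(a 0 * (((ν / ‖b‖ : ℝ) : ℂ) * b * (starRingEnd ℂ) c)))
        rw [sub_neg_eq_add, norm_neg, one_mul, norm_mul (a 0), hw] at h3
        rw [one_mul, ← sq_abs, mul_assoc]
        gcongr
      simp only [norm_one, one_pow, one_mul] at this hy
      nlinarith

/-- Theorem 3: let `f(z) = ∑_{n=0}^∞ a_{pn+m} z^{pn+m}` be a bounded analytic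
self-map of the unit disk (here `a n` denotes the coefficient `a_{pn+m}`).
If `r ∈ [0,1)` satisfies `(1-|aₘ|-|aₘ|²)r^{p+m} + r^p + |aₘ|r^m - 1 ≤ 0`, then
`∑_{n=0}^∞ |a_{pn+m}| r^{pn+m}
  + (1/(1+|aₘ|) + r^p/(1-r^p)) ∑_{n=1}^∞ |a_{pn+m}|² r^{2pn+m} ≤ 1`. -/
theorem stmt7 (p m : ℕ) (hp : 0 < p) (hm : m ≤ p) (f : ℂ → ℂ) (a : ℕ → ℂ)
    (hf : DifferentiableOn ℂ f (Metric.ball 0 1))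
    (hb : ∀ z ∈ Metric.ball (0 : ℂ) 1, ‖f z‖ ≤ 1)
    (hs : ∀ z ∈ Metric.ball (0 : ℂ) 1, HasSum (fun n => a n * z ^ (p * n + m)) (f z))
    (r : ℝ) (hr0 : 0 ≤ r) (hr1 : r < 1)
    (hcond : (1 - ‖a 0‖ - ‖a 0‖ ^ 2) * r ^ (p + m) + r ^ p + ‖a 0‖ * r ^ m - 1 ≤ 0) :
    (∑' n : ℕ, ‖a n‖ * r ^ (p * n + m))
      + (1 / (1 + ‖a 0‖) + r ^ p / (1 - r ^ p))
        * ∑' n : ℕ, ‖a (n + 1)‖ ^ 2 * r ^ (2 * p * (n + 1) + m)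
      ≤ 1 := by
  have T : TCond a := fun h N hN s => toeplitz p m hp f a hb hs h N hN s
  have hodd := carlson_odd a T
  have heven := carlson_even a T
  have hq : ∀ n, 0 ≤ ∑ k ∈ Finset.range n, ‖a k‖ ^ 2 := fun n =>
    Finset.sum_nonneg fun _ _ => by positivity
  have hx1 : ∀ n, ‖a (n+1)‖ ≤ 1 := by
    intro n
    rcases Nat.even_or_odd' (n+1) with ⟨k, hk | hk⟩
    · obtain ⟨j, rfl⟩ : ∃ j, k = j + 1 := ⟨k - 1, by omega⟩
      rw [hk]
      have : 0 ≤ ‖a (j+1)‖ ^ 2 / (1 + ‖a 0‖) := by positivity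
      linarith [heven j, hq (j+1)]
    · rw [hk]; linarith [hodd k, hq (k+1)]
  set ρ := r ^ p with hρ
  have h0 : 0 ≤ ρ := pow_nonneg hr0 _
  have h1 : ρ < 1 := pow_lt_one₀ hr0 hr1 hp.ne'
  have hg : Summable fun n : ℕ => ρ ^ (n+1) :=
    (summable_nat_add_iff 1).2 (summable_geometric_of_lt_one h0 h1)
  have hS1 : Summable fun n => ‖a (n+1)‖ * ρ ^ (n+1) :=
    Summable.of_nonneg_of_le (fun n => by positivity)
      (fun n => mul_le_of_le_one_left (by positivity) (hx1 n)) hg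
  have hS2 : Summable fun n => ‖a (n+1)‖ ^ 2 * ρ ^ (2 * (n+1)) :=
    Summable.of_nonneg_of_le (fun n => by positivity)
      (fun n => (mul_le_of_le_one_left (by positivity)
        (pow_le_one₀ (norm_nonneg _) (hx1 n))).trans
          (pow_le_pow_of_le_one h0 h1.le (by omega))) hg
  have key := bohr_sum (fun n => ‖a n‖) ‖a 0‖ ρ rfl (fun n => norm_nonneg _) h0 h1 hodd heven hS1 hS2
  have e1 : ∑' n : ℕ, ‖a n‖ * r ^ (p * n + m)
      = r ^ m * (‖a 0‖ + ∑' n, ‖a (n+1)‖ * ρ ^ (n+1)) := by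
    have h2 : Summable fun n => ‖a n‖ * ρ ^ n := (summable_nat_add_iff 1).1 hS1
    have h3 := h2.tsum_eq_zero_add
    simp only [pow_zero, mul_one] at h3
    rw [← h3, ← tsum_mul_left]
    congr 1; funext n
    rw [pow_add, pow_mul]; ring
  have e2 : ∑' n : ℕ, ‖a (n + 1)‖ ^ 2 * r ^ (2 * p * (n + 1) + m)
      = r ^ m * ∑' n, ‖a (n+1)‖ ^ 2 * ρ ^ (2 * (n+1)) := by
    rw [← tsum_mul_left]
    congr 1; funext n
    rw [pow_add, show 2 * p * (n+1) = p * (2 * (n+1)) by ring, pow_mul]; ring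
  rw [e1, e2]
  have hrm : 0 ≤ r ^ m := pow_nonneg hr0 _
  have hd : 0 < 1 - ρ := by linarith
  have fin : r ^ m * (‖a 0‖ + (1 - ‖a 0‖ ^ 2) * (ρ / (1 - ρ))) ≤ 1 := by
    have e : r ^ m * (‖a 0‖ + (1 - ‖a 0‖ ^ 2) * (ρ / (1 - ρ)))
      = r ^ m * (‖a 0‖ * (1 - ρ) + (1 - ‖a 0‖ ^ 2) * ρ) / (1 - ρ) := by
      field_simp
    rw [e, div_le_one hd]
    rw [pow_add, ← hρ] at hcond
    linarith
  have := mul_le_mul_of_nonneg_left key hrm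
  linarith
end

section
/- Let p be a positive integer and suppose f(z) = ∑_{n=0}^∞ a_{pn} z^{pn} on 𝔻. Then for every r with 0 ≤ r^p ≤ 1/(2+|a_0|): ∑_{n=0}^∞ |a_{pn}| r^{pn} + (1/(1+|a_0|) + r^p/(1-r^p)) · ∑_{n=1}^∞ |a_{pn}|² r^{2pn} ≤ 1. -/
theorem cb_int_exp (k : ℤ) : ∫ t in (0:ℝ)..(2*Real.pi), Complex.exp (k * t * Complex.I)
    = if k = 0 then (2*Real.pi : ℂ) else 0 := by
  split_ifs with h
  · subst h; simp
  · have hk : (k : ℂ) * Complex.I ≠ 0 := by simp [h]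
    have := integral_exp_mul_complex (a := 0) (b := 2*Real.pi) hk
    have e : ∀ t : ℝ, (k:ℂ) * t * Complex.I = k * Complex.I * t := fun t => by ring
    simp only [e]
    rw [this]
    have h2 : (k:ℂ) * Complex.I * ((2*Real.pi : ℝ) : ℂ) = k * (2 * Real.pi * Complex.I) := by
      push_cast; ring
    rw [h2, Complex.exp_int_mul_two_pi_mul_I]
    simp

/-- the points on the circle -/
theorem cb_pow (R t : ℝ) (n : ℕ) : ((R:ℂ) * Complex.exp (t * Complex.I))^n
    = R^n * Complex.exp ((n:ℤ) * t * Complex.I) := by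
  rw [mul_pow, ← Complex.exp_nat_mul]; push_cast; ring_nf

theorem cb_coeff (a : ℕ → ℂ) (g : ℂ → ℂ)
    (hs : ∀ w : ℂ, ‖w‖ < 1 → HasSum (fun n => a n * w ^ n) (g w))
    (R : ℝ) (hR0 : 0 < R) (hR1 : R < 1) (k : ℤ) :
    ∫ t in (0:ℝ)..(2*Real.pi), g (R * Complex.exp (t * Complex.I)) * Complex.exp (k * t * Complex.I)
    = if k ≤ 0 then 2*Real.pi * (a k.natAbs * R ^ k.natAbs) else 0 := by
  have hn : ∀ t : ℝ, ‖(R:ℂ) * Complex.exp (t * Complex.I)‖ < 1 := fun t => by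
    rw [norm_mul, Complex.norm_exp_ofReal_mul_I]; simp [abs_of_pos hR0, hR1]
  have hsum : Summable (fun n => ‖a n‖ * R ^ n) := by
    have := (hs R (by simpa [abs_of_pos hR0] using hR1)).summable.norm
    simpa [abs_of_pos hR0] using this
  have key := intervalIntegral.hasSum_integral_of_dominated_convergence
    (μ := MeasureTheory.volume) (a := 0) (b := 2*Real.pi)
    (F := fun n (t:ℝ) => a n * R^n * Complex.exp (((n + k : ℤ):ℂ) * t * Complex.I))
    (f := fun t : ℝ => g (R * Complex.exp (t * Complex.I)) * Complex.exp (k * t * Complex.I))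
    (fun n _ => ‖a n‖ * R ^ n)
    (fun n => (by fun_prop : Continuous _).aestronglyMeasurable)
    (fun n => by
      refine Filter.Eventually.of_forall fun t _ => ?_
      have : ((n + k : ℤ):ℂ) * t * Complex.I = (((n+k : ℤ):ℝ) * t : ℝ) * Complex.I := by
        push_cast; ring
      rw [norm_mul, this, Complex.norm_exp_ofReal_mul_I]
      simp [abs_of_pos hR0])
    (Filter.Eventually.of_forall fun t _ => hsum)
    (by simp)
    (Filter.Eventually.of_forall fun t _ => by
      have := (hs _ (hn t)).mul_right (Complex.exp (k * t * Complex.I))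
      refine this.congr_fun ?_ |> id
      intro n
      rw [cb_pow]
      have : ((n + k : ℤ):ℂ) * t * Complex.I = (n:ℤ) * t * Complex.I + k * t * Complex.I := by
        push_cast; ring
      rw [this, Complex.exp_add]; ring)
  rw [← key.tsum_eq]
  simp only [intervalIntegral.integral_const_mul, cb_int_exp]
  split_ifs with h
  · rw [tsum_eq_single k.natAbs]
    · rw [if_pos (by omega)]; ring
    · intro n hn; rw [if_neg (by omega)]; simp
  · refine (tsum_congr fun n => ?_).trans tsum_zero
    rw [if_neg (by omega)]; simp

theorem cb_cont (a : ℕ → ℂ) (g : ℂ → ℂ)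
    (hs : ∀ w : ℂ, ‖w‖ < 1 → HasSum (fun n => a n * w ^ n) (g w))
    (R : ℝ) (hR0 : 0 < R) (hR1 : R < 1) :
    Continuous (fun t : ℝ => g (R * Complex.exp (t * Complex.I))) := by
  have hn : ∀ t : ℝ, ‖(R:ℂ) * Complex.exp (t * Complex.I)‖ < 1 := fun t => by
    rw [norm_mul, Complex.norm_exp_ofReal_mul_I]; simp [abs_of_pos hR0, hR1]
  have hsum : Summable (fun n => ‖a n‖ * R ^ n) := by
    have := (hs R (by simpa [abs_of_pos hR0] using hR1)).summable.norm
    simpa [abs_of_pos hR0] using this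
  have : (fun t : ℝ => g (R * Complex.exp (t * Complex.I))) =
    fun t : ℝ => ∑' n, a n * (R * Complex.exp (t * Complex.I))^n := by
    ext t; exact (hs _ (hn t)).tsum_eq.symm
  rw [this]
  refine continuous_tsum (fun n => by fun_prop) hsum (fun n t => ?_)
  rw [norm_mul, norm_pow, norm_mul, Complex.norm_exp_ofReal_mul_I]
  simp [abs_of_pos hR0]

theorem cb_parseval (x : ℕ → ℂ) (M : ℕ) (R : ℝ) (hR0 : 0 < R) :
    ∫ t in (0:ℝ)..(2*Real.pi), ‖∑ j ∈ Finset.range M, x j * (R * Complex.exp (t * Complex.I))^j‖^2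
     = 2 * Real.pi * ∑ j ∈ Finset.range M, ‖x j‖^2 * R^(2*j) := by
  apply Complex.ofReal_injective
  rw [← intervalIntegral.integral_ofReal]
  have e : ∀ t : ℝ, ((‖∑ j ∈ Finset.range M, x j * (R * Complex.exp (t * Complex.I))^j‖^2 : ℝ) : ℂ)
    = ∑ j ∈ Finset.range M, ∑ k ∈ Finset.range M, x j * (starRingEnd ℂ) (x k) * R^(j+k) *
        Complex.exp (((j - k : ℤ):ℂ) * t * Complex.I) := by
    intro t
    rw [Complex.ofReal_pow, ← Complex.mul_conj', map_sum, Finset.sum_mul_sum]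
    refine Finset.sum_congr rfl fun j _ => Finset.sum_congr rfl fun k _ => ?_
    rw [cb_pow, cb_pow]
    simp only [map_mul, map_pow, Complex.conj_ofReal, ← Complex.exp_conj, Complex.conj_I, map_intCast]
    have : ((j - k : ℤ):ℂ) * t * Complex.I = (j:ℤ) * t * Complex.I + (k:ℤ) * t * (-Complex.I) := by
        push_cast; ring
    rw [this, Complex.exp_add, pow_add]; ring
  simp only [e]
  rw [intervalIntegral.integral_finsetSum]
  swap
  · intro i _; exact (by fun_prop : Continuous _).intervalIntegrable _ _
  rw [Finset.mul_sum, Complex.ofReal_sum]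
  refine Finset.sum_congr rfl fun j hj => ?_
  rw [intervalIntegral.integral_finsetSum]
  swap
  · intro i _; exact (by fun_prop : Continuous _).intervalIntegrable _ _
  simp only [intervalIntegral.integral_const_mul, cb_int_exp]
  rw [Finset.sum_eq_single j]
  · rw [Complex.mul_conj']; simp; ring
  · intro k _ hk; rw [if_neg (by omega)]; simp
  · intro h; exact absurd hj h

theorem cb_bilin (a : ℕ → ℂ) (g : ℂ → ℂ)
    (hs : ∀ w : ℂ, ‖w‖ < 1 → HasSum (fun n => a n * w ^ n) (g w))
    (hb : ∀ w : ℂ, ‖w‖ < 1 → ‖g w‖ ≤ 1) (N : ℕ) (x : ℕ → ℂ) :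
    ‖∑ j ∈ Finset.range (N+1), ∑ k ∈ Finset.range (N+1),
      if j + k ≤ N then x j * x k * a (N - j - k) else 0‖
     ≤ ∑ j ∈ Finset.range (N+1), ‖x j‖^2 := by
  set S := ∑ j ∈ Finset.range (N+1), ∑ k ∈ Finset.range (N+1),
      if j + k ≤ N then x j * x k * a (N - j - k) else 0 with hS
  have key : ∀ R : ℝ, 0 < R → R < 1 → R^N * ‖S‖ ≤ ∑ j ∈ Finset.range (N+1), ‖x j‖^2 := by
    intro R hR0 hR1
    have hn : ∀ t : ℝ, ‖(R:ℂ) * Complex.exp (t * Complex.I)‖ < 1 := fun t => by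
      rw [norm_mul, Complex.norm_exp_ofReal_mul_I]; simp [abs_of_pos hR0, hR1]
    have hc := cb_cont a g hs R hR0 hR1
    set G : ℝ → ℂ := fun t : ℝ => g (R * Complex.exp (t * Complex.I)) with hG
    have hGe : ∀ t : ℝ, g (R * Complex.exp (t * Complex.I)) = G t := fun t => rfl
    have e1 : ∫ t in (0:ℝ)..(2*Real.pi), g (R * Complex.exp (t * Complex.I)) *
        (∑ j ∈ Finset.range (N+1), x j * (R * Complex.exp (t * Complex.I))^j)^2 *
          Complex.exp (((-N : ℤ):ℂ) * t * Complex.I) = 2 * Real.pi * R^N * S := by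
      have e : ∀ t : ℝ, g (R * Complex.exp (t * Complex.I)) *
        (∑ j ∈ Finset.range (N+1), x j * (R * Complex.exp (t * Complex.I))^j)^2 *
          Complex.exp (((-N : ℤ):ℂ) * t * Complex.I) =
          ∑ j ∈ Finset.range (N+1), ∑ k ∈ Finset.range (N+1), x j * x k * R^(j+k) *
          (g (R * Complex.exp (t * Complex.I)) *
            Complex.exp (((j + k - N : ℤ):ℂ) * t * Complex.I)) := by
        intro t
        rw [sq, Finset.sum_mul_sum, Finset.mul_sum, Finset.sum_mul]
        refine Finset.sum_congr rfl fun j _ => ?_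
        rw [Finset.mul_sum, Finset.sum_mul]
        refine Finset.sum_congr rfl fun k _ => ?_
        rw [cb_pow, cb_pow]
        have : ((j + k - N : ℤ):ℂ) * t * Complex.I = (j:ℤ) * t * Complex.I +
          (k:ℤ) * t * Complex.I + ((-N : ℤ):ℂ) * t * Complex.I := by
          push_cast; ring
        rw [this, Complex.exp_add, Complex.exp_add, pow_add]; ring
      simp only [e]
      simp only [hGe]
      rw [intervalIntegral.integral_finsetSum]
      swap
      · intro i _; exact (by fun_prop : Continuous _).intervalIntegrable _ _
      rw [hS, Finset.mul_sum]
      refine Finset.sum_congr rfl fun j hj => ?_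
      rw [intervalIntegral.integral_finsetSum]
      swap
      · intro i _; exact (by fun_prop : Continuous _).intervalIntegrable _ _
      rw [Finset.mul_sum]
      refine Finset.sum_congr rfl fun k hk => ?_
      rw [intervalIntegral.integral_const_mul]
      simp only [← hGe]
      rw [cb_coeff a g hs R hR0 hR1]
      by_cases h : j + k ≤ N
      · rw [if_pos (by omega), if_pos h]
        have h1 : ((j:ℤ) + k - N).natAbs = N - j - k := by omega
        have h2 : (R:ℂ)^N = R^(j+k) * R^(N-j-k) := by rw [← pow_add]; congr 1; omega
        rw [h1, h2]; ring
      · rw [if_neg (by omega), if_neg h]; simp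
    have e2 := intervalIntegral.norm_integral_le_of_norm_le (μ := MeasureTheory.volume)
      (a := 0) (b := 2 * Real.pi)
      (f := fun t : ℝ => g (R * Complex.exp (t * Complex.I)) *
        (∑ j ∈ Finset.range (N+1), x j * (R * Complex.exp (t * Complex.I))^j)^2 *
          Complex.exp (((-N : ℤ):ℂ) * t * Complex.I))
      (g := fun t : ℝ => ‖∑ j ∈ Finset.range (N+1), x j * (R * Complex.exp (t * Complex.I))^j‖^2)
      (by positivity)
      (Filter.Eventually.of_forall fun t _ => by
        have : ((-N : ℤ):ℂ) * t * Complex.I = (((-N : ℤ):ℝ) * t : ℝ) * Complex.I := by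
          push_cast; ring
        rw [norm_mul, norm_mul, this, Complex.norm_exp_ofReal_mul_I, mul_one, norm_pow]
        exact mul_le_of_le_one_left (by positivity) (hb _ (hn t)))
      ((by fun_prop : Continuous _).intervalIntegrable _ _)
    rw [e1, cb_parseval x _ R hR0] at e2
    have hpi := Real.pi_pos
    have e3 : ‖2 * (Real.pi:ℂ) * R^N * S‖ = 2 * Real.pi * (R^N * ‖S‖) := by
      simp [abs_of_pos hR0, abs_of_pos hpi]; ring
    rw [e3] at e2
    have e4 := le_of_mul_le_mul_left e2 (by positivity)
    refine e4.trans (Finset.sum_le_sum fun j _ => ?_)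
    exact mul_le_of_le_one_right (by positivity) (pow_le_one₀ hR0.le hR1.le)
  have ht : Filter.Tendsto (fun R : ℝ => R^N * ‖S‖) (nhdsWithin 1 (Set.Iio 1)) (nhds (1^N * ‖S‖)) :=
    ((by fun_prop : Continuous (fun R : ℝ => R^N * ‖S‖)).tendsto 1).mono_left nhdsWithin_le_nhds
  rw [one_pow, one_mul] at ht
  refine le_of_tendsto ht ?_
  filter_upwards [Ioo_mem_nhdsLT (show (0:ℝ) < 1 by norm_num)] with R hR
  exact key R hR.1 hR.2

theorem cb_carlson (a : ℕ → ℂ) (g : ℂ → ℂ)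
    (hs : ∀ w : ℂ, ‖w‖ < 1 → HasSum (fun n => a n * w ^ n) (g w))
    (hb : ∀ w : ℂ, ‖w‖ < 1 → ‖g w‖ ≤ 1) (N : ℕ) (hN : 1 ≤ N) :
    ‖a N‖ + ∑ m ∈ Finset.range N, (if 2 * m < N then 1 else
      if 2 * m = N then 1 / (1 + ‖a 0‖) else 0) * ‖a m‖^2 ≤ 1 := by
  set A := ‖a 0‖ with hA
  have hA0 : 0 ≤ A := norm_nonneg _
  obtain ⟨η, hη, haN⟩ : ∃ η : ℂ, ‖η‖ = 1 ∧ a N = η * ‖a N‖ := by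
    by_cases h : a N = 0
    · exact ⟨1, by simp, by simp [h]⟩
    · have h' : (‖a N‖ : ℂ) ≠ 0 := by simpa using h
      refine ⟨a N / ‖a N‖, ?_, by field_simp⟩
      rw [norm_div]; simp [h]
  set v : ℕ → ℝ := fun m => if 2 * m < N then 1 else
      if 2 * m = N then 1 / (1 + A) else 0 with hv
  have hv0 : ∀ m, 0 ≤ v m := fun m => by
    simp only [hv]; split_ifs <;> positivity
  set y : ℕ → ℂ := fun k => η * (starRingEnd ℂ) (a (N - 1 - k)) * v (N - 1 - k) with hy
  set x : ℕ → ℂ := fun k => match k with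
    | 0 => 1
    | k + 1 => y k with hx
  have hx0 : x 0 = 1 := rfl
  have hx1 : ∀ k, x (k+1) = y k := fun k => rfl
  have hyn : ∀ k, ‖y k‖ ^ 2 = v (N-1-k)^2 * ‖a (N-1-k)‖^2 := fun k => by
    simp only [hy, norm_mul, hη, RCLike.norm_conj, Complex.norm_real, Real.norm_eq_abs,
      abs_of_nonneg (hv0 _)]; ring
  have hB := cb_bilin a g hs hb N x
  have hT : ∑ k ∈ Finset.range N, y k * a (N - 1 - k)
      = η * ((∑ m ∈ Finset.range N, v m * ‖a m‖^2 : ℝ) : ℂ) := by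
    rw [← Finset.sum_range_reflect (fun m => v m * ‖a m‖^2), Complex.ofReal_sum, Finset.mul_sum]
    refine Finset.sum_congr rfl fun k _ => ?_
    simp only [hy]
    push_cast
    rw [← Complex.conj_mul']; ring
  set D := ∑ j ∈ Finset.range N, ∑ k ∈ Finset.range N,
      if j + 1 + (k + 1) ≤ N then y j * y k * a (N - (j+1) - (k+1)) else 0 with hD
  have hS : (∑ j ∈ Finset.range (N+1), ∑ k ∈ Finset.range (N+1),
      if j + k ≤ N then x j * x k * a (N - j - k) else 0) =
      η * ((‖a N‖ + 2 * ∑ m ∈ Finset.range N, v m * ‖a m‖^2 : ℝ) : ℂ) + D := by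
    rw [Finset.sum_range_succ']
    simp only [Finset.sum_range_succ' _ N, hx0, hx1]
    rw [Finset.sum_add_distrib]
    have h1 : ∑ k ∈ Finset.range N, (if 0 + (k+1) ≤ N then 1 * y k * a (N - 0 - (k+1)) else 0)
       = ∑ k ∈ Finset.range N, y k * a (N - 1 - k) := by
      refine Finset.sum_congr rfl fun k hk => ?_
      rw [Finset.mem_range] at hk
      rw [if_pos (by omega)]
      have : N - 0 - (k+1) = N - 1 - k := by omega
      rw [this]; ring
    have h2 : ∑ k ∈ Finset.range N, (if (k+1) + 0 ≤ N then y k * 1 * a (N - (k+1) - 0) else 0)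
       = ∑ k ∈ Finset.range N, y k * a (N - 1 - k) := by
      refine Finset.sum_congr rfl fun k hk => ?_
      rw [Finset.mem_range] at hk
      rw [if_pos (by omega)]
      have : N - (k+1) - 0 = N - 1 - k := by omega
      rw [this]; ring
    rw [h1, h2, hT, ← hD]
    simp only [Nat.zero_add, Nat.zero_le, if_true, Nat.sub_zero]
    rw [haN]
    push_cast
    simp only [norm_mul, hη, Complex.norm_real, norm_norm]
    push_cast
    ring
  have hDn : ‖D‖ ≤ ∑ m ∈ Finset.range N, (if 2 * m = N then A * (v m)^2 * ‖a m‖^2 else 0) := by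
    rw [← Finset.sum_range_reflect]
    refine (norm_sum_le _ _).trans (Finset.sum_le_sum fun j hj => ?_)
    rw [Finset.mem_range] at hj
    rw [Finset.sum_eq_single j]
    · by_cases h : 2 * (N - 1 - j) = N
      · rw [if_pos (by omega), if_pos h]
        have : N - (j+1) - (j+1) = 0 := by omega
        rw [this, norm_mul, norm_mul, ← sq, hyn]
        apply le_of_eq; ring
      · rw [if_neg h]
        split_ifs with h2
        · have : y j = 0 := by
            simp only [hy, hv]
            rw [if_neg (by omega), if_neg h]; simp
          simp [this]
        · simp
    · intro k hk hkj
      rw [Finset.mem_range] at hk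
      split_ifs with h2
      · by_cases h3 : 2 * (N - 1 - j) ≤ N
        · have : y k = 0 := by
            simp only [hy, hv]
            rw [if_neg (by omega), if_neg (by omega)]; simp
          simp [this]
        · have : y j = 0 := by
            simp only [hy, hv]
            rw [if_neg (by omega), if_neg (by omega)]; simp
          simp [this]
      · rfl
    · intro h; exact absurd (Finset.mem_range.2 hj) h
  have hR : ∑ j ∈ Finset.range (N+1), ‖x j‖^2 = 1 + ∑ m ∈ Finset.range N, v m ^2 * ‖a m‖^2 := by
    rw [Finset.sum_range_succ', ← Finset.sum_range_reflect (fun m => v m ^2 * ‖a m‖^2)]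
    simp only [hx0, hx1, hyn]
    simp [add_comm]
  rw [hS, hR] at hB
  have h3 : ‖η * ((‖a N‖ + 2 * ∑ m ∈ Finset.range N, v m * ‖a m‖^2 : ℝ) : ℂ)‖ =
      ‖a N‖ + 2 * ∑ m ∈ Finset.range N, v m * ‖a m‖^2 := by
    rw [norm_mul, hη, one_mul, Complex.norm_real, Real.norm_of_nonneg]
    have := Finset.sum_nonneg (s := Finset.range N) (f := fun m => v m * ‖a m‖^2)
      (fun m _ => mul_nonneg (hv0 m) (by positivity))
    positivity
  have h4 := norm_sub_le_norm_add (η * ((‖a N‖ + 2 * ∑ m ∈ Finset.range N, v m * ‖a m‖^2 : ℝ) : ℂ)) D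
  rw [h3] at h4
  have h5 : 2 * ∑ m ∈ Finset.range N, v m * ‖a m‖^2 - ∑ m ∈ Finset.range N, v m ^2 * ‖a m‖^2
     - ∑ m ∈ Finset.range N, (if 2 * m = N then A * (v m)^2 * ‖a m‖^2 else 0)
     = ∑ m ∈ Finset.range N, v m * ‖a m‖^2 := by
    rw [Finset.mul_sum, ← Finset.sum_sub_distrib, ← Finset.sum_sub_distrib]
    refine Finset.sum_congr rfl fun m _ => ?_
    by_cases h : 2 * m = N
    · have : v m = 1 / (1 + A) := by
        simp only [hv]; rw [if_neg (by omega), if_pos h]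
      rw [if_pos h, this]
      have : 1 + A ≠ 0 := by positivity
      field_simp
      ring
    · rw [if_neg h]
      by_cases h' : 2 * m < N
      · have : v m = 1 := by
          simp only [hv]; rw [if_pos h']
        rw [this]; ring
      · have : v m = 0 := by
          simp only [hv]; rw [if_neg h', if_neg h]
        rw [this]; ring
  linarith

theorem cb_main (a : ℕ → ℂ) (g : ℂ → ℂ)
    (hs : ∀ w : ℂ, ‖w‖ < 1 → HasSum (fun n => a n * w ^ n) (g w))
    (hb : ∀ w : ℂ, ‖w‖ < 1 → ‖g w‖ ≤ 1) (r : ℝ) (hr0 : 0 ≤ r) (hr : r ≤ 1 / (2 + ‖a 0‖)) :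
    (∑' n : ℕ, ‖a n‖ * r ^ n) + (1 / (1 + ‖a 0‖) + r / (1 - r))
        * ∑' n : ℕ, ‖a (n + 1)‖ ^ 2 * r ^ (2 * (n + 1)) ≤ 1 := by
  set A := ‖a 0‖ with hA
  have hA0 : 0 ≤ A := norm_nonneg _
  have hA1 : A ≤ 1 := by
    have h := cb_carlson a g hs hb 1 le_rfl
    simp at h
    have := norm_nonneg (a 1)
    rw [← hA] at h
    nlinarith
  rw [le_div_iff₀ (by positivity)] at hr
  have hr1 : r < 1 := by nlinarith
  have hr1' : 0 < 1 - r := by linarith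
  set K := 1 / (1 + A) + r / (1 - r) with hK
  have hK0 : 0 < K := by positivity
  have hsum : Summable (fun n => ‖a n‖ * r ^ n) := by
    have := (hs r (by simpa [abs_of_nonneg hr0] using hr1)).summable.norm
    simpa [abs_of_nonneg hr0] using this
  set V : ℕ → ℕ → ℝ := fun N m => (if 2 * m < N then 1 else
      if 2 * m = N then 1 / (1 + A) else 0) with hV
  have hV0 : ∀ N m, 0 ≤ V N m := fun N m => by
    simp only [hV]; split_ifs <;> positivity
  have hVs : ∀ m, HasSum (fun N => V N m * r^N) (K * r^(2*m)) := by
    intro m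
    rw [← hasSum_nat_add_iff' (2*m)]
    have h0 : ∑ i ∈ Finset.range (2*m), V i m * r^i = 0 := by
      refine Finset.sum_eq_zero fun i hi => ?_
      rw [Finset.mem_range] at hi
      simp only [hV]; rw [if_neg (by omega), if_neg (by omega)]; simp
    rw [h0, sub_zero, ← hasSum_nat_add_iff' 1]
    have h1 := (hasSum_geometric_of_lt_one hr0 hr1).mul_left (r^(2*m+1))
    have e1 : (fun n => V (n + 1 + 2*m) m * r^(n + 1 + 2*m)) = fun i => r^(2*m+1) * r^i := by
      funext n
      simp only [hV]; rw [if_pos (by omega)]; ring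
    have e2 : K * r ^ (2 * m) - ∑ i ∈ Finset.range 1, V (i + 2 * m) m * r ^ (i + 2 * m)
        = r ^ (2 * m + 1) * (1 - r)⁻¹ := by
      rw [Finset.sum_range_one]
      simp only [hV, hK]
      rw [if_neg (by omega), if_pos (by omega), zero_add, pow_succ]
      ring
    rw [e1, e2]
    exact h1
  have hg := (hasSum_geometric_of_lt_one hr0 hr1)
  have hg1 : HasSum (fun n => (1 - A^2) * r^(n+1)) ((1 - A^2) * (r / (1-r))) := by
    have := hg.mul_left ((1 - A^2) * r)
    have e1 : (fun n => (1 - A ^ 2) * r ^ (n + 1)) = fun i => (1 - A ^ 2) * r * r ^ i := by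
      funext n; ring
    rw [e1, div_eq_mul_inv, ← mul_assoc]
    exact this
  have hbound : ∀ M : ℕ, ∑ m ∈ Finset.range M, ‖a (m+1)‖^2 * r^(2*(m+1))
      ≤ ((1 - A) - ∑' n : ℕ, ‖a (n+1)‖ * r ^ (n+1)) / K := by
    intro M
    rw [le_div_iff₀ hK0]
    have h1 : HasSum (fun N => ∑ m ∈ Finset.range M, ‖a (m+1)‖^2 * (V N (m+1) * r^N))
      (∑ m ∈ Finset.range M, ‖a (m+1)‖^2 * (K * r^(2*(m+1)))) :=
      hasSum_sum fun m _ => (hVs (m+1)).mul_left _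
    rw [← hasSum_nat_add_iff' 1] at h1
    have h2 : ∑ i ∈ Finset.range 1, ∑ m ∈ Finset.range M, ‖a (m+1)‖^2 * (V i (m+1) * r^i) = 0 := by
      simp [hV]
    rw [h2, sub_zero] at h1
    have h3 := (((summable_nat_add_iff 1).2 hsum).hasSum).add h1
    have h4 := hasSum_le (fun n => ?_) h3 hg1
    · have h5 : ∑ m ∈ Finset.range M, ‖a (m+1)‖^2 * (K * r^(2*(m+1))) =
        (∑ m ∈ Finset.range M, ‖a (m+1)‖^2 * r^(2*(m+1))) * K := by
        rw [Finset.sum_mul]; refine Finset.sum_congr rfl fun m _ => by ring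
      rw [h5] at h4
      have h6 : (1 - A^2) * (r / (1-r)) ≤ 1 - A := by
        rw [← mul_div_assoc, div_le_iff₀ hr1']
        nlinarith [mul_nonneg (sub_nonneg.2 hA1) (show 0 ≤ 1 - r * (2 + A) by linarith)]
      linarith
    · have hc := cb_carlson a g hs hb (n+1) (by omega)
      rw [Finset.sum_range_succ'] at hc
      have h5 : ∑ m ∈ Finset.range M, V (n+1) (m+1) * ‖a (m+1)‖^2 ≤
          ∑ m ∈ Finset.range n, V (n+1) (m+1) * ‖a (m+1)‖^2 := by
        refine (Finset.sum_le_sum_of_subset_of_nonneg (Finset.range_mono (le_max_left M n))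
          (fun m _ _ => mul_nonneg (hV0 _ _) (by positivity))).trans (le_of_eq ?_)
        symm
        refine Finset.sum_subset (Finset.range_mono (le_max_right M n)) fun m _ hm => ?_
        rw [Finset.mem_range] at hm
        simp only [hV]; rw [if_neg (by omega), if_neg (by omega)]; simp
      have h6 : ‖a (n+1)‖ + ∑ m ∈ Finset.range n, V (n+1) (m+1) * ‖a (m+1)‖^2 ≤ 1 - A^2 := by
        rw [if_pos (by omega)] at hc
        simp only [hV]; linarith
      have h7 : ∑ m ∈ Finset.range M, ‖a (m+1)‖^2 * (V (n+1) (m+1) * r^(n+1)) =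
        (∑ m ∈ Finset.range M, V (n+1) (m+1) * ‖a (m+1)‖^2) * r^(n+1) := by
        rw [Finset.sum_mul]; refine Finset.sum_congr rfl fun m _ => by ring
      show ‖a (n+1)‖ * r^(n+1) + ∑ m ∈ Finset.range M, ‖a (m+1)‖^2 * (V (n+1) (m+1) * r^(n+1)) ≤ _
      rw [h7, ← add_mul]
      exact mul_le_mul_of_nonneg_right (by linarith) (by positivity)
  have hfin := Real.tsum_le_of_sum_range_le (fun n => by positivity) hbound
  rw [le_div_iff₀ hK0] at hfin
  rw [hsum.tsum_eq_zero_add]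
  simp only [pow_zero, mul_one]
  linarith

/-- Corollary 1(a): let `f(z) = ∑_{n=0}^∞ a_{pn} z^{pn}` be a bounded analytic
self-map of the unit disk (here `a n` denotes the coefficient `a_{pn}`).
Then for `0 ≤ r` with `r^p ≤ 1/(2+|a₀|)`:
`∑_{n=0}^∞ |a_{pn}| r^{pn}
  + (1/(1+|a₀|) + r^p/(1-r^p)) ∑_{n=1}^∞ |a_{pn}|² r^{2pn} ≤ 1`. -/
theorem stmt9 (p : ℕ) (hp : 0 < p) (f : ℂ → ℂ) (a : ℕ → ℂ)
    (hf : DifferentiableOn ℂ f (Metric.ball 0 1))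
    (hb : ∀ z ∈ Metric.ball (0 : ℂ) 1, ‖f z‖ ≤ 1)
    (hs : ∀ z ∈ Metric.ball (0 : ℂ) 1, HasSum (fun n => a n * z ^ (p * n)) (f z))
    (r : ℝ) (hr0 : 0 ≤ r) (hr : r ^ p ≤ 1 / (2 + ‖a 0‖)) :
    (∑' n : ℕ, ‖a n‖ * r ^ (p * n))
      + (1 / (1 + ‖a 0‖) + r ^ p / (1 - r ^ p))
        * ∑' n : ℕ, ‖a (n + 1)‖ ^ 2 * r ^ (2 * p * (n + 1))
      ≤ 1 := by
  have h : ∀ w : ℂ, ‖w‖ < 1 → ∃ z ∈ Metric.ball (0:ℂ) 1, z ^ p = w := by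
    intro w hw
    obtain ⟨z, hz⟩ := IsAlgClosed.exists_pow_nat_eq w hp
    refine ⟨z, ?_, hz⟩
    rw [mem_ball_zero_iff]
    rw [← hz, norm_pow] at hw
    by_contra hcon
    exact absurd (one_le_pow₀ (not_lt.1 hcon)) (not_le.2 hw)
  have hS : ∀ w : ℂ, ‖w‖ < 1 → HasSum (fun n => a n * w ^ n) (∑' n, a n * w ^ n) ∧
      ‖∑' n, a n * w ^ n‖ ≤ 1 := by
    intro w hw
    obtain ⟨z, hz, hzw⟩ := h w hw
    have h1 := hs z hz
    simp only [pow_mul, hzw] at h1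
    rw [h1.tsum_eq]
    exact ⟨h1, hb z hz⟩
  have hm := cb_main a (fun w => ∑' n, a n * w ^ n) (fun w hw => (hS w hw).1)
    (fun w hw => (hS w hw).2) (r ^ p) (by positivity) hr
  have e : ∀ n : ℕ, r ^ (2 * p * (n + 1)) = (r ^ p) ^ (2 * (n + 1)) := fun n => by
    rw [← pow_mul]; congr 1; ring
  simp only [e, pow_mul r p]
  exact hm
end

section
/- Let p be a positive integer and suppose f(z) = ∑_{n=0}^∞ a_{pn} z^{pn} on 𝔻. Then for every r with 0 ≤ r ≤ (1/2)^{1/p}: |a_0|² + ∑_{n=1}^∞ |a_{pn}| r^{pn} + (1/(1+|a_0|) + r^p/(1-r^p)) · ∑_{n=1}^∞ |a_{pn}|² r^{2pn} ≤ 1. -/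
section
open Finset Filter Topology

/-- Exponential monomials on the circle. -/
noncomputable def bohrE (n : ℕ) : C(AddCircle (1:ℝ), ℂ) := fourier (n : ℤ)

lemma bohrE_mul (i j : ℕ) : bohrE i * bohrE j = bohrE (i + j) := by
  ext x
  simp only [bohrE, ContinuousMap.mul_apply, Nat.cast_add, fourier_add]

lemma bohrE_apply (n : ℕ) (x : AddCircle (1:ℝ)) : bohrE n x = (bohrE 1 x) ^ n := by
  induction n with
  | zero => simp [bohrE]
  | succ k ih => rw [← bohrE_mul, ContinuousMap.mul_apply, ih, pow_succ]

lemma bohrE_norm (n : ℕ) : ‖bohrE n‖ = 1 := by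
  have : Fact ((0:ℝ) < 1) := ⟨one_pos⟩
  exact fourier_norm _

lemma bohrE_norm_apply (x : AddCircle (1:ℝ)) : ‖bohrE 1 x‖ = 1 := by
  simp only [bohrE, fourier_apply]
  exact Circle.norm_coe _

/-- Contractivity for truncated series at radius one, absolutely summable coefficients. -/
lemma contr_aux (b u : ℕ → ℂ) (N : ℕ) (hbs : Summable (fun n => ‖b n‖))
    (hu : ∀ j, N ≤ j → u j = 0)
    (hb1 : ∀ z : ℂ, ‖z‖ = 1 → ‖∑' n, b n * z ^ n‖ ≤ 1) :
    ∑ k ∈ range N, ‖∑ i ∈ range (k+1), b i * u (k - i)‖ ^ 2 ≤ ∑ j ∈ range N, ‖u j‖ ^ 2 := by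
  have : Fact ((0:ℝ) < 1) := ⟨one_pos⟩
  have hus : Summable (fun n => ‖u n‖) := by
    apply summable_of_ne_finset_zero (s := range N)
    intro j hj
    simp at hj
    simp [hu j hj]
  have h1 : Summable (fun n => ‖b n • bohrE n‖) := by simpa [norm_smul, bohrE_norm] using hbs
  have h2 : Summable (fun n => ‖u n • bohrE n‖) := by simpa [norm_smul, bohrE_norm] using hus
  set c : ℕ → ℂ := fun k => ∑ i ∈ range (k+1), b i * u (k - i) with hc
  have hterm : ∀ n, ∑ kl ∈ antidiagonal n, (b kl.1 • bohrE kl.1) * (u kl.2 • bohrE kl.2)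
      = c n • bohrE n := by
    intro n
    rw [hc]
    simp only
    rw [← Finset.Nat.sum_antidiagonal_eq_sum_range_succ (fun i j => b i * u j), Finset.sum_smul]
    apply Finset.sum_congr rfl
    intro kl hkl
    rw [HasAntidiagonal.mem_antidiagonal] at hkl
    rw [smul_mul_smul_comm, bohrE_mul, hkl]
  have hprod := tsum_mul_tsum_eq_tsum_sum_antidiagonal_of_summable_norm h1 h2
  have hsum := (summable_norm_sum_mul_antidiagonal_of_summable_norm h1 h2).of_norm
  simp only [hterm] at hprod hsum
  have hH := hsum.hasSum
  rw [← hprod] at hH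
  set B := ∑' n, b n • bohrE n with hB
  have hU : ∑' n, u n • bohrE n = ∑ n ∈ range N, u n • bohrE n := by
    apply tsum_eq_sum
    intro j hj
    simp at hj
    simp [hu j hj]
  rw [hU] at hH
  set U := ∑ n ∈ range N, u n • bohrE n with hUdef
  let L := ContinuousMap.toLp (E := ℂ) 2 (AddCircle.haarAddCircle (T := 1)) ℂ
  have hBx : ∀ x, ‖B x‖ ≤ 1 := by
    intro x
    have hx : HasSum (fun n => b n * (bohrE 1 x) ^ n) (B x) := by
      have := h1.of_norm.hasSum.map (ContinuousMap.evalCLM ℂ x) (ContinuousMap.evalCLM ℂ x).continuous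
      change HasSum _ (B x) at this
      convert this using 1
      ext n
      simp [bohrE_apply n x]
    rw [← hx.tsum_eq]
    exact hb1 _ (bohrE_norm_apply x)
  have hle : ‖L (B * U)‖ ≤ ‖L U‖ := by
    apply MeasureTheory.Lp.norm_le_norm_of_ae_le
    filter_upwards [ContinuousMap.coeFn_toLp (p := 2) (𝕜 := ℂ) (AddCircle.haarAddCircle (T := 1)) (B * U),
      ContinuousMap.coeFn_toLp (p := 2) (𝕜 := ℂ) (AddCircle.haarAddCircle (T := 1)) U] with x hx hy
    rw [hx, hy, ContinuousMap.mul_apply, norm_mul]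
    exact mul_le_of_le_one_left (norm_nonneg _) (hBx x)
  have horth : Orthonormal ℂ (fun n : ℕ => L (bohrE n)) :=
    (orthonormal_fourier (T := 1)).comp (fun n : ℕ => (n : ℤ)) Nat.cast_injective
  have hUn : ‖L U‖ ^ 2 = ∑ j ∈ range N, ‖u j‖ ^ 2 := by
    have hLU : L U = ∑ n ∈ range N, u n • L (bohrE n) := by
      rw [hUdef, map_sum]; simp only [map_smul]
    have h3 := horth.inner_sum u u (range N)
    rw [← hLU, inner_self_eq_norm_sq_to_K] at h3
    have h4 : ((‖L U‖ ^ 2 : ℝ) : ℂ) = ((∑ j ∈ range N, ‖u j‖ ^ 2 : ℝ) : ℂ) := by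
      push_cast
      refine Eq.trans h3 ?_
      apply Finset.sum_congr rfl
      intro j _
      exact Complex.conj_mul' _
    exact_mod_cast h4
  have hin : ∀ k, inner ℂ (L (bohrE k)) (L (B * U)) = c k := by
    intro k
    have h5 := (hH.map L L.continuous).map (innerSL ℂ (L (bohrE k))) (innerSL ℂ (L (bohrE k))).continuous
    have h6 := hasSum_ite_eq k (c k)
    refine HasSum.unique h5 ?_
    convert h6 using 1
    ext n
    simp only [Function.comp_apply, map_smul, innerSL_apply_apply, smul_eq_mul]
    rw [orthonormal_iff_ite.mp horth k n]
    by_cases h : n = k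
    · simp [h]
    · simp [h, Ne.symm h]
  have hbes := horth.sum_inner_products_le (L (B * U)) (s := range N)
  simp only [hin] at hbes
  calc _ ≤ ‖L (B * U)‖ ^ 2 := hbes
    _ ≤ ‖L U‖ ^ 2 := by gcongr
    _ = _ := hUn

lemma contr (a : ℕ → ℂ) (F : ℂ → ℂ) (hs : ∀ w : ℂ, ‖w‖ < 1 → HasSum (fun n => a n * w ^ n) (F w))
    (hb : ∀ w : ℂ, ‖w‖ < 1 → ‖F w‖ ≤ 1) (v : ℕ → ℂ) (m : ℕ) :
    ∑ k ∈ range (m+1), ‖∑ i ∈ range (k+1), a i * v (m - k + i)‖ ^ 2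
      ≤ ∑ i ∈ range (m+1), ‖v i‖ ^ 2 := by
  set u : ℕ → ℂ := fun j => if j < m + 1 then v (m - j) else 0 with hu
  have key : ∀ ρ : ℝ, 0 < ρ → ρ < 1 →
      ∑ k ∈ range (m+1), ‖∑ i ∈ range (k+1), (a i * ρ ^ i) * u (k - i)‖ ^ 2
        ≤ ∑ j ∈ range (m+1), ‖u j‖ ^ 2 := by
    intro ρ h0 h1
    have hn : ∀ z : ℂ, ‖z‖ = 1 → ‖(ρ:ℂ) * z‖ < 1 := by
      intro z hz
      simp [hz, abs_of_pos h0, h1]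
    apply contr_aux
    · have := (hs ρ (by simpa using hn 1 (by simp))).summable.norm
      exact this
    · intro j hj
      simp only [hu]
      rw [if_neg (by omega)]
    · intro z hz
      have := hs _ (hn z hz)
      simp only [mul_pow, ← mul_assoc] at this
      rw [this.tsum_eq]
      exact hb _ (hn z hz)
  have lim : Tendsto (fun ρ : ℝ => ∑ k ∈ range (m+1), ‖∑ i ∈ range (k+1), (a i * (ρ:ℂ) ^ i) * u (k - i)‖ ^ 2)
      (𝓝[<] 1) (𝓝 (∑ k ∈ range (m+1), ‖∑ i ∈ range (k+1), (a i * ((1:ℝ):ℂ) ^ i) * u (k - i)‖ ^ 2)) := by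
    apply Tendsto.mono_left _ nhdsWithin_le_nhds
    apply Continuous.tendsto (f := fun ρ : ℝ => ∑ k ∈ range (m+1), ‖∑ i ∈ range (k+1), (a i * (ρ:ℂ) ^ i) * u (k - i)‖ ^ 2)
    fun_prop
  have h := le_of_tendsto lim (b := ∑ j ∈ range (m+1), ‖u j‖ ^ 2) (by
    filter_upwards [Ioo_mem_nhdsLT (show (0:ℝ) < 1 by norm_num)] with ρ hρ
    exact key ρ hρ.1 hρ.2)
  have e1 : ∑ j ∈ range (m+1), ‖u j‖ ^ 2 = ∑ i ∈ range (m+1), ‖v i‖ ^ 2 := by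
    rw [← Finset.sum_range_reflect]
    apply Finset.sum_congr rfl
    intro j hj
    simp only [mem_range] at hj
    simp only [hu]
    rw [if_pos (by omega)]
    congr 3
    omega
  rw [e1] at h
  refine le_trans (le_of_eq ?_) h
  apply Finset.sum_congr rfl
  intro k hk
  congr 2
  apply Finset.sum_congr rfl
  intro i hi
  simp only [mem_range] at hk hi
  simp only [hu]
  rw [if_pos (by omega)]
  have : m - (k - i) = m - k + i := by omega
  rw [this]
  simp

lemma exists_phase (c : ℂ) : ∃ ε : ℂ, ‖ε‖ = 1 ∧ ∀ t : ℝ, 0 ≤ t → ‖c + ε * t‖ = ‖c‖ + t := by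
  by_cases h : c = 0
  · exact ⟨1, by simp, fun t ht => by simp [h, abs_of_nonneg ht]⟩
  · have hc : (‖c‖ : ℂ) ≠ 0 := by simpa using h
    refine ⟨c / ‖c‖, by simp [h], fun t ht => ?_⟩
    have : c + c / ‖c‖ * t = c / ‖c‖ * ((‖c‖ + t : ℝ) : ℂ) := by
      push_cast; field_simp
    rw [this, norm_mul, Complex.norm_real, Real.norm_of_nonneg (by positivity)]
    simp [h]

lemma carlson_odd_s10 (a : ℕ → ℂ) (F : ℂ → ℂ) (hs : ∀ w : ℂ, ‖w‖ < 1 → HasSum (fun n => a n * w ^ n) (F w))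
    (hb : ∀ w : ℂ, ‖w‖ < 1 → ‖F w‖ ≤ 1) (n : ℕ) :
    ‖a (2*n+1)‖ + ∑ k ∈ range (n+1), ‖a k‖ ^ 2 ≤ 1 := by
  obtain ⟨ε, hε, hph⟩ := exists_phase (a (2*n+1))
  set b := ∑ k ∈ range (n+1), ‖a k‖ ^ 2 with hbdef
  have hb0 : 0 ≤ b := by positivity
  let v : ℕ → ℂ := fun i => if i < n+1 then ε * (starRingEnd ℂ) (a i) else if i = 2*n+1 then 1 else 0
  have hc := contr a F hs hb v (2*n+1)
  have hr : ∑ i ∈ range (2*n+1+1), ‖v i‖ ^ 2 = b + 1 := by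
    rw [Finset.sum_range_succ, show 2*n+1 = (n+1) + n by ring, Finset.sum_range_add]
    have e1 : ∑ x ∈ range n, ‖v (n + 1 + x)‖ ^ 2 = 0 := by
      apply Finset.sum_eq_zero
      intro x hx
      simp only [mem_range] at hx
      simp only [v]
      rw [if_neg (by omega), if_neg (by omega)]; simp
    have e2 : ∑ x ∈ range (n+1), ‖v x‖ ^ 2 = b := by
      apply Finset.sum_congr rfl
      intro x hx
      simp only [mem_range] at hx
      simp only [v]
      rw [if_pos (by omega)]; simp [hε]
    have e3 : v (n+1+n) = 1 := by
      simp only [v]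
      rw [if_neg (by omega), if_pos (by omega)]
    rw [e1, e2, e3]; simp
  have hlow : ∀ k ∈ range (n+1), ∑ i ∈ range (k+1), a i * v (2*n+1 - k + i) = a k := by
    intro k hk
    simp only [mem_range] at hk
    rw [Finset.sum_eq_single k]
    · simp only [v]
      rw [if_neg (by omega), if_pos (by omega)]; simp
    · intro i hi hik
      simp only [mem_range] at hi
      simp only [v]
      rw [if_neg (by omega), if_neg (by omega)]; simp
    · simp
  have htop : ∑ i ∈ range (2*n+1+1), a i * v (2*n+1 - (2*n+1) + i) = a (2*n+1) + ε * b := by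
    rw [Finset.sum_range_succ]
    simp only [Nat.sub_self, zero_add]
    have e3 : v (2*n+1) = 1 := by
      simp only [v]
      split_ifs <;> first | rfl | omega
    rw [e3]
    rw [show range (2*n+1) = range ((n+1)+n) by congr 1; ring, Finset.sum_range_add]
    have e1 : ∑ x ∈ range n, a (n+1+x) * v (n + 1 + x) = 0 := by
      apply Finset.sum_eq_zero
      intro x hx
      simp only [mem_range] at hx
      simp only [v]
      rw [if_neg (by omega), if_neg (by omega)]; simp
    have e2 : ∑ x ∈ range (n+1), a x * v x = ε * b := by
      rw [hbdef]; push_cast; rw [Finset.mul_sum]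
      apply Finset.sum_congr rfl
      intro x hx
      simp only [mem_range] at hx
      simp only [v]
      rw [if_pos (by omega), ← Complex.mul_conj']; ring
    rw [e1, e2]; ring
  rw [Finset.sum_range_succ, hr, htop, hph b hb0] at hc
  have h7 : b ≤ ∑ k ∈ range (2*n+1), ‖∑ i ∈ range (k+1), a i * v (2*n+1 - k + i)‖ ^ 2 := by
    calc b = ∑ k ∈ range (n+1), ‖∑ i ∈ range (k+1), a i * v (2*n+1 - k + i)‖ ^ 2 :=
          Finset.sum_congr rfl (fun k hk => by rw [hlow k hk])
      _ ≤ _ := by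
          apply Finset.sum_le_sum_of_subset_of_nonneg
          · intro x hx; simp only [mem_range] at *; omega
          · intros; positivity
  have h8 : (‖a (2*n+1)‖ + b) ^ 2 ≤ 1 := by linarith
  exact (sq_le_one_iff₀ (by positivity)).mp h8

lemma carlson_even_s10 (a : ℕ → ℂ) (F : ℂ → ℂ) (hs : ∀ w : ℂ, ‖w‖ < 1 → HasSum (fun n => a n * w ^ n) (F w))
    (hb : ∀ w : ℂ, ‖w‖ < 1 → ‖F w‖ ≤ 1) (n : ℕ) (hn : 0 < n) :
    ‖a (2*n)‖ + ∑ k ∈ range n, ‖a k‖ ^ 2 + 1 / (1 + ‖a 0‖) * ‖a n‖ ^ 2 ≤ 1 := by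
  obtain ⟨ε, hε, hph⟩ := exists_phase (a (2*n))
  set b := ∑ k ∈ range n, ‖a k‖ ^ 2 with hbdef
  have hb0 : 0 ≤ b := by positivity
  set γ : ℝ := 1 / (1 + ‖a 0‖) with hγ
  have hγ0 : 0 ≤ γ := by positivity
  have hγ1 : γ * (1 + ‖a 0‖) = 1 := by rw [hγ]; field_simp
  let v : ℕ → ℂ := fun i => if i < n then ε * (starRingEnd ℂ) (a i) else
    if i = n then ε * (starRingEnd ℂ) (a n) * γ else if i = 2*n then 1 else 0
  have hvn : v n = ε * (starRingEnd ℂ) (a n) * γ := by simp [v]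
  have hv2 : v (2*n) = 1 := by
    simp only [v]
    split_ifs <;> first | rfl | omega
  have hc := contr a F hs hb v (2*n)
  obtain ⟨l, rfl⟩ : ∃ l, n = l + 1 := ⟨n-1, by omega⟩
  have hr : ∑ i ∈ range (2*(l+1)+1), ‖v i‖ ^ 2 = b + (γ * ‖a (l+1)‖) ^ 2 + 1 := by
    rw [Finset.sum_range_succ, hv2, show range (2*(l+1)) = range ((l+1+1) + l) by congr 1; ring,
      Finset.sum_range_add, Finset.sum_range_succ, hvn]
    have e1 : ∑ x ∈ range l, ‖v (l + 1 + 1 + x)‖ ^ 2 = 0 := by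
      apply Finset.sum_eq_zero
      intro x hx
      simp only [mem_range] at hx
      simp only [v]
      rw [if_neg (by omega), if_neg (by omega), if_neg (by omega)]; simp
    have e2 : ∑ x ∈ range (l+1), ‖v x‖ ^ 2 = b := by
      apply Finset.sum_congr rfl
      intro x hx
      simp only [mem_range] at hx
      simp only [v]
      rw [if_pos (by omega)]; simp [hε]
    rw [e1, e2]; simp [hε, abs_of_nonneg hγ0]; ring
  have hlow : ∀ k ∈ range (l+1), ∑ i ∈ range (k+1), a i * v (2*(l+1) - k + i) = a k := by
    intro k hk
    simp only [mem_range] at hk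
    rw [Finset.sum_eq_single k]
    · rw [show 2*(l+1) - k + k = 2*(l+1) by omega, hv2, mul_one]
    · intro i hi hik
      simp only [mem_range] at hi
      simp only [v]
      rw [if_neg (by omega), if_neg (by omega), if_neg (by omega)]; simp
    · simp
  have hmid : ∑ i ∈ range (l+1+1), a i * v (2*(l+1) - (l+1) + i)
      = a (l+1) + a 0 * (ε * (starRingEnd ℂ) (a (l+1)) * γ) := by
    rw [Finset.sum_range_succ, Finset.sum_range_succ', show 2*(l+1) - (l+1) + (l+1) = 2*(l+1) by omega,
      hv2, show 2*(l+1) - (l+1) + 0 = l+1 by omega, hvn]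
    have e1 : ∑ i ∈ range l, a (i+1) * v (2*(l+1) - (l+1) + (i+1)) = 0 := by
      apply Finset.sum_eq_zero
      intro x hx
      simp only [mem_range] at hx
      simp only [v]
      rw [if_neg (by omega), if_neg (by omega), if_neg (by omega)]; simp
    rw [e1]; ring
  have htop : ∑ i ∈ range (2*(l+1)+1), a i * v (2*(l+1) - (2*(l+1)) + i)
      = a (2*(l+1)) + ε * ((b + γ * ‖a (l+1)‖^2 : ℝ) : ℂ) := by
    rw [Finset.sum_range_succ]
    simp only [Nat.sub_self, zero_add]
    rw [hv2]
    rw [show range (2*(l+1)) = range ((l+1+1)+l) by congr 1; ring, Finset.sum_range_add,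
      Finset.sum_range_succ, hvn]
    have e1 : ∑ x ∈ range l, a (l+1+1+x) * v (l + 1+1 + x) = 0 := by
      apply Finset.sum_eq_zero
      intro x hx
      simp only [mem_range] at hx
      simp only [v]
      rw [if_neg (by omega), if_neg (by omega), if_neg (by omega)]; simp
    have e2 : ∑ x ∈ range (l+1), a x * v x = ε * b := by
      rw [hbdef]; push_cast; rw [Finset.mul_sum]
      apply Finset.sum_congr rfl
      intro x hx
      simp only [mem_range] at hx
      simp only [v]
      rw [if_pos (by omega), ← Complex.mul_conj']; ring
    rw [e1, e2]; push_cast; rw [← Complex.mul_conj']; ring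
  rw [Finset.sum_range_succ, hr, htop, hph _ (by positivity)] at hc
  have hmidn : γ * ‖a (l+1)‖ ≤ ‖a (l+1) + a 0 * (ε * (starRingEnd ℂ) (a (l+1)) * γ)‖ := by
    have h1 : ‖a (l+1)‖ - ‖a 0 * (ε * (starRingEnd ℂ) (a (l+1)) * γ)‖ ≤ _ :=
      norm_sub_le_norm_add (a (l+1)) (a 0 * (ε * (starRingEnd ℂ) (a (l+1)) * γ))
    refine le_trans (le_of_eq ?_) h1
    simp only [norm_mul, hε, RCLike.norm_conj, Complex.norm_real, Real.norm_of_nonneg hγ0]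
    linear_combination ‖a (l+1)‖ * hγ1
  have h7 : b + (γ * ‖a (l+1)‖)^2 ≤
      ∑ k ∈ range (2*(l+1)), ‖∑ i ∈ range (k+1), a i * v (2*(l+1) - k + i)‖ ^ 2 := by
    calc b + (γ * ‖a (l+1)‖)^2
        ≤ ∑ k ∈ range (l+1+1), ‖∑ i ∈ range (k+1), a i * v (2*(l+1) - k + i)‖ ^ 2 := by
          rw [Finset.sum_range_succ, hmid]
          have : b = ∑ k ∈ range (l+1), ‖∑ i ∈ range (k+1), a i * v (2*(l+1) - k + i)‖ ^ 2 :=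
            Finset.sum_congr rfl (fun k hk => by rw [hlow k hk])
          rw [← this]
          gcongr
      _ ≤ _ := by
          apply Finset.sum_le_sum_of_subset_of_nonneg
          · intro x hx; simp only [mem_range] at *; omega
          · intros; positivity
  have h8 : (‖a (2*(l+1))‖ + (b + γ * ‖a (l+1)‖^2)) ^ 2 ≤ 1 := by linarith
  have := (sq_le_one_iff₀ (by positivity)).mp h8
  linarith

lemma bohr_partial (q : ℕ → ℝ) (γ x : ℝ) (hx0 : 0 ≤ x) (hx : x ≤ 1/2)
    (hodd : ∀ n, q (2*n+1) + ∑ k ∈ range (n+1), q k ^ 2 ≤ 1)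
    (heven : ∀ n, 0 < n → q (2*n) + ∑ k ∈ range n, q k ^ 2 + γ * q n ^ 2 ≤ 1) (K : ℕ) :
    ∑ k ∈ range (2*K), q (k+1) * x^(k+1)
      + (γ + x/(1-x)) * ∑ k ∈ range K, q (k+1)^2 * x^(2*(k+1))
      + (1 - ∑ k ∈ range (K+1), q k ^ 2) * (x^(2*K+1)/(1-x)) ≤ (1 - q 0 ^2) * (x / (1-x)) := by
  have h1x : 1 - x ≠ 0 := by linarith
  induction K with
  | zero => simp
  | succ K ih =>
    refine le_trans ?_ ih
    have ho := mul_le_mul_of_nonneg_right (hodd K) (pow_nonneg hx0 (2*K+1))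
    have he := mul_le_mul_of_nonneg_right (heven (K+1) (by omega)) (pow_nonneg hx0 (2*K+2))
    rw [show 2*(K+1) = 2*K+1+1 by ring] at he ⊢
    rw [Finset.sum_range_succ _ (2*K+1), Finset.sum_range_succ _ (2*K), Finset.sum_range_succ _ K,
      Finset.sum_range_succ _ (K+1)]
    set S := ∑ k ∈ range (K+1), q k ^ 2
    have e : x^(2*K+1)/(1-x) = x^(2*K+1) + x^(2*K+2) + x^(2*K+3)/(1-x) := by
      field_simp; ring
    have e2 : x/(1-x) * x^(2*K+2) = x^(2*K+3)/(1-x) := by ring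
    rw [e, show 2*K+1+1+1 = 2*K+3 by ring, show 2*(K+1) = 2*K+2 by ring, mul_add]
    have e3 : (γ + x/(1-x)) * (q (K+1)^2 * x^(2*K+2)) =
      γ * q (K+1)^2 * x^(2*K+2) + q (K+1)^2 * (x^(2*K+3)/(1-x)) := by rw [← e2]; ring
    rw [e3, show 2*K+1+1 = 2*K+2 by ring] 
    rw [show 2*K+1+1 = 2*K+2 by ring] at he
    linarith

end


/-- Corollary 1(b): let `f(z) = ∑_{n=0}^∞ a_{pn} z^{pn}` be a bounded analytic
self-map of the unit disk (here `a n` denotes the coefficient `a_{pn}`).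
Then for `0 ≤ r ≤ (1/2)^{1/p}`:
`|a₀|² + ∑_{n=1}^∞ |a_{pn}| r^{pn}
  + (1/(1+|a₀|) + r^p/(1-r^p)) ∑_{n=1}^∞ |a_{pn}|² r^{2pn} ≤ 1`. -/
theorem stmt10 (p : ℕ) (hp : 0 < p) (f : ℂ → ℂ) (a : ℕ → ℂ)
    (hf : DifferentiableOn ℂ f (Metric.ball 0 1))
    (hb : ∀ z ∈ Metric.ball (0 : ℂ) 1, ‖f z‖ ≤ 1)
    (hs : ∀ z ∈ Metric.ball (0 : ℂ) 1, HasSum (fun n => a n * z ^ (p * n)) (f z))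
    (r : ℝ) (hr0 : 0 ≤ r) (hr : r ≤ (1 / 2 : ℝ) ^ ((1 : ℝ) / p)) :
    ‖a 0‖ ^ 2 + (∑' n : ℕ, ‖a (n + 1)‖ * r ^ (p * (n + 1)))
      + (1 / (1 + ‖a 0‖) + r ^ p / (1 - r ^ p))
        * ∑' n : ℕ, ‖a (n + 1)‖ ^ 2 * r ^ (2 * p * (n + 1))
      ≤ 1 := by
  obtain ⟨F, hs', hb'⟩ : ∃ F : ℂ → ℂ, (∀ w : ℂ, ‖w‖ < 1 → HasSum (fun n => a n * w ^ n) (F w)) ∧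
      ∀ w : ℂ, ‖w‖ < 1 → ‖F w‖ ≤ 1 := by
    have hroot : ∀ w : ℂ, ∃ z : ℂ, z ^ p = w := fun w => IsAlgClosed.exists_pow_nat_eq w hp
    choose g hg using hroot
    have hgb : ∀ w : ℂ, ‖w‖ < 1 → g w ∈ Metric.ball (0:ℂ) 1 := by
      intro w hw
      rw [mem_ball_zero_iff]
      rw [← hg w, norm_pow] at hw
      exact (pow_lt_one_iff_of_nonneg (norm_nonneg _) hp.ne').mp hw
    refine ⟨fun w => f (g w), fun w hw => ?_, fun w hw => hb _ (hgb w hw)⟩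
    have := hs _ (hgb w hw)
    simpa only [pow_mul, hg] using this
  have hx0 : 0 ≤ r ^ p := pow_nonneg hr0 p
  have hx : r ^ p ≤ 1/2 := by
    calc r ^ p ≤ ((1 / 2 : ℝ) ^ ((1 : ℝ) / p)) ^ p := pow_le_pow_left₀ hr0 hr p
      _ = 1/2 := by
        rw [one_div (p:ℝ)]
        exact Real.rpow_inv_natCast_pow (by norm_num) hp.ne'
  have e2 : ∀ n, r ^ (2 * p * (n+1)) = (r ^ p) ^ (2 * (n+1)) := by
    intro n; rw [← pow_mul]; congr 1; ring
  simp only [e2, pow_mul r p]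
  set x := r ^ p
  have ho := carlson_odd_s10 a F hs' hb'
  have he := carlson_even_s10 a F hs' hb'
  have hP := bohr_partial (fun n => ‖a n‖) _ x hx0 hx ho he
  have h1x : 0 < 1 - x := by linarith
  have hq : ∀ n, ‖a n‖ ≤ 1 := by
    intro n
    have h := ho n
    have h2 : ‖a n‖ ^ 2 ≤ ∑ k ∈ Finset.range (n+1), ‖a k‖ ^ 2 :=
      Finset.single_le_sum (f := fun k => ‖a k‖ ^ 2) (fun _ _ => by positivity) (by simp)
    have h3 := norm_nonneg (a (2*n+1))
    exact (sq_le_one_iff₀ (norm_nonneg _)).mp (by linarith)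
  have s0 : Summable (fun n : ℕ => x ^ (n+1)) :=
    (summable_nat_add_iff 1).mpr (summable_geometric_of_lt_one hx0 (by linarith))
  have s1 : Summable (fun n : ℕ => ‖a (n+1)‖ * x ^ (n+1)) := by
    refine Summable.of_nonneg_of_le (fun n => by positivity) (fun n => ?_) s0
    exact mul_le_of_le_one_left (by positivity) (hq _)
  have s2 : Summable (fun n : ℕ => ‖a (n+1)‖ ^ 2 * x ^ (2 * (n+1))) := by
    refine Summable.of_nonneg_of_le (fun n => by positivity) (fun n => ?_) s0
    refine (mul_le_of_le_one_left (by positivity) (pow_le_one₀ (norm_nonneg _) (hq _))).trans ?_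
    exact pow_le_pow_of_le_one hx0 (by linarith) (by omega)
  have t1 := s1.hasSum.tendsto_sum_nat.comp (Filter.tendsto_id.const_mul_atTop' (show 0 < 2 by norm_num))
  have t2 := s2.hasSum.tendsto_sum_nat.const_mul (1 / (1 + ‖a 0‖) + x / (1 - x))
  have hA : ‖a 0‖ ^ 2 ≤ 1 := pow_le_one₀ (norm_nonneg _) (hq 0)
  have hlim := le_of_tendsto (t1.add t2) (b := 1 - ‖a 0‖ ^ 2) (Filter.Eventually.of_forall (fun K => by
    have h := hP K
    have h3 : 0 ≤ 1 - ∑ k ∈ Finset.range (K+1), ‖a k‖ ^ 2 := by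
      have := ho K
      have := norm_nonneg (a (2*K+1))
      linarith
    have h4 : 0 ≤ (1 - ∑ k ∈ Finset.range (K+1), ‖a k‖ ^ 2) * (x^(2*K+1)/(1-x)) := by positivity
    have h5 : (1 - ‖a 0‖ ^ 2) * (x / (1 - x)) ≤ 1 - ‖a 0‖ ^ 2 := by
      apply mul_le_of_le_one_right (by linarith)
      rw [div_le_one h1x]; linarith
    simp only [Function.comp_apply, id]
    linarith))
  linarith
end

section
/- Let p be a positive integer and suppose f(z) = ∑_{n=1}^∞ a_{pn} z^{pn} on 𝔻 (so the constant term vanishes). Then for every r with 0 ≤ r^p ≤ 2/(1 + |a_p| + √((1-|a_p|)(5+3|a_p|))): ∑_{n=1}^∞ |a_{pn}| r^{pn} + (1/(1+|a_p|) + r^p/(1-r^p)) · ∑_{n=2}^∞ |a_{pn}|² r^{p(2n-1)} ≤ 1. -/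
open Complex in
lemma int_exp_aux (m : ℤ) :
    ∫ θ in (0:ℝ)..(2 * Real.pi), cexp ((m * θ : ℂ) * I) = if m = 0 then (2 * Real.pi : ℂ) else 0 := by
  split_ifs with h
  · subst h; simp
  · have h1 : ((m : ℂ) * I) ≠ 0 := mul_ne_zero (by exact_mod_cast h) I_ne_zero
    have := integral_exp_mul_complex (a := 0) (b := 2 * Real.pi) h1
    have h2 : ∀ θ : ℝ, (m * θ : ℂ) * I = (m * I) * θ := fun θ => by ring
    simp_rw [h2]
    rw [this]
    have : (m : ℂ) * I * ((2 * Real.pi : ℝ) : ℂ) = m * (2 * Real.pi * I) := by push_cast; ring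
    rw [this, Complex.exp_int_mul_two_pi_mul_I]; simp

open Complex in
lemma series_cont (c : ℕ → ℂ) (hc : Summable fun k => ‖c k‖) :
    Continuous (fun θ : ℝ => ∑' k : ℕ, c k * cexp ((k * θ : ℂ) * I)) := by
  apply continuous_tsum (u := fun k => ‖c k‖) _ hc
  · intro n x
    have : ((n : ℂ) * x) * I = ((n * x : ℝ) : ℂ) * I := by push_cast; rfl
    rw [norm_mul, this, Complex.norm_exp_ofReal_mul_I]; simp
  · intro i; fun_prop

open Complex in
lemma coef_aux (c : ℕ → ℂ) (hc : Summable fun k => ‖c k‖) (j k : ℕ) :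
    ∫ θ in (0:ℝ)..(2 * Real.pi), (∑' k : ℕ, c k * cexp ((k * θ : ℂ) * I)) *
        (cexp ((j * θ : ℂ) * I) * (starRingEnd ℂ) (cexp ((k * θ : ℂ) * I)))
      = 2 * Real.pi * (if j ≤ k then c (k - j) else 0) := by
  have key : HasSum (fun n : ℕ => ∫ θ in (0:ℝ)..(2 * Real.pi), c n * cexp ((((n + j - k : ℤ) : ℂ) * θ : ℂ) * I))
      (∫ θ in (0:ℝ)..(2 * Real.pi), (∑' k : ℕ, c k * cexp ((k * θ : ℂ) * I)) *
        (cexp ((j * θ : ℂ) * I) * (starRingEnd ℂ) (cexp ((k * θ : ℂ) * I)))) := by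
    apply intervalIntegral.hasSum_integral_of_dominated_convergence (fun n _ => ‖c n‖)
    · intro n; exact Continuous.aestronglyMeasurable (by fun_prop)
    · intro n; filter_upwards with θ _
      have : (((n + j - k : ℤ) : ℂ) * θ : ℂ) * I = (((n + j - k : ℤ) * θ : ℝ) : ℂ) * I := by push_cast; rfl
      rw [norm_mul, this, Complex.norm_exp_ofReal_mul_I]; simp
    · filter_upwards with θ _; exact hc
    · exact continuous_const.intervalIntegrable _ _
    · filter_upwards with θ _
      have hsum : Summable (fun n : ℕ => c n * cexp ((n * θ : ℂ) * I)) := by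
        apply Summable.of_norm_bounded hc
        intro n
        have : ((n : ℂ) * θ) * I = ((n * θ : ℝ) : ℂ) * I := by push_cast; rfl
        rw [norm_mul, this, Complex.norm_exp_ofReal_mul_I]; simp
      have hfin := hsum.hasSum.mul_right
        (cexp ((j * θ : ℂ) * I) * (starRingEnd ℂ) (cexp ((k * θ : ℂ) * I)))
      have hfe : (fun n : ℕ => c n * cexp ((((n + j - k : ℤ) : ℂ) * θ : ℂ) * I)) = fun n : ℕ =>
          c n * cexp ((n * θ : ℂ) * I) *
          (cexp ((j * θ : ℂ) * I) * (starRingEnd ℂ) (cexp ((k * θ : ℂ) * I))) := by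
        funext n
        rw [← Complex.exp_conj, mul_assoc (c n), ← Complex.exp_add, ← Complex.exp_add]
        congr 2
        simp
        ring
      rw [hfe]
      exact hfin
  rw [← key.tsum_eq]
  simp_rw [intervalIntegral.integral_const_mul, int_exp_aux]
  split_ifs with h
  · rw [tsum_eq_single (k - j)]
    · rw [if_pos (by omega)]; ring
    · intro n hn; rw [if_neg (by omega)]; simp
  · rw [mul_zero]
    convert tsum_zero with n
    rw [if_neg (by omega)]; simp

open Complex in
lemma form_eq (c : ℕ → ℂ) (hc : Summable fun k => ‖c k‖) (N : ℕ) (u v : ℕ → ℂ) :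
    ∫ θ in (0:ℝ)..(2 * Real.pi), (∑' k : ℕ, c k * cexp ((k * θ : ℂ) * I)) *
        ((∑ j ∈ Finset.range N, u j * cexp ((j * θ : ℂ) * I)) *
        (starRingEnd ℂ) (∑ j ∈ Finset.range N, v j * cexp ((j * θ : ℂ) * I)))
      = 2 * Real.pi * ∑ k ∈ Finset.range N, (starRingEnd ℂ) (v k) *
        ∑ j ∈ Finset.range N, u j * (if j ≤ k then c (k - j) else 0) := by
  have hcont := series_cont c hc
  have h1 : ∀ θ : ℝ, (∑' k : ℕ, c k * cexp ((k * θ : ℂ) * I)) *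
        ((∑ j ∈ Finset.range N, u j * cexp ((j * θ : ℂ) * I)) *
        (starRingEnd ℂ) (∑ j ∈ Finset.range N, v j * cexp ((j * θ : ℂ) * I)))
      = ∑ k ∈ Finset.range N, ∑ j ∈ Finset.range N, (starRingEnd ℂ (v k) * u j) *
        ((∑' k : ℕ, c k * cexp ((k * θ : ℂ) * I)) *
        (cexp ((j * θ : ℂ) * I) * (starRingEnd ℂ) (cexp ((k * θ : ℂ) * I)))) := by
    intro θ
    rw [map_sum, Finset.sum_mul_sum, Finset.sum_comm, Finset.mul_sum]
    refine Finset.sum_congr rfl fun k _ => ?_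
    rw [Finset.mul_sum]
    refine Finset.sum_congr rfl fun j _ => ?_
    rw [map_mul]; ring
  simp_rw [h1]
  have hci : ∀ j k : ℕ, Continuous (fun θ : ℝ => (starRingEnd ℂ (v k) * u j) *
        ((∑' k : ℕ, c k * cexp ((k * θ : ℂ) * I)) *
        (cexp ((j * θ : ℂ) * I) * (starRingEnd ℂ) (cexp ((k * θ : ℂ) * I))))) := by
    intro j k
    refine continuous_const.mul (hcont.mul (Continuous.mul (by fun_prop) ?_))
    exact Complex.continuous_conj.comp (by fun_prop)
  rw [intervalIntegral.integral_finsetSum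
    (fun k _ => (continuous_finsetSum _ (fun j _ => hci j k)).intervalIntegrable _ _)]
  rw [Finset.mul_sum]
  refine Finset.sum_congr rfl fun k _ => ?_
  rw [intervalIntegral.integral_finsetSum (fun j _ => (hci j k).intervalIntegrable _ _)]
  rw [Finset.mul_sum, Finset.mul_sum]
  refine Finset.sum_congr rfl fun j _ => ?_
  rw [intervalIntegral.integral_const_mul, coef_aux c hc]
  ring

open Complex in
lemma parseval (N : ℕ) (u : ℕ → ℂ) :
    ∫ θ in (0:ℝ)..(2 * Real.pi), ‖∑ j ∈ Finset.range N, u j * cexp ((j * θ : ℂ) * I)‖ ^ 2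
      = 2 * Real.pi * ∑ j ∈ Finset.range N, ‖u j‖ ^ 2 := by
  have h0 : ∀ k, k ∉ ({0} : Finset ℕ) → ‖(if k = 0 then (1:ℂ) else 0)‖ = 0 := by
    intro k hk; simp at hk; simp [hk]
  have h := form_eq (fun k => if k = 0 then 1 else 0) (summable_of_ne_finset_zero h0) N u u
  have h1 : ∀ θ : ℝ, (∑' k : ℕ, (if k = 0 then (1:ℂ) else 0) * cexp ((k * θ : ℂ) * I)) = 1 := by
    intro θ; rw [tsum_eq_single 0]; · simp
    intro b hb; simp [hb]
  simp only [h1, one_mul, Complex.mul_conj'] at h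
  have h2 : ∀ k ∈ Finset.range N, (starRingEnd ℂ) (u k) *
        ∑ j ∈ Finset.range N, u j * (if j ≤ k then (if k - j = 0 then (1:ℂ) else 0) else 0) = ((‖u k‖ ^ 2 : ℝ) : ℂ) := by
    intro k hk
    rw [Finset.sum_eq_single k]
    · simp [Complex.conj_mul']
    · intro j _ hj
      split_ifs
      · omega
      · simp
      · simp
    · intro h; exact absurd hk h
  rw [Finset.sum_congr rfl h2] at h
  have h3 : ∫ θ in (0:ℝ)..(2 * Real.pi), ((‖∑ j ∈ Finset.range N, u j * cexp ((j * θ : ℂ) * I)‖ ^ 2 : ℝ) : ℂ) = 2 * Real.pi * ∑ j ∈ Finset.range N, ((‖u j‖ ^ 2 : ℝ) : ℂ) := by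
    rw [← h]; simp
  rw [intervalIntegral.integral_ofReal] at h3
  exact_mod_cast h3

open Complex in
lemma contraction (c : ℕ → ℂ) (hc : Summable fun k => ‖c k‖)
    (hb : ∀ θ : ℝ, ‖∑' k : ℕ, c k * cexp ((k * θ : ℂ) * I)‖ ≤ 1) (N : ℕ) (u v : ℕ → ℂ) :
    (∑ k ∈ Finset.range N, (starRingEnd ℂ) (v k) *
        ∑ j ∈ Finset.range N, u j * (if j ≤ k then c (k - j) else 0)).re ≤
      (∑ j ∈ Finset.range N, ‖u j‖ ^ 2 + ∑ j ∈ Finset.range N, ‖v j‖ ^ 2) / 2 := by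
  have hu := parseval N u
  have hv := parseval N v
  have h := form_eq c hc N u v
  have cu : ∀ u : ℕ → ℂ, Continuous (fun θ : ℝ => ∑ j ∈ Finset.range N, u j * cexp ((j * θ : ℂ) * I)) := by
    intro u; fun_prop
  have cu2 : ∀ u : ℕ → ℂ, Continuous (fun θ : ℝ => ‖∑ j ∈ Finset.range N, u j * cexp ((j * θ : ℂ) * I)‖ ^ 2) := by
    intro u; exact (cu u).norm.pow 2
  have hle : ‖∫ θ in (0:ℝ)..(2 * Real.pi), (∑' k : ℕ, c k * cexp ((k * θ : ℂ) * I)) *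
        ((∑ j ∈ Finset.range N, u j * cexp ((j * θ : ℂ) * I)) *
        (starRingEnd ℂ) (∑ j ∈ Finset.range N, v j * cexp ((j * θ : ℂ) * I)))‖ ≤
      ∫ θ in (0:ℝ)..(2 * Real.pi), ((‖∑ j ∈ Finset.range N, u j * cexp ((j * θ : ℂ) * I)‖ ^ 2 +
        ‖∑ j ∈ Finset.range N, v j * cexp ((j * θ : ℂ) * I)‖ ^ 2) / 2) := by
    apply intervalIntegral.norm_integral_le_of_norm_le (by positivity)
    · filter_upwards with θ _
      rw [norm_mul, norm_mul, RCLike.norm_conj]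
      have := hb θ
      set X := ‖∑ j ∈ Finset.range N, u j * cexp ((j * θ : ℂ) * I)‖
      set Y := ‖∑ j ∈ Finset.range N, v j * cexp ((j * θ : ℂ) * I)‖
      have hXY : 0 ≤ X * Y := by positivity
      nlinarith [sq_nonneg (X - Y)]
    · exact ((((cu u).norm.pow 2).add ((cu v).norm.pow 2)).div_const 2).intervalIntegrable _ _
  rw [intervalIntegral.integral_div, intervalIntegral.integral_add ((cu2 u).intervalIntegrable _ _) ((cu2 v).intervalIntegrable _ _), hu, hv, h] at hle
  have hpi := Real.pi_pos
  rw [norm_mul] at hle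
  have h2 : ‖(2 * Real.pi : ℂ)‖ = 2 * Real.pi := by simp [abs_of_pos hpi]
  rw [h2] at hle
  refine (Complex.re_le_norm _).trans ?_
  have : (0:ℝ) < 2 * Real.pi := by positivity
  refine le_of_mul_le_mul_left (hle.trans (le_of_eq ?_)) this
  ring

lemma exists_phase_s11 (z : ℂ) : ∃ w : ℂ, ‖w‖ = 1 ∧ (starRingEnd ℂ) w * z = ‖z‖ := by
  by_cases h : z = 0
  · exact ⟨1, by simp [h]⟩
  · have hn : (‖z‖ : ℂ) ≠ 0 := by simpa using h
    refine ⟨z / ‖z‖, by simp [h], ?_⟩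
    rw [map_div₀, Complex.conj_ofReal, div_mul_eq_mul_div, Complex.conj_mul']
    field_simp

open Complex in
lemma carlson_odd_s11 (c : ℕ → ℂ) (hc : Summable fun k => ‖c k‖)
    (hb : ∀ θ : ℝ, ‖∑' k : ℕ, c k * cexp ((k * θ : ℂ) * I)‖ ≤ 1) (n : ℕ) (hn : 0 < n) :
    ‖c (2 * n - 1)‖ + ∑ k ∈ Finset.range n, ‖c k‖ ^ 2 ≤ 1 := by
  obtain ⟨w, hw, hwc⟩ := exists_phase_s11 (c (2 * n - 1))
  let u : ℕ → ℂ := fun j => if j < n then (if j = 0 then 1 else 0) else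
    w * (starRingEnd ℂ) (c (2 * n - 1 - j))
  let v : ℕ → ℂ := fun j => if j < n then c j else if j = 2 * n - 1 then w else 0
  have hw2 : (starRingEnd ℂ) w * w = 1 := by rw [Complex.conj_mul', hw]; simp
  have H := contraction c hc hb (n + n) u v
  set S := ∑ k ∈ Finset.range n, ‖c k‖ ^ 2 with hS
  have hS' : S = ∑ i ∈ Finset.range n, ‖c (n - 1 - i)‖ ^ 2 :=
    (Finset.sum_range_reflect (fun k => ‖c k‖ ^ 2) n).symm
  have u0 : u 0 = 1 := by simp [u, hn]
  have v2n : v (2 * n - 1) = w := by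
    have : ¬ (2 * n - 1 < n) := by omega
    simp [v, this]
  have uu : ∀ j, j < n → j ≠ 0 → u j = 0 := by intro j h1 h2; simp [u, h1, h2]
  have ub : ∀ i, i < n → u (n + i) = w * (starRingEnd ℂ) (c (n - 1 - i)) := by
    intro i hi
    simp only [u]; rw [if_neg (by omega)]
    congr 3; omega
  have e1 : ∑ j ∈ Finset.range (n + n), ‖u j‖ ^ 2 = 1 + S := by
    rw [Finset.sum_range_add]
    congr 1
    · rw [Finset.sum_eq_single 0]
      · simp [u0]
      · intro b hb hb0; rw [uu b (Finset.mem_range.1 hb) hb0]; simp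
      · simp; omega
    · rw [hS']
      refine Finset.sum_congr rfl fun i hi => ?_
      rw [ub i (Finset.mem_range.1 hi)]
      simp [hw]
  have e2 : ∑ j ∈ Finset.range (n + n), ‖v j‖ ^ 2 = S + 1 := by
    rw [Finset.sum_range_add]
    congr 1
    · refine Finset.sum_congr rfl fun i hi => ?_
      simp [v, Finset.mem_range.1 hi]
    · rw [Finset.sum_eq_single (n - 1)]
      · have : n + (n - 1) = 2 * n - 1 := by omega
        rw [this, v2n]; simp [hw]
      · intro b _ hb
        have : v (n + b) = 0 := by
          simp only [v]; rw [if_neg (by omega), if_neg (by omega)]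
        simp [this]
      · simp; omega
  have t1 : ∀ k ∈ Finset.range n, (starRingEnd ℂ) (v k) *
        ∑ j ∈ Finset.range (n + n), u j * (if j ≤ k then c (k - j) else 0) = ((‖c k‖ ^ 2 : ℝ) : ℂ) := by
    intro k hk
    rw [Finset.mem_range] at hk
    rw [Finset.sum_eq_single 0]
    · simp [u0, v, hk, Complex.conj_mul']
    · intro j _ hj
      by_cases h : j < n
      · simp [uu j h hj]
      · rw [if_neg (by omega)]; simp
    · simp; omega
  have t2 : ∑ j ∈ Finset.range (n + n), u j * (if j ≤ 2 * n - 1 then c (2 * n - 1 - j) else 0)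
      = c (2 * n - 1) + w * S := by
    rw [Finset.sum_range_add]
    congr 1
    · rw [Finset.sum_eq_single 0]
      · simp [u0]
      · intro b hb hb0; rw [uu b (Finset.mem_range.1 hb) hb0]; simp
      · simp; omega
    · rw [hS']
      push_cast
      rw [Finset.mul_sum]
      refine Finset.sum_congr rfl fun i hi => ?_
      rw [Finset.mem_range] at hi
      have : 2 * n - 1 - (n + i) = n - 1 - i := by omega
      rw [if_pos (by omega), this, ub i hi, mul_assoc, Complex.conj_mul']
  have t4 : ∑ x ∈ Finset.range n, (starRingEnd ℂ) (v (n + x)) *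
        ∑ j ∈ Finset.range (n + n), u j * (if j ≤ n + x then c (n + x - j) else 0)
      = (starRingEnd ℂ) w * (c (2 * n - 1) + w * S) := by
    rw [Finset.sum_eq_single (n - 1)]
    · have : n + (n - 1) = 2 * n - 1 := by omega
      rw [this, t2, v2n]
    · intro b _ hb
      have : v (n + b) = 0 := by
        simp only [v]; rw [if_neg (by omega), if_neg (by omega)]
      rw [this]; simp
    · simp; omega
  have e3 : (∑ k ∈ Finset.range (n + n), (starRingEnd ℂ) (v k) *
        ∑ j ∈ Finset.range (n + n), u j * (if j ≤ k then c (k - j) else 0))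
      = ((S + (‖c (2 * n - 1)‖ + S) : ℝ) : ℂ) := by
    rw [Finset.sum_range_add _ n n, Finset.sum_congr rfl t1, t4, ← Complex.ofReal_sum, ← hS]
    push_cast
    linear_combination hwc + (S : ℂ) * hw2
  rw [e1, e2, e3, Complex.ofReal_re] at H
  linarith

open Complex in
lemma carlson_even_s11 (c : ℕ → ℂ) (hc : Summable fun k => ‖c k‖)
    (hb : ∀ θ : ℝ, ‖∑' k : ℕ, c k * cexp ((k * θ : ℂ) * I)‖ ≤ 1) (n : ℕ) (hn : 0 < n) :
    ‖c (2 * n)‖ + ∑ k ∈ Finset.range n, ‖c k‖ ^ 2 + ‖c n‖ ^ 2 / (1 + ‖c 0‖) ≤ 1 := by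
  obtain ⟨w, hw, hwc⟩ := exists_phase_s11 (c (2 * n))
  obtain ⟨q, hq, hqc⟩ := exists_phase_s11 (c n)
  obtain ⟨s, hs⟩ : ∃ s : ℝ, s = ‖c n‖ / (1 + ‖c 0‖) := ⟨_, rfl⟩
  have hs0 : 0 ≤ s := by rw [hs]; positivity
  let u : ℕ → ℂ := fun j => if j < n then (if j = 0 then 1 else 0) else
    if j = n then s * w * (starRingEnd ℂ) q else w * (starRingEnd ℂ) (c (2 * n - j))
  let v : ℕ → ℂ := fun j => if j < n then c j else if j = n then s * q else if j = 2 * n then w else 0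
  have hw2 : (starRingEnd ℂ) w * w = 1 := by rw [Complex.conj_mul', hw]; simp
  have H := contraction c hc hb ((n + 1) + n) u v
  set S := ∑ k ∈ Finset.range n, ‖c k‖ ^ 2 with hS
  have hS' : S = ∑ i ∈ Finset.range n, ‖c (n - 1 - i)‖ ^ 2 :=
    (Finset.sum_range_reflect (fun k => ‖c k‖ ^ 2) n).symm
  have u0 : u 0 = 1 := by simp [u, hn]
  have un : u n = s * w * (starRingEnd ℂ) q := by simp [u]
  have vn : v n = s * q := by simp [v]
  have v2n : v (2 * n) = w := by
    simp only [v]; simp [hn.ne', hn]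
  have uu : ∀ j, j < n → j ≠ 0 → u j = 0 := by intro j h1 h2; simp [u, h1, h2]
  have ub : ∀ i, i < n → u (n + 1 + i) = w * (starRingEnd ℂ) (c (n - 1 - i)) := by
    intro i hi
    simp only [u]; rw [if_neg (by omega), if_neg (by omega)]
    congr 3; omega
  have e1 : ∑ j ∈ Finset.range ((n + 1) + n), ‖u j‖ ^ 2 = 1 + s ^ 2 + S := by
    rw [Finset.sum_range_add, Finset.sum_range_succ]
    congr 1
    · congr 1
      · rw [Finset.sum_eq_single 0]
        · simp [u0]
        · intro b hb hb0; rw [uu b (Finset.mem_range.1 hb) hb0]; simp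
        · simp; omega
      · rw [un]; simp [hw, hq]
    · rw [hS']
      refine Finset.sum_congr rfl fun i hi => ?_
      rw [ub i (Finset.mem_range.1 hi)]
      simp [hw]
  have e2 : ∑ j ∈ Finset.range ((n + 1) + n), ‖v j‖ ^ 2 = S + s ^ 2 + 1 := by
    rw [Finset.sum_range_add, Finset.sum_range_succ]
    congr 1
    · congr 1
      · refine Finset.sum_congr rfl fun i hi => ?_
        simp [v, Finset.mem_range.1 hi]
      · rw [vn]; simp [hq]
    · rw [Finset.sum_eq_single (n - 1)]
      · have : n + 1 + (n - 1) = 2 * n := by omega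
        rw [this, v2n]; simp [hw]
      · intro b _ hb
        have : v (n + 1 + b) = 0 := by
          simp only [v]; rw [if_neg (by omega), if_neg (by omega), if_neg (by omega)]
        simp [this]
      · simp; omega
  have t1 : ∀ k ∈ Finset.range n, (starRingEnd ℂ) (v k) *
        ∑ j ∈ Finset.range ((n + 1) + n), u j * (if j ≤ k then c (k - j) else 0) = ((‖c k‖ ^ 2 : ℝ) : ℂ) := by
    intro k hk
    rw [Finset.mem_range] at hk
    rw [Finset.sum_eq_single 0]
    · simp [u0, v, hk, Complex.conj_mul']
    · intro j _ hj
      by_cases h : j < n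
      · simp [uu j h hj]
      · rw [if_neg (by omega)]; simp
    · simp
  have t3 : ∑ j ∈ Finset.range ((n + 1) + n), u j * (if j ≤ n then c (n - j) else 0)
      = c n + s * w * (starRingEnd ℂ) q * c 0 := by
    rw [Finset.sum_range_add, Finset.sum_range_succ, Finset.sum_eq_single 0, Finset.sum_eq_zero]
    · simp [u0, un]
    · intro i _; rw [if_neg (by omega)]; simp
    · intro b hb hb0; rw [uu b (Finset.mem_range.1 hb) hb0]; simp
    · simp; omega
  have t2 : ∑ j ∈ Finset.range ((n + 1) + n), u j * (if j ≤ 2 * n then c (2 * n - j) else 0)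
      = c (2 * n) + s * w * (starRingEnd ℂ) q * c n + w * S := by
    rw [Finset.sum_range_add, Finset.sum_range_succ]
    congr 1
    · congr 1
      · rw [Finset.sum_eq_single 0]
        · simp [u0]
        · intro b hb hb0; rw [uu b (Finset.mem_range.1 hb) hb0]; simp
        · simp; omega
      · rw [un, if_pos (by omega)]; congr 2; omega
    · rw [hS']
      push_cast
      rw [Finset.mul_sum]
      refine Finset.sum_congr rfl fun i hi => ?_
      rw [Finset.mem_range] at hi
      have : 2 * n - (n + 1 + i) = n - 1 - i := by omega
      rw [if_pos (by omega), this, ub i hi, mul_assoc, Complex.conj_mul']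
  obtain ⟨E, hE⟩ : ∃ E : ℂ, E = s * (starRingEnd ℂ) q * (s * w * (starRingEnd ℂ) q * c 0) := ⟨_, rfl⟩
  have hEn : ‖E‖ = s ^ 2 * ‖c 0‖ := by
    rw [hE]; simp [hq, hw, abs_of_nonneg hs0]; ring
  have t4 : ∑ x ∈ Finset.range n, (starRingEnd ℂ) (v (n + 1 + x)) *
        ∑ j ∈ Finset.range ((n + 1) + n), u j * (if j ≤ n + 1 + x then c (n + 1 + x - j) else 0)
      = (starRingEnd ℂ) w * (c (2 * n) + s * w * (starRingEnd ℂ) q * c n + w * S) := by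
    rw [Finset.sum_eq_single (n - 1)]
    · have : n + 1 + (n - 1) = 2 * n := by omega
      rw [this, t2, v2n]
    · intro b _ hb
      have : v (n + 1 + b) = 0 := by
        simp only [v]; rw [if_neg (by omega), if_neg (by omega), if_neg (by omega)]
      rw [this]; simp
    · simp; omega
  have e3 : (∑ k ∈ Finset.range ((n + 1) + n), (starRingEnd ℂ) (v k) *
        ∑ j ∈ Finset.range ((n + 1) + n), u j * (if j ≤ k then c (k - j) else 0))
      = ((S + s * ‖c n‖ + (‖c (2 * n)‖ + s * ‖c n‖ + S) : ℝ) : ℂ) + E := by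
    rw [Finset.sum_range_add _ (n + 1) n, Finset.sum_range_succ _ n, Finset.sum_congr rfl t1, t3, vn, t4,
      ← Complex.ofReal_sum, ← hS, hE]
    push_cast
    simp only [map_mul, Complex.conj_ofReal]
    linear_combination (s:ℂ) * hqc + hwc + (s * ((starRingEnd ℂ) q * c n) + (S : ℂ)) * hw2 + s * hqc
  rw [e1, e2, e3, Complex.add_re, Complex.ofReal_re] at H
  have hEre : -‖E‖ ≤ E.re := (abs_le.1 (Complex.abs_re_le_norm E)).1
  rw [hEn] at hEre
  have hA : 0 < 1 + ‖c 0‖ := by positivity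
  have h1 : s * (1 + ‖c 0‖) = ‖c n‖ := by rw [hs]; field_simp
  have h2 : ‖c n‖ ^ 2 / (1 + ‖c 0‖) = s * ‖c n‖ := by rw [hs]; ring
  have h3 : s * ‖c n‖ = s ^ 2 * (1 + ‖c 0‖) := by rw [← h1]; ring
  rw [h2]
  linarith

open Complex in
lemma dilate (p : ℕ) (hp : 0 < p) (f : ℂ → ℂ) (b : ℕ → ℂ)
    (hb : ∀ z ∈ Metric.ball (0 : ℂ) 1, ‖f z‖ ≤ 1)
    (hs : ∀ z ∈ Metric.ball (0 : ℂ) 1, HasSum (fun n => b n * z ^ (p * (n + 1))) (f z))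
    (ρ : ℝ) (h0 : 0 < ρ) (h1 : ρ < 1) :
    (Summable fun k => ‖b k * (ρ : ℂ) ^ (k + 1)‖) ∧
    ∀ θ : ℝ, ‖∑' k : ℕ, (b k * (ρ : ℂ) ^ (k + 1)) * cexp ((k * θ : ℂ) * I)‖ ≤ 1 := by
  have key : ∀ θ : ℝ, ∃ F : ℂ, ‖F‖ ≤ 1 ∧
      HasSum (fun n => b n * (ρ * cexp (θ * I)) ^ (n + 1)) F := by
    intro θ
    obtain ⟨z, hz⟩ := IsAlgClosed.exists_pow_nat_eq ((ρ : ℂ) * cexp (θ * I)) hp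
    have hzn : ‖z‖ ^ p = ρ := by
      rw [← norm_pow, hz, norm_mul, Complex.norm_exp_ofReal_mul_I]; simp [abs_of_pos h0]
    have hz1 : ‖z‖ < 1 := by
      by_contra h
      push Not at h
      have := one_le_pow₀ (n := p) h
      linarith
    have hzb : z ∈ Metric.ball (0 : ℂ) 1 := by simpa using hz1
    refine ⟨f z, hb z hzb, ?_⟩
    have := hs z hzb
    simpa only [pow_mul, hz] using this
  constructor
  · obtain ⟨F, -, hF⟩ := key 0
    simpa using hF.summable.norm
  · intro θ
    obtain ⟨F, hF1, hF⟩ := key θ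
    have h2 : ∀ k : ℕ, (b k * (ρ : ℂ) ^ (k + 1)) * cexp ((k * θ : ℂ) * I) =
        (b k * (ρ * cexp (θ * I)) ^ (k + 1)) * cexp (-(θ * I)) := by
      intro k
      have h3 : cexp ((k * θ : ℂ) * I) = cexp (θ * I) ^ (k + 1) * cexp (-(θ * I)) := by
        rw [← Complex.exp_nat_mul, ← Complex.exp_add]
        congr 1
        push_cast; ring
      rw [h3, mul_pow]; ring
    simp_rw [h2]
    rw [tsum_mul_right, hF.tsum_eq, norm_mul]
    have : ‖cexp (-(θ * I))‖ = 1 := by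
      have := Complex.norm_exp_ofReal_mul_I (-θ)
      simpa using this
    rw [this]; simpa using hF1

lemma carlson_lim (p : ℕ) (hp : 0 < p) (f : ℂ → ℂ) (b : ℕ → ℂ)
    (hb : ∀ z ∈ Metric.ball (0 : ℂ) 1, ‖f z‖ ≤ 1)
    (hs : ∀ z ∈ Metric.ball (0 : ℂ) 1, HasSum (fun n => b n * z ^ (p * (n + 1))) (f z))
    (n : ℕ) (hn : 0 < n) :
    ‖b (2 * n - 1)‖ + ∑ k ∈ Finset.range n, ‖b k‖ ^ 2 ≤ 1 ∧
    ‖b (2 * n)‖ + ∑ k ∈ Finset.range n, ‖b k‖ ^ 2 + ‖b n‖ ^ 2 / (1 + ‖b 0‖) ≤ 1 := by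
  have hev : ∀ᶠ ρ : ℝ in nhdsWithin 1 (Set.Iio 1), 0 < ρ ∧ ρ < 1 :=
    Ioo_mem_nhdsLT (by norm_num)
  constructor
  · have hc : Continuous (fun ρ : ℝ => ‖b (2 * n - 1) * (ρ : ℂ) ^ (2 * n - 1 + 1)‖ +
        ∑ k ∈ Finset.range n, ‖b k * (ρ : ℂ) ^ (k + 1)‖ ^ 2) := by fun_prop
    have := le_of_tendsto ((hc.tendsto 1).mono_left nhdsWithin_le_nhds)
      (hev.mono fun ρ hρ => by
        obtain ⟨h1, h2⟩ := dilate p hp f b hb hs ρ hρ.1 hρ.2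
        exact carlson_odd_s11 _ h1 h2 n hn)
    simpa using this
  · have hc : Continuous (fun ρ : ℝ => ‖b (2 * n) * (ρ : ℂ) ^ (2 * n + 1)‖ +
        ∑ k ∈ Finset.range n, ‖b k * (ρ : ℂ) ^ (k + 1)‖ ^ 2 +
        ‖b n * (ρ : ℂ) ^ (n + 1)‖ ^ 2 / (1 + ‖b 0 * (ρ : ℂ) ^ (0 + 1)‖)) := by
      refine Continuous.add (by fun_prop) (Continuous.div (by fun_prop) (by fun_prop) ?_)
      intro ρ; positivity
    have := le_of_tendsto ((hc.tendsto 1).mono_left nhdsWithin_le_nhds)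
      (hev.mono fun ρ hρ => by
        obtain ⟨h1, h2⟩ := dilate p hp f b hb hs ρ hρ.1 hρ.2
        exact carlson_even_s11 _ h1 h2 n hn)
    simpa using this

lemma partial_bound (β : ℕ → ℝ)
    (h : ∀ n, 0 < n → β (2 * n - 1) + ∑ k ∈ Finset.range n, β k ^ 2 ≤ 1 ∧
      β (2 * n) + ∑ k ∈ Finset.range n, β k ^ 2 + β n ^ 2 / (1 + β 0) ≤ 1)
    (x : ℝ) (hx0 : 0 ≤ x) (hx1 : x < 1) (M : ℕ) :
    ∑ k ∈ Finset.range (2 * M), β (k + 1) * x ^ (k + 1) +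
      (1 / (1 + β 0) + x / (1 - x)) * ∑ n ∈ Finset.range M, β (n + 1) ^ 2 * x ^ (2 * (n + 1))
    ≤ (1 - β 0 ^ 2) * (x / (1 - x)) -
      x ^ (2 * M + 1) / (1 - x) * (1 - ∑ k ∈ Finset.range (M + 1), β k ^ 2) := by
  have hx : 1 - x ≠ 0 := by linarith
  induction M with
  | zero => simp; ring_nf; rfl
  | succ M ih =>
    obtain ⟨h1, h2⟩ := h (M + 1) (by omega)
    rw [show 2 * (M + 1) - 1 = 2 * M + 1 by omega] at h1
    rw [show 2 * (M + 1) = 2 * M + 1 + 1 by ring, Finset.sum_range_succ _ (2 * M + 1),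
      Finset.sum_range_succ _ (2 * M), Finset.sum_range_succ _ M, Finset.sum_range_succ _ (M + 1)]
    rw [show 2 * (M + 1) = 2 * M + 1 + 1 by ring] at h2 ⊢
    set P := ∑ k ∈ Finset.range (M + 1), β k ^ 2
    have k1 : β (2 * M + 1) * x ^ (2 * M + 1) ≤ (1 - P) * x ^ (2 * M + 1) :=
      mul_le_mul_of_nonneg_right (by linarith) (by positivity)
    have k2 : β (2 * M + 1 + 1) * x ^ (2 * M + 1 + 1) ≤
        (1 - P - β (M + 1) ^ 2 / (1 + β 0)) * x ^ (2 * M + 1 + 1) :=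
      mul_le_mul_of_nonneg_right (by linarith) (by positivity)
    have e : (1 - P) * x ^ (2 * M + 1) + (1 - P - β (M + 1) ^ 2 / (1 + β 0)) * x ^ (2 * M + 1 + 1)
        + (1 / (1 + β 0) + x / (1 - x)) * (β (M + 1) ^ 2 * x ^ (2 * M + 1 + 1))
        - x ^ (2 * M + 1) / (1 - x) * (1 - P)
        = - (x ^ (2 * M + 1 + 1 + 1) / (1 - x) * (1 - (P + β (M + 1) ^ 2))) := by
      generalize hg : β (M + 1) ^ 2 = B
      have : B / (1 + β 0) = B * (1 / (1 + β 0)) := by ring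
      rw [this]
      generalize 1 / (1 + β 0) = g
      field_simp
      ring
    linarith

lemma final_ineq (A x : ℝ) (hA0 : 0 ≤ A) (hA1 : A ≤ 1) (hx0 : 0 ≤ x)
    (hx : x ≤ 2 / (1 + A + Real.sqrt ((1 - A) * (5 + 3 * A)))) :
    x ≤ 1 ∧ (x = 1 → A = 1) ∧ (x < 1 → x * A + x * ((1 - A ^ 2) * (x / (1 - x))) ≤ 1) := by
  set s := Real.sqrt ((1 - A) * (5 + 3 * A)) with hs
  have hs0 : 0 ≤ s := Real.sqrt_nonneg _
  have hs2 : s ^ 2 = (1 - A) * (5 + 3 * A) :=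
    Real.sq_sqrt (mul_nonneg (by linarith) (by linarith))
  have hsA : 1 - A ≤ s := by
    apply Real.le_sqrt_of_sq_le; nlinarith
  rw [le_div_iff₀ (by positivity)] at hx
  refine ⟨by nlinarith, ?_, ?_⟩
  · intro h; subst h
    have : s = 1 - A := by linarith
    rw [this] at hs2
    nlinarith
  · intro h1
    have h2 : 0 < 1 - x := by linarith
    have h3 : 0 ≤ 1 - x - A * x + (A + A ^ 2 - 1) * x ^ 2 := by
      have : 4 * (1 - x - A * x + (A + A ^ 2 - 1) * x ^ 2)
        = (2 - x * (1 + A + s)) * (2 - x * (1 + A - s)) := by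
        linear_combination x ^ 2 * hs2
      have h4 : 0 ≤ 2 - x * (1 + A - s) := by nlinarith [mul_nonneg hx0 hs0]
      have := mul_nonneg (sub_nonneg.2 hx) h4
      linarith
    have e : x * A + x * ((1 - A ^ 2) * (x / (1 - x))) = (x * A * (1 - x) + (1 - A ^ 2) * x ^ 2) / (1 - x) := by
      field_simp
    rw [e, div_le_one h2]
    nlinarith


/-- Corollary 2(A): let `f(z) = ∑_{n=1}^∞ a_{pn} z^{pn}` be a bounded analytic
self-map of the unit disk with vanishing constant term (here `a n` denotes the
coefficient `a_{pn}`, so `a 1` is `a_p`). Then for `0 ≤ r` with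
`r^p ≤ 2/(1 + |a_p| + √((1-|a_p|)(5+3|a_p|)))`:
`∑_{n=1}^∞ |a_{pn}| r^{pn}
  + (1/(1+|a_p|) + r^p/(1-r^p)) ∑_{n=2}^∞ |a_{pn}|² r^{p(2n-1)} ≤ 1`. -/
theorem stmt11 (p : ℕ) (hp : 0 < p) (f : ℂ → ℂ) (a : ℕ → ℂ)
    (hf : DifferentiableOn ℂ f (Metric.ball 0 1))
    (hb : ∀ z ∈ Metric.ball (0 : ℂ) 1, ‖f z‖ ≤ 1)
    (hs : ∀ z ∈ Metric.ball (0 : ℂ) 1, HasSum (fun n => a (n + 1) * z ^ (p * (n + 1))) (f z))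
    (r : ℝ) (hr0 : 0 ≤ r)
    (hr : r ^ p ≤ 2 / (1 + ‖a 1‖ + Real.sqrt ((1 - ‖a 1‖) * (5 + 3 * ‖a 1‖)))) :
    (∑' n : ℕ, ‖a (n + 1)‖ * r ^ (p * (n + 1)))
      + (1 / (1 + ‖a 1‖) + r ^ p / (1 - r ^ p))
        * ∑' n : ℕ, ‖a (n + 2)‖ ^ 2 * r ^ (p * (2 * (n + 2) - 1))
      ≤ 1 := by
  have hC := carlson_lim p hp f (fun k => a (k + 1)) hb hs
  obtain ⟨β, hβ⟩ : ∃ β : ℕ → ℝ, β = fun k => ‖a (k + 1)‖ := ⟨_, rfl⟩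
  have hβ0 : ∀ k, 0 ≤ β k := fun k => by rw [hβ]; positivity
  have hC' : ∀ n, 0 < n → β (2 * n - 1) + ∑ k ∈ Finset.range n, β k ^ 2 ≤ 1 ∧
      β (2 * n) + ∑ k ∈ Finset.range n, β k ^ 2 + β n ^ 2 / (1 + β 0) ≤ 1 := by
    rw [hβ]; exact hC
  have hsq : ∀ n, ∑ k ∈ Finset.range (n + 1), β k ^ 2 ≤ 1 := fun n => by
    linarith [(hC' (n + 1) (by omega)).1, hβ0 (2 * (n + 1) - 1)]
  have hβ1 : ∀ n, β n ≤ 1 := fun n => by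
    have h1 := Finset.single_le_sum (f := fun k => β k ^ 2) (fun i _ => sq_nonneg _)
      (Finset.self_mem_range_succ n)
    have h2 : β n ^ 2 ≤ 1 := h1.trans (hsq n)
    nlinarith [hβ0 n]
  have ha1 : ‖a 1‖ = β 0 := by rw [hβ]
  have e1 : ∀ n : ℕ, ‖a (n + 1)‖ * r ^ (p * (n + 1)) = β n * (r ^ p) ^ (n + 1) := by
    intro n; rw [hβ, pow_mul]
  have e2 : ∀ n : ℕ, ‖a (n + 2)‖ ^ 2 * r ^ (p * (2 * (n + 2) - 1)) =
      β (n + 1) ^ 2 * (r ^ p) ^ (2 * (n + 1)) * r ^ p := by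
    intro n
    rw [hβ, pow_mul, mul_assoc, ← pow_succ, show 2 * (n + 2) - 1 = 2 * (n + 1) + 1 by omega]
  simp_rw [e1, e2]
  rw [ha1] at hr ⊢
  have hx0 : 0 ≤ r ^ p := by positivity
  generalize r ^ p = x at *
  obtain ⟨hx1, hxe, hxl⟩ := final_ineq (β 0) x (hβ0 0) (hβ1 0) hx0 hr
  rcases hx1.lt_or_eq with hlt | heq
  · have hg : Summable (fun n : ℕ => x ^ n) := summable_geometric_of_lt_one hx0 hlt
    have s1 : Summable (fun n : ℕ => β (n + 1) * x ^ (n + 1)) := by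
      refine Summable.of_nonneg_of_le (fun n => mul_nonneg (hβ0 _) (by positivity)) (fun n => ?_) hg
      calc β (n + 1) * x ^ (n + 1) ≤ 1 * x ^ n :=
            mul_le_mul (hβ1 _) (pow_le_pow_of_le_one hx0 hx1 (by omega)) (by positivity) (by norm_num)
        _ = x ^ n := one_mul _
    have s2 : Summable (fun n : ℕ => β (n + 1) ^ 2 * x ^ (2 * (n + 1))) := by
      refine Summable.of_nonneg_of_le (fun n => mul_nonneg (sq_nonneg _) (by positivity)) (fun n => ?_) hg
      calc β (n + 1) ^ 2 * x ^ (2 * (n + 1)) ≤ 1 * x ^ n :=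
            mul_le_mul (pow_le_one₀ (hβ0 _) (hβ1 _)) (pow_le_pow_of_le_one hx0 hx1 (by omega))
              (by positivity) (by norm_num)
        _ = x ^ n := one_mul _
    have t1 := s1.hasSum.tendsto_sum_nat.comp
      (Filter.tendsto_id.const_mul_atTop' (show 0 < 2 by norm_num))
    have t2 := (s2.hasSum.tendsto_sum_nat).const_mul (1 / (1 + β 0) + x / (1 - x))
    have hT := le_of_tendsto' (t1.add t2) (b := (1 - β 0 ^ 2) * (x / (1 - x))) (fun M => by
      have hp1 := partial_bound β hC' x hx0 hlt M
      have hp2 : 0 ≤ x ^ (2 * M + 1) / (1 - x) * (1 - ∑ k ∈ Finset.range (M + 1), β k ^ 2) :=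
        mul_nonneg (div_nonneg (by positivity) (by linarith)) (by linarith [hsq M])
      simp only [Function.comp, id]
      linarith)
    have z1 : ∑' n : ℕ, β n * x ^ (n + 1) = x * β 0 + x * ∑' n : ℕ, β (n + 1) * x ^ (n + 1) := by
      rw [← tsum_mul_left, Summable.tsum_eq_zero_add]
      · congr 1
        · ring
        · refine tsum_congr fun n => ?_
          ring
      · rw [← summable_nat_add_iff 1]
        refine (s1.mul_left x).congr fun n => ?_
        ring
    rw [z1, tsum_mul_right]
    have := mul_le_mul_of_nonneg_left hT hx0
    have := hxl hlt
    linarith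
  · have hA := hxe heq
    subst heq
    have hz : ∀ n, β (n + 1) = 0 := by
      intro n
      have h := hsq (n + 1)
      rw [Finset.sum_range_succ, Finset.sum_range_succ', hA] at h
      have : 0 ≤ ∑ k ∈ Finset.range n, β (k + 1) ^ 2 := Finset.sum_nonneg fun i _ => sq_nonneg _
      have : β (n + 1) ^ 2 ≤ 0 := by linarith
      exact pow_eq_zero_iff (two_ne_zero) |>.1 (le_antisymm this (sq_nonneg _))
    rw [tsum_eq_single 0]
    · simp [hz, hA]
    · intro n hn
      obtain ⟨m, rfl⟩ := Nat.exists_eq_succ_of_ne_zero hn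
      simp [hz]
end

section
/- Let p be a positive integer and suppose f(z) = ∑_{n=1}^∞ a_{pn} z^{pn} on 𝔻 (so the constant term vanishes). Then for every r with 0 ≤ r^p ≤ (5-√17)/2: ∑_{n=1}^∞ |a_{pn}| r^{pn} + (1/(1+|a_p|) + r^p/(1-r^p)) · ∑_{n=1}^∞ |a_{pn}|² r^{p(2n-1)} ≤ 1. -/
open Metric Set in
theorem aux_power (c : ℕ → ℂ) (hsum : ∀ w : ℂ, ‖w‖ < 1 → Summable (fun m => c m * w ^ m)) :
    DifferentiableOn ℂ (fun w => ∑' m, c m * w ^ m) (ball 0 1) ∧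
      HasDerivAt (fun w => ∑' m, c m * w ^ m) (c 1) 0 := by
  set P := FormalMultilinearSeries.ofScalars ℂ c with hP
  have hrad : (1 : ENNReal) ≤ P.radius := by
    refine ENNReal.le_of_forall_nnreal_lt fun r hr => ?_
    have hr1 : (r : ℝ) < 1 := by exact_mod_cast hr
    refine P.le_radius_of_summable_norm ?_
    have h := (hsum (r : ℝ) (by simpa using hr1)).norm
    refine h.congr fun n => ?_
    simp [hP, FormalMultilinearSeries.ofScalars_norm]
  have hps := (P.hasFPowerSeriesOnBall (lt_of_lt_of_le one_pos hrad)).mono one_pos hrad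
  have hPs : P.sum = fun w => ∑' m, c m * w ^ m := by
    funext w
    have := FormalMultilinearSeries.ofScalars_sum_eq (E := ℂ) c w
    simpa [FormalMultilinearSeries.ofScalarsSum] using this
  rw [hPs] at hps
  constructor
  · have := hps.differentiableOn
    rwa [← ENNReal.ofReal_one, Metric.eball_ofReal] at this
  · have := hps.hasFPowerSeriesAt.hasDerivAt
    simpa [hP, FormalMultilinearSeries.ofScalars] using this

theorem aux_mobius (b u : ℂ) (hb : ‖b‖ < 1) (hu : ‖u‖ < 1) :
    1 - (starRingEnd ℂ) b * u ≠ 0 ∧ ‖(u - b) / (1 - (starRingEnd ℂ) b * u)‖ ≤ 1 := by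
  have hne : 1 - (starRingEnd ℂ) b * u ≠ 0 := by
    intro h
    have h1 : (starRingEnd ℂ) b * u = 1 := (sub_eq_zero.1 h).symm
    have h2 : ‖b‖ * ‖u‖ = 1 := by
      have := congrArg norm h1
      simpa using this
    nlinarith [norm_nonneg b, norm_nonneg u]
  refine ⟨hne, ?_⟩
  rw [norm_div, div_le_one (norm_pos_iff.2 hne)]
  refine le_of_sq_le_sq ?_ (norm_nonneg _)
  have e : ‖1 - (starRingEnd ℂ) b * u‖ ^ 2 - ‖u - b‖ ^ 2 = (1 - ‖b‖ ^ 2) * (1 - ‖u‖ ^ 2) := by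
    simp only [Complex.sq_norm, Complex.normSq_apply]
    simp
    ring
  have h1 : 0 ≤ (1 - ‖b‖ ^ 2) := by nlinarith [norm_nonneg b]
  have h2 : 0 ≤ (1 - ‖u‖ ^ 2) := by nlinarith [norm_nonneg u]
  nlinarith [mul_nonneg h1 h2]

open Metric Set in
/-- Schwarz-Pick at the origin, strict case. -/
theorem aux_pick_strict (G : ℂ → ℂ) (d : ℂ) (hd : DifferentiableOn ℂ G (ball 0 1))
    (hG : HasDerivAt G d 0) (hb : ∀ w ∈ ball (0 : ℂ) 1, ‖G w‖ < 1) :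
    ‖d‖ ≤ 1 - ‖G 0‖ ^ 2 := by
  have h0 : ‖G 0‖ < 1 := hb 0 (by simp)
  set F : ℂ → ℂ := fun w => (G w - G 0) / (1 - (starRingEnd ℂ) (G 0) * G w) with hF
  have hFd : DifferentiableOn ℂ F (ball 0 1) := by
    refine (hd.sub_const _).div ((hd.const_mul _).const_sub _) fun w hw => ?_
    exact (aux_mobius _ _ h0 (hb w hw)).1
  have hF0 : F 0 = 0 := by simp [hF]
  have hmaps : MapsTo F (ball 0 1) (closedBall (F 0) 1) := by
    intro w hw
    rw [hF0, mem_closedBall_zero_iff]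
    exact (aux_mobius _ _ h0 (hb w hw)).2
  have h1 := Complex.norm_deriv_le_one_of_mapsTo_ball hFd hmaps one_pos
  have hne := (aux_mobius _ _ h0 h0).1
  have hder := ((hG.sub_const (G 0)).div ((hG.const_mul ((starRingEnd ℂ) (G 0))).const_sub 1) hne).deriv
  have hder' : deriv F 0 = d / (1 - (starRingEnd ℂ) (G 0) * G 0) := by
    refine hder.trans ?_
    rw [sub_self]
    field_simp
    ring
  have hnn : ‖1 - (starRingEnd ℂ) (G 0) * G 0‖ = 1 - ‖G 0‖ ^ 2 := by
    rw [Complex.conj_mul', ← Complex.ofReal_pow, ← Complex.ofReal_one, ← Complex.ofReal_sub,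
      Complex.norm_real, Real.norm_of_nonneg]
    nlinarith [norm_nonneg (G 0)]
  rw [hder', norm_div, hnn, div_le_one (by nlinarith [norm_nonneg (G 0)])] at h1
  exact h1

open Metric Set Filter Topology in
theorem aux_pick_s13 (G : ℂ → ℂ) (d : ℂ) (hd : DifferentiableOn ℂ G (ball 0 1))
    (hG : HasDerivAt G d 0) (hb : ∀ w ∈ ball (0 : ℂ) 1, ‖G w‖ ≤ 1) :
    ‖d‖ ≤ 1 - ‖G 0‖ ^ 2 := by
  have key : ∀ t : ℝ, 0 < t → t < 1 → t * ‖d‖ ≤ 1 - (t * ‖G 0‖) ^ 2 := by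
    intro t ht0 ht1
    have := aux_pick_strict (fun w => (t : ℂ) * G w) (t * d) (hd.const_mul _) (hG.const_mul _) ?_
    · simpa [abs_of_pos ht0] using this
    · intro w hw
      have := hb w hw
      simp only [norm_mul, Complex.norm_real, Real.norm_of_nonneg ht0.le]
      nlinarith [norm_nonneg (G w)]
  have hl : Tendsto (fun t : ℝ => t * ‖d‖) (𝓝[<] 1) (𝓝 (1 * ‖d‖)) :=
    ((continuous_id.mul continuous_const).tendsto 1).mono_left nhdsWithin_le_nhds
  have hr : Tendsto (fun t : ℝ => 1 - (t * ‖G 0‖) ^ 2) (𝓝[<] 1) (𝓝 (1 - (1 * ‖G 0‖) ^ 2)) := by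
    have : Continuous (fun t : ℝ => 1 - (t * ‖G 0‖) ^ 2) := by fun_prop
    exact (this.tendsto 1).mono_left nhdsWithin_le_nhds
  have := le_of_tendsto_of_tendsto hl hr (by
    filter_upwards [Ioo_mem_nhdsLT (show (0 : ℝ) < 1 by norm_num)] with t ht
    exact key t ht.1 ht.2)
  simpa using this

theorem aux_root (n : ℕ) (ζ : ℂ) (hζ : IsPrimitiveRoot ζ n) (m : ℕ) :
    ∑ j ∈ Finset.range n, (ζ ^ j) ^ m = if n ∣ m then (n : ℂ) else 0 := by
  split_ifs with h
  · obtain ⟨k, rfl⟩ := h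
    have : ∀ j ∈ Finset.range n, (ζ ^ j) ^ (n * k) = 1 := by
      intro j _
      rw [← pow_mul, show j * (n * k) = n * (j * k) by ring, pow_mul, hζ.pow_eq_one, one_pow]
    rw [Finset.sum_congr rfl this]
    simp
  · have h1 : ζ ^ m ≠ 1 := fun h' => h ((hζ.pow_eq_one_iff_dvd m).1 h')
    have : ∀ j ∈ Finset.range n, (ζ ^ j) ^ m = (ζ ^ m) ^ j := by
      intro j _
      rw [← pow_mul, ← pow_mul, mul_comm]
    rw [Finset.sum_congr rfl this, geom_sum_eq h1, ← pow_mul, mul_comm m n, pow_mul,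
      hζ.pow_eq_one, one_pow, sub_self, zero_div]

open Metric Set in
theorem aux_coeff (c : ℕ → ℂ) (hsum : ∀ w : ℂ, ‖w‖ < 1 → Summable (fun m => c m * w ^ m))
    (hb : ∀ w : ℂ, ‖w‖ < 1 → ‖∑' m, c m * w ^ m‖ ≤ 1) (n : ℕ) (hn : 0 < n) :
    ‖c n‖ ≤ 1 - ‖c 0‖ ^ 2 := by
  have key : ∀ u : ℂ, ‖u‖ < 1 → Summable (fun k => c (n * k) * u ^ k) ∧
      ‖∑' k, c (n * k) * u ^ k‖ ≤ 1 := by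
    intro u hu
    obtain ⟨w, hw⟩ := IsAlgClosed.exists_pow_nat_eq u hn
    have hw1 : ‖w‖ < 1 := by
      by_contra hcon
      have := one_le_pow₀ (n := n) (not_lt.1 hcon)
      rw [← norm_pow, hw] at this
      linarith
    have hζ := Complex.isPrimitiveRoot_exp n hn.ne'
    set ζ := Complex.exp (2 * Real.pi * Complex.I / n)
    have hζn : ‖ζ‖ = 1 := hζ.norm'_eq_one hn.ne'
    have hjw : ∀ j : ℕ, ‖ζ ^ j * w‖ < 1 := by
      intro j; simpa [hζn] using hw1
    have hS : HasSum (fun m => ∑ j ∈ Finset.range n, c m * (ζ ^ j * w) ^ m)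
        (∑ j ∈ Finset.range n, ∑' m, c m * (ζ ^ j * w) ^ m) :=
      hasSum_sum fun j _ => (hsum _ (hjw j)).hasSum
    have hterm : ∀ m, ∑ j ∈ Finset.range n, c m * (ζ ^ j * w) ^ m
        = c m * w ^ m * (if n ∣ m then (n : ℂ) else 0) := by
      intro m
      rw [← aux_root n ζ hζ m, Finset.mul_sum]
      refine Finset.sum_congr rfl fun j _ => ?_
      rw [mul_pow]; ring
    simp only [hterm] at hS
    have hinj : Function.Injective (fun k : ℕ => n * k) := fun a b h =>
      Nat.eq_of_mul_eq_mul_left hn h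
    rw [← hinj.hasSum_iff] at hS
    swap
    · intro m hm
      rw [if_neg, mul_zero]
      rintro ⟨k, rfl⟩
      exact hm ⟨k, rfl⟩
    have hn0 : (n : ℂ) ≠ 0 := by exact_mod_cast hn.ne'
    have hS2 := hS.mul_right ((n : ℂ)⁻¹)
    have hS3 : HasSum (fun k => c (n * k) * u ^ k)
        ((∑ j ∈ Finset.range n, ∑' m, c m * (ζ ^ j * w) ^ m) * (n : ℂ)⁻¹) := by
      refine hS2.congr_fun ?_ |> id
      intro k
      simp [← hw, ← pow_mul, hn0]
    refine ⟨hS3.summable, ?_⟩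
    rw [hS3.tsum_eq, norm_mul, norm_inv, Complex.norm_natCast]
    have hnr : (0 : ℝ) < n := by exact_mod_cast hn
    rw [← div_eq_mul_inv, div_le_one hnr]
    refine (norm_sum_le_of_le _ (fun j _ => hb _ (hjw j))).trans ?_
    simp
  obtain ⟨h1, h2⟩ := aux_power (fun k => c (n * k)) (fun u hu => (key u hu).1)
  have := aux_pick_s13 _ _ h1 h2 (fun w hw => (key w (by simpa using hw)).2)
  have h0 : ∑' k, c (n * k) * (0 : ℂ) ^ k = c 0 := by
    rw [tsum_eq_single 0]
    · simp
    · intro k hk; simp [hk]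
  rw [h0] at this
  simpa using this

theorem aux_real (x c : ℝ) (hx0 : 0 ≤ x) (hx : x ≤ (5 - Real.sqrt 17) / 2) (hc0 : 0 ≤ c)
    (hc1 : c ≤ 1) :
    x * (c + (1 - c ^ 2) * (x / (1 - x))) + (1 / (1 + c) + x / (1 - x)) *
      (x * (c ^ 2 + (1 - c ^ 2) ^ 2 * (x ^ 2 / (1 - x ^ 2)))) ≤ 1 := by
  have hs : Real.sqrt 17 ^ 2 = 17 := Real.sq_sqrt (by norm_num)
  have hs0 := Real.sqrt_nonneg 17
  have hs4 : 4.12 ≤ Real.sqrt 17 := Real.le_sqrt_of_sq_le (by norm_num)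
  have hx44 : x ≤ 0.44 := by linarith
  have hq : 0 ≤ x ^ 2 - 5 * x + 2 := by nlinarith
  have hB : x / (1 - x) ≤ 0.8 := by
    rw [div_le_iff₀ (by linarith)]; linarith
  have hB0 : 0 ≤ x / (1 - x) := div_nonneg hx0 (by linarith)
  have hA : x ^ 2 / (1 - x ^ 2) ≤ 1 / 4 := by
    rw [div_le_iff₀ (by nlinarith)]; nlinarith
  have hA0 : 0 ≤ x ^ 2 / (1 - x ^ 2) := div_nonneg (by positivity) (by nlinarith)
  have hxB : x * (3 / 2 + x / (1 - x)) ≤ 1 := by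
    have h1x : 0 < 1 - x := by linarith
    have : x * (3 / 2 + x / (1 - x)) = x * (3 / 2 * (1 - x) + x) / (1 - x) := by
      field_simp
    rw [this, div_le_one h1x]
    nlinarith
  set A := x ^ 2 / (1 - x ^ 2)
  set B := x / (1 - x)
  have main : c + (1 - c ^ 2) * B + (1 / (1 + c) + B) * (c ^ 2 + (1 - c ^ 2) ^ 2 * A)
      ≤ 3 / 2 + B := by
    have hcp : 0 < 1 + c := by linarith
    have e1 : c + (1 - c ^ 2) * B + (1 / (1 + c) + B) * (c ^ 2 + (1 - c ^ 2) ^ 2 * A)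
        = B + (c * (1 + c) + c ^ 2 + (1 + B * (1 + c)) * ((1 - c ^ 2) ^ 2 * A)) / (1 + c) := by
      field_simp
      ring
    have hBA : (1 + B * (1 + c)) * A ≤ 2.6 * (1 / 4) := by
      apply mul_le_mul _ hA hA0 (by norm_num)
      nlinarith
    have h3 : (1 + B * (1 + c)) * ((1 - c ^ 2) ^ 2 * A) ≤ (1 - c ^ 2) ^ 2 * 0.65 := by
      have := mul_le_mul_of_nonneg_left hBA (sq_nonneg (1 - c ^ 2))
      nlinarith
    have h4 : (1 - c ^ 2) ^ 2 * 0.65 ≤ (1 - c) * (3 / 2 + 2 * c) := by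
      have e : (1 - c) * (3 / 2 + 2 * c) - (1 - c ^ 2) ^ 2 * 0.65
        = (1 - c) * (3 / 2 + 2 * c - 0.65 * ((1 - c ^ 2) * (1 + c))) := by ring
      have h5 : (1 - c ^ 2) * (1 + c) ≤ 1 * 2 := by
        apply mul_le_mul <;> nlinarith
      have := mul_nonneg (show 0 ≤ 1 - c by linarith)
        (show 0 ≤ (3 / 2 + 2 * c - 0.65 * ((1 - c ^ 2) * (1 + c))) by linarith)
      linarith
    have h6 : (c * (1 + c) + c ^ 2 + (1 + B * (1 + c)) * ((1 - c ^ 2) ^ 2 * A)) / (1 + c)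
        ≤ 3 / 2 := by
      rw [div_le_iff₀ hcp]; nlinarith
    rw [e1]; linarith
  have := mul_le_mul_of_nonneg_left main hx0
  nlinarith

theorem aux_sum (b : ℕ → ℝ) (d x : ℝ) (hb0 : ∀ n, 0 ≤ b n) (hx0 : 0 ≤ x) (hx1 : x < 1)
    (hb : ∀ n, b (n + 1) ≤ d) :
    ∑' n, b n * x ^ n ≤ b 0 + d * (x / (1 - x)) := by
  have hg : HasSum (fun n : ℕ => d * x ^ (n + 1)) (d * (x / (1 - x))) := by
    have := ((hasSum_geometric_of_lt_one hx0 hx1).mul_left x).mul_left d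
    simpa [pow_succ', div_eq_mul_inv] using this
  have hle : ∀ n, b (n + 1) * x ^ (n + 1) ≤ d * x ^ (n + 1) := fun n =>
    mul_le_mul_of_nonneg_right (hb n) (by positivity)
  have hs1 : Summable (fun n => b (n + 1) * x ^ (n + 1)) :=
    Summable.of_nonneg_of_le (fun n => mul_nonneg (hb0 _) (by positivity)) hle hg.summable
  have hs : Summable (fun n => b n * x ^ n) := (summable_nat_add_iff 1).1 hs1
  rw [hs.tsum_eq_zero_add, ← hg.tsum_eq]
  have := hs1.tsum_le_tsum hle hg.summable
  simpa using this


/-- Corollary 2(B): let `f(z) = ∑_{n=1}^∞ a_{pn} z^{pn}` be a bounded analytic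
self-map of the unit disk with vanishing constant term (here `a n` denotes the
coefficient `a_{pn}`, so `a 1` is `a_p`). Then for `0 ≤ r` with
`r^p ≤ (5-√17)/2`:
`∑_{n=1}^∞ |a_{pn}| r^{pn}
  + (1/(1+|a_p|) + r^p/(1-r^p)) ∑_{n=1}^∞ |a_{pn}|² r^{p(2n-1)} ≤ 1`. -/
theorem stmt13 (p : ℕ) (hp : 0 < p) (f : ℂ → ℂ) (a : ℕ → ℂ)
    (hf : DifferentiableOn ℂ f (Metric.ball 0 1))
    (hb : ∀ z ∈ Metric.ball (0 : ℂ) 1, ‖f z‖ ≤ 1)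
    (hs : ∀ z ∈ Metric.ball (0 : ℂ) 1, HasSum (fun n => a (n + 1) * z ^ (p * (n + 1))) (f z))
    (r : ℝ) (hr0 : 0 ≤ r) (hr : r ^ p ≤ (5 - Real.sqrt 17) / 2) :
    (∑' n : ℕ, ‖a (n + 1)‖ * r ^ (p * (n + 1)))
      + (1 / (1 + ‖a 1‖) + r ^ p / (1 - r ^ p))
        * ∑' n : ℕ, ‖a (n + 1)‖ ^ 2 * r ^ (p * (2 * (n + 1) - 1))
      ≤ 1 := by
  have hs4 : 4 ≤ Real.sqrt 17 := Real.le_sqrt_of_sq_le (by norm_num)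
  have hx0 : 0 ≤ r ^ p := by positivity
  have hx1 : r ^ p < 1 := by linarith
  have hw : ∀ w : ℂ, ‖w‖ < 1 → Summable (fun m => a (m + 1) * w ^ m) ∧
      ‖w * ∑' m, a (m + 1) * w ^ m‖ ≤ 1 := by
    intro w hw1
    by_cases hw0 : w = 0
    · subst hw0
      refine ⟨summable_of_ne_finset_zero (s := {0}) ?_, by simp⟩
      intro m hm
      have : m ≠ 0 := by simpa using hm
      simp [this]
    obtain ⟨z, hz⟩ := IsAlgClosed.exists_pow_nat_eq w hp
    have hz1 : z ∈ Metric.ball (0 : ℂ) 1 := by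
      rw [mem_ball_zero_iff]
      by_contra hcon
      have := one_le_pow₀ (n := p) (not_lt.1 hcon)
      rw [← norm_pow, hz] at this
      linarith
    have h1 := hs z hz1
    have h2 : HasSum (fun m => a (m + 1) * w ^ m) (w⁻¹ * f z) := by
      have h3 := h1.mul_left w⁻¹
      have e : (fun m => a (m + 1) * w ^ m)
          = fun n => w⁻¹ * (a (n + 1) * z ^ (p * (n + 1))) := by
        funext m
        rw [pow_mul, hz, pow_succ]
        field_simp
      rw [e]; exact h3
    refine ⟨h2.summable, ?_⟩
    rw [h2.tsum_eq, mul_inv_cancel_left₀ hw0]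
    exact hb z hz1
  obtain ⟨hgd, -⟩ := aux_power (fun m => a (m + 1)) (fun w h => (hw w h).1)
  set g : ℂ → ℂ := fun w => ∑' m, a (m + 1) * w ^ m with hg
  have hhd : DifferentiableOn ℂ (fun w => w * g w) (Metric.ball 0 1) := differentiableOn_id.mul hgd
  have hmaps : Set.MapsTo (fun w => w * g w) (Metric.ball 0 1) (Metric.closedBall 0 1) := by
    intro w h
    rw [mem_closedBall_zero_iff]
    exact (hw w (by simpa using h)).2
  have hgb : ∀ w : ℂ, ‖w‖ < 1 → ‖g w‖ ≤ 1 := by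
    intro w hw1
    by_cases hw0 : w = 0
    · subst hw0
      have hd0 : HasDerivAt (fun w => w * g w) (1 * g 0 + 0 * deriv g 0) 0 :=
        (hasDerivAt_id (0 : ℂ)).mul
          (hgd.differentiableAt (Metric.ball_mem_nhds _ one_pos)).hasDerivAt
      have := Complex.norm_deriv_le_one_of_mapsTo_ball hhd (by simpa using hmaps) one_pos
      rw [hd0.deriv] at this
      simpa using this
    · have := Complex.norm_le_norm_of_mapsTo_ball hhd hmaps (by simp) hw1
      simp only [norm_mul] at this
      have hpos := norm_pos_iff.2 hw0
      nlinarith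
  have hco := aux_coeff (fun m => a (m + 1)) (fun w h => (hw w h).1) hgb
  simp only [zero_add] at hco
  have hd0 : ‖a 1‖ ^ 2 ≤ 1 := by
    have := hco 1 one_pos
    have := norm_nonneg (a (1 + 1))
    linarith
  have hc1 : ‖a 1‖ ≤ 1 := by nlinarith [norm_nonneg (a 1)]
  have S1 := aux_sum (fun n => ‖a (n + 1)‖) (1 - ‖a 1‖ ^ 2) (r ^ p) (fun n => norm_nonneg _) hx0 hx1
    (fun n => hco (n + 1) (Nat.succ_pos _))
  have S2 := aux_sum (fun n => ‖a (n + 1)‖ ^ 2) ((1 - ‖a 1‖ ^ 2) ^ 2) ((r ^ p) ^ 2)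
    (fun n => sq_nonneg _) (by positivity) (by nlinarith)
    (fun n => pow_le_pow_left₀ (norm_nonneg _) (hco (n + 1) (Nat.succ_pos _)) 2)
  have E1 : (∑' n : ℕ, ‖a (n + 1)‖ * r ^ (p * (n + 1)))
      = r ^ p * ∑' n : ℕ, ‖a (n + 1)‖ * (r ^ p) ^ n := by
    rw [← tsum_mul_left]
    refine tsum_congr fun n => ?_
    rw [pow_mul, pow_succ]; ring
  have E2 : (∑' n : ℕ, ‖a (n + 1)‖ ^ 2 * r ^ (p * (2 * (n + 1) - 1)))
      = r ^ p * ∑' n : ℕ, ‖a (n + 1)‖ ^ 2 * ((r ^ p) ^ 2) ^ n := by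
    rw [← tsum_mul_left]
    refine tsum_congr fun n => ?_
    rw [show 2 * (n + 1) - 1 = 2 * n + 1 by omega, pow_mul, pow_succ (r ^ p), pow_mul (r ^ p)]; ring
  rw [E1, E2]
  simp only [zero_add] at S1 S2
  refine le_trans ?_ (aux_real (r ^ p) ‖a 1‖ hx0 hr (norm_nonneg _) hc1)
  have hB0 : 0 ≤ r ^ p / (1 - r ^ p) := div_nonneg hx0 (by linarith)
  gcongr
end
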